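/- Every τ-tilting-finite locally hereditary finite-dimensional algebra over an algebraically closed field K is representation-finite. -/

import Mathlib

/- Formalization of statements from
   "Report on the finiteness of silting objects"
   by T. Aihara, T. Honma, K. Miyamoto, Q. Wang. -/

open CategoryTheory CategoryTheory.Limits

universe u v w

noncomputable section
namespace PaperSilting
/-! ### Module-theoretic notions.

We model right `Λ`-modules as left modules over the opposite ring; all the
definitions below are stated for left modules over a ring `R` and are applied
with `R := Λᵐᵒᵖ`. -/

/-- The category of `R`-modules (in `Type 0`). -/
abbrev ModCat (R : Type) [Ring R] := ModuleCat.{0} R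

variable {R : Type} [Ring R]

/-- The module object `M` is finitely generated. -/
def IsFGMod {R : Type} [Ring R] (M : ModCat R) : Prop := Module.Finite R M

/-- Indecomposable module object. -/
def IsIndecMod {R : Type} [Ring R] (M : ModCat R) : Prop :=
  ¬ IsZero M ∧ ∀ A B : ModCat R, Nonempty (M ≅ A ⊞ B) → IsZero A ∨ IsZero B

/-- `N` belongs to `add M`, i.e. `N` is a direct summand of a finite direct sum
of copies of `M`. -/
def MemAddMod {R : Type} [Ring R] (N M : ModCat R) : Prop :=
  ∃ (k : ℕ) (g : N ⟶ ⨁ (fun _ : Fin k => M)) (h : (⨁ (fun _ : Fin k => M)) ⟶ N),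
    g ≫ h = 𝟙 N

/-- A basic module: it has no direct summand of the form `N ⊕ N` with `N ≠ 0`. -/
def IsBasicMod {R : Type} [Ring R] (M : ModCat R) : Prop :=
  ∀ N X : ModCat R, Nonempty (M ≅ (N ⊞ N) ⊞ X) → IsZero N

/-- `M` is τ-rigid, i.e. `Hom(M, τM) = 0`: there is a projective presentation
`P₁ → P₀ → M → 0` by finitely generated projectives such that
`Hom(P₀, M) → Hom(P₁, M)` is surjective (Adachi–Iyama–Reiten). -/
def IsTauRigidMod {R : Type} [Ring R] (M : ModCat R) : Prop :=
  ∃ (P₁ P₀ : ModCat R) (f : P₁ ⟶ P₀) (g : P₀ ⟶ M),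
    Projective P₁ ∧ Projective P₀ ∧ IsFGMod P₁ ∧ IsFGMod P₀ ∧
    Function.Surjective g ∧ Function.Exact f g ∧
    ∀ h : P₁ ⟶ M, ∃ k : P₀ ⟶ M, f ≫ k = h

/-- A τ-rigid pair `(M, P)`: `M` is a τ-rigid module and `P` is a finitely
generated projective with `Hom(P, M) = 0`. -/
def IsTauRigidPairMod {R : Type} [Ring R] (M P : ModCat R) : Prop :=
  IsFGMod M ∧ IsTauRigidMod M ∧ IsFGMod P ∧ Projective P ∧ ∀ f : P ⟶ M, f = 0

/-- `M` is a support τ-tilting module: `(M, P)` is a maximal τ-rigid pair for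
some projective `P` (Adachi–Iyama–Reiten; equivalently, `M` is the `0`-th
cohomology of a two-term silting complex in `K^b(proj)`). -/
def IsSupportTauTiltingMod {R : Type} [Ring R] (M : ModCat R) : Prop :=
  ∃ P : ModCat R, IsTauRigidPairMod M P ∧
    ∀ N Q : ModCat R, IsTauRigidPairMod (M ⊞ N) (P ⊞ Q) → MemAddMod N M ∧ MemAddMod Q P

/-- The ring `R` admits only finitely many basic support τ-tilting modules up
to isomorphism. -/
def IsTauTiltingFiniteRing (R : Type) [Ring R] : Prop :=
  ∃ (n : ℕ) (f : Fin n → ModCat R),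
    ∀ M : ModCat R, IsSupportTauTiltingMod M → IsBasicMod M → ∃ i, Nonempty (M ≅ f i)

/-- The ring `R` admits only finitely many finitely generated indecomposable
modules up to isomorphism. -/
def IsRepFiniteRing (R : Type) [Ring R] : Prop :=
  ∃ (n : ℕ) (f : Fin n → ModCat R),
    ∀ M : ModCat R, IsFGMod M → IsIndecMod M → ∃ i, Nonempty (M ≅ f i)

/-- `R` has exactly `n` isomorphism classes of basic support τ-tilting modules. -/
def SupportTauTiltingCount (R : Type) [Ring R] (n : ℕ) : Prop :=
  ∃ f : Fin n → ModCat R,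
    (∀ i, IsSupportTauTiltingMod (f i) ∧ IsBasicMod (f i)) ∧
    (∀ i j, Nonempty (f i ≅ f j) → i = j) ∧
    (∀ M : ModCat R, IsSupportTauTiltingMod M → IsBasicMod M → ∃ i, Nonempty (M ≅ f i))

/-- An algebra `Λ` is τ-tilting-finite (with respect to right modules,
i.e. left `Λᵐᵒᵖ`-modules). -/
def IsTauTiltingFinite (Λ : Type) [Ring Λ] : Prop := IsTauTiltingFiniteRing Λᵐᵒᵖ

/-- An algebra `Λ` is representation-finite (with respect to right modules). -/
def IsRepFinite (Λ : Type) [Ring Λ] : Prop := IsRepFiniteRing Λᵐᵒᵖ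
/-- `R` is locally hereditary: every homomorphism between (finitely generated)
indecomposable projective modules is a monomorphism or zero. -/
def IsLocallyHereditaryRing (R : Type) [Ring R] : Prop :=
  ∀ (P Q : ModCat R) (f : P ⟶ Q), IsFGMod P → IsFGMod Q → Projective P → Projective Q →
    IsIndecMod P → IsIndecMod Q → Function.Injective f ∨ f = 0


open Function
set_option autoImplicit false
set_option linter.all false
set_option linter.unusedSectionVars false


section Basics
variable {M N L V : Type} [AddCommGroup M] [Module R M] [AddCommGroup N] [Module R N]
  [AddCommGroup L] [Module R L] [AddCommGroup V] [Module R V]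

variable (R M) in
def Indec : Prop :=
  Nontrivial M ∧ ∀ e : M →ₗ[R] M, e ∘ₗ e = e → e = 0 ∨ e = LinearMap.id

variable (R N V) in
def AddMem : Prop := ∃ (ι : Type) (_ : Fintype ι) (a : ι → N →ₗ[R] V) (b : ι → V →ₗ[R] N),
  ∑ i, b i ∘ₗ a i = LinearMap.id

lemma desc (q : M →ₗ[R] N) (hq : Surjective q) (r : M →ₗ[R] L) (h : ∀ m, q m = 0 → r m = 0) :
    ∃ s : N →ₗ[R] L, ∀ m, s (q m) = r m := by
  refine ⟨(LinearMap.ker q).liftQ r (fun m hm => h m hm) ∘ₗ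
    (q.quotKerEquivOfSurjective hq).symm.toLinearMap, fun m => ?_⟩
  have : (q.quotKerEquivOfSurjective hq).symm (q m) = Submodule.Quotient.mk m := by
    rw [LinearEquiv.symm_apply_eq]; rfl
  simp only [LinearMap.comp_apply, LinearEquiv.coe_coe, this]
  exact Submodule.liftQ_apply _ _ _

lemma AddMem.of_retract (s : N →ₗ[R] V) (r : V →ₗ[R] N) (h : r ∘ₗ s = LinearMap.id) :
    AddMem R N V := ⟨Unit, inferInstance, fun _ => s, fun _ => r, by simpa using h⟩

variable (R M) in
lemma AddMem.refl : AddMem R M M := .of_retract LinearMap.id LinearMap.id rfl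

lemma AddMem.trans (h₁ : AddMem R M N) (h₂ : AddMem R N V) : AddMem R M V := by
  obtain ⟨ι, _, a, b, h⟩ := h₁
  obtain ⟨κ, _, c, d, h'⟩ := h₂
  refine ⟨ι × κ, inferInstance, fun x => c x.2 ∘ₗ a x.1, fun x => b x.1 ∘ₗ d x.2, ?_⟩
  ext m
  have h1 := LinearMap.congr_fun h m
  have h2 := fun n => LinearMap.congr_fun h' n
  simp only [LinearMap.sum_apply, LinearMap.comp_apply, LinearMap.id_apply] at h1 h2 ⊢
  rw [Fintype.sum_prod_type]
  simp_rw [← map_sum, h2]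
  exact h1

lemma AddMem.pi {ι : Type} [Fintype ι] {W : ι → Type} [∀ i, AddCommGroup (W i)]
    [∀ i, Module R (W i)] (h : ∀ i, AddMem R (W i) V) : AddMem R (∀ i, W i) V := by
  classical
  choose κ f a b hab using h
  refine ⟨Σ i, κ i, inferInstance, fun x => a x.1 x.2 ∘ₗ LinearMap.proj x.1,
    fun x => LinearMap.single R W x.1 ∘ₗ b x.1 x.2, ?_⟩
  have h2 := fun i n => LinearMap.congr_fun (hab i) n
  apply LinearMap.ext; intro w
  simp only [LinearMap.sum_apply, LinearMap.comp_apply, LinearMap.id_apply] at h2 ⊢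
  rw [Fintype.sum_sigma]
  simp only [← map_sum, LinearMap.proj_apply, h2]
  have : ∀ i, ∑ y, LinearMap.single R W i (b i y (a i y (w i))) = Pi.single i (w i) := by
    intro i; rw [← map_sum, h2]; rfl
  simp_rw [this]
  exact Finset.univ_sum_single w

lemma AddMem.prod (h₁ : AddMem R M V) (h₂ : AddMem R N V) : AddMem R (M × N) V := by
  obtain ⟨ι, _, a, b, h⟩ := h₁
  obtain ⟨κ, _, c, d, h'⟩ := h₂
  refine ⟨ι ⊕ κ, inferInstance,
    Sum.elim (fun i => a i ∘ₗ LinearMap.fst R M N) (fun i => c i ∘ₗ LinearMap.snd R M N),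
    Sum.elim (fun i => LinearMap.inl R M N ∘ₗ b i) (fun i => LinearMap.inr R M N ∘ₗ d i), ?_⟩
  have h1 := fun m => LinearMap.congr_fun h m
  have h2 := fun n => LinearMap.congr_fun h' n
  simp only [LinearMap.sum_apply, LinearMap.comp_apply, LinearMap.id_apply] at h1 h2
  apply LinearMap.ext
  rintro ⟨m, n⟩
  simp [LinearMap.sum_apply, Prod.ext_iff, Prod.fst_sum, Prod.snd_sum, h1, h2]

lemma AddMem.congr (e : M ≃ₗ[R] N) : AddMem R M N :=
  .of_retract e.toLinearMap e.symm.toLinearMap (by ext; simp)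

lemma AddMem.finite [Module.Finite R V] (h : AddMem R N V) : Module.Finite R N := by
  classical
  obtain ⟨ι, _, a, b, h⟩ := h
  refine Module.Finite.of_surjective (LinearMap.lsum R (fun _ : ι => V) ℕ b) fun n => ⟨fun i => a i n, ?_⟩
  have := LinearMap.congr_fun h n
  simpa [LinearMap.sum_apply] using this

/-- if every map `V → L` is zero, same for `N` in add `V`. -/
lemma AddMem.hom_zero (h : AddMem R N V) (hV : ∀ g : V →ₗ[R] L, g = 0) (g : N →ₗ[R] L) : g = 0 := by
  obtain ⟨ι, _, a, b, h⟩ := h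
  have : g = ∑ i, (g ∘ₗ b i) ∘ₗ a i := by
    ext n
    have := congrArg g (LinearMap.congr_fun h n)
    simpa [LinearMap.sum_apply] using this.symm
  rw [this]; simp [hV]

lemma AddMem.hom_zero' (h : AddMem R N V) (hV : ∀ g : L →ₗ[R] V, g = 0) (g : L →ₗ[R] N) : g = 0 := by
  obtain ⟨ι, _, a, b, h⟩ := h
  have : g = ∑ i, b i ∘ₗ (a i ∘ₗ g) := by
    ext n
    have := (LinearMap.congr_fun h (g n))
    simpa [LinearMap.sum_apply] using this.symm
  rw [this]; simp [hV]

/-! length -/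
variable (R M) in
def len : ℕ := (Module.length R M).toNat

variable [IsArtinianRing R]

lemma length_ne [Module.Finite R M] : Module.length R M ≠ ⊤ := Module.length_ne_top

lemma fin_inj [Module.Finite R N] (f : M →ₗ[R] N) (hf : Injective f) : Module.Finite R M :=
  Module.Finite.of_injective f hf

lemma len_le_of_inj [Module.Finite R N] (f : M →ₗ[R] N) (hf : Injective f) : len R M ≤ len R N :=
  ENat.toNat_le_toNat (Module.length_le_of_injective f hf) length_ne

lemma len_le_of_surj [Module.Finite R M] (f : M →ₗ[R] N) (hf : Surjective f) : len R N ≤ len R M :=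
  ENat.toNat_le_toNat (Module.length_le_of_surjective f hf) length_ne

lemma len_exact [Module.Finite R M] (f : M →ₗ[R] N) (hf : Surjective f) :
    len R M = len R (LinearMap.ker f) + len R N := by
  have := Module.Finite.of_surjective f hf
  have h := Module.length_eq_add_of_exact (LinearMap.ker f).subtype f
    (Submodule.subtype_injective _) hf (LinearMap.exact_subtype_ker_map f)
  rw [len, h, ENat.toNat_add length_ne length_ne]; rfl

lemma len_pos [Module.Finite R M] [Nontrivial M] : 0 < len R M := by
  have h := Module.length_pos (R := R) (M := M)
  rw [Nat.pos_iff_ne_zero]; intro h0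
  rw [len, ENat.toNat_eq_zero] at h0
  rcases h0 with h0 | h0
  · simp [h0] at h
  · exact length_ne h0

lemma len_lt_of_surj [Module.Finite R M] (f : M →ₗ[R] N) (hf : Surjective f)
    (h : ¬ Injective f) : len R N < len R M := by
  have : Nontrivial (LinearMap.ker f) := by
    rw [Submodule.nontrivial_iff_ne_bot]; intro h'; exact h (LinearMap.ker_eq_bot.1 h')
  have := len_pos (R := R) (M := LinearMap.ker f)
  rw [len_exact f hf]; omega

lemma len_sub_lt [Module.Finite R M] {A : Submodule R M} (h : A ≠ ⊤) : len R A < len R M := by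
  have := Submodule.length_lt h
  rw [len, len]
  have h1 := ENat.coe_toNat (length_ne (R := R) (M := A))
  have h2 := ENat.coe_toNat (length_ne (R := R) (M := M))
  rw [← h1, ← h2] at this; exact_mod_cast this

lemma len_lt_of_inj [Module.Finite R N] (f : M →ₗ[R] N) (hf : Injective f)
    (h : ¬ Surjective f) : len R M < len R N := by
  have h1 : LinearMap.range f ≠ ⊤ := fun h' => h (LinearMap.range_eq_top.1 h')
  exact lt_of_le_of_lt (len_le_of_inj (LinearEquiv.ofInjective f hf).toLinearMap
    (LinearEquiv.ofInjective f hf).injective) (len_sub_lt h1)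

lemma len_prod [Module.Finite R M] [Module.Finite R N] : len R (M × N) = len R M + len R N := by
  rw [len, Module.length_prod, ENat.toNat_add length_ne length_ne]; rfl

lemma len_pi {ι : Type} [Fintype ι] {W : ι → Type} [∀ i, AddCommGroup (W i)]
    [∀ i, Module R (W i)] [∀ i, Module.Finite R (W i)] : len R (∀ i, W i) = ∑ i, len R (W i) := by
  rw [len, Module.length_pi_of_fintype]
  have h : ∀ i, Module.length R (W i) = (len R (W i) : ℕ∞) := fun i => (ENat.coe_toNat length_ne).symm
  simp_rw [h]
  rw [← Nat.cast_sum]; rfl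

lemma bij_of_inj [Module.Finite R M] (f : M →ₗ[R] M) (h : Injective f) : Bijective f :=
  IsArtinian.bijective_of_injective_endomorphism f h
lemma bij_of_surj [Module.Finite R M] (f : M →ₗ[R] M) (h : Surjective f) : Bijective f :=
  IsNoetherian.bijective_of_surjective_endomorphism f h

lemma Indec.fitting [Module.Finite R M] (h : Indec R M) (f : M →ₗ[R] M) :
    Bijective f ∨ ∃ n, f ^ n = 0 := by
  obtain ⟨n, hn⟩ := Filter.eventually_atTop.1 (LinearMap.eventually_isCompl_ker_pow_range_pow f)
  have hc := (hn (n+1) (by omega)).symm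
  set A := LinearMap.range (f ^ (n+1)) with hA
  set B := LinearMap.ker (f ^ (n+1)) with hB
  rcases h.2 (A.projection B hc) (Submodule.isIdempotentElem_projection hc) with h0 | h0
  · right; refine ⟨n+1, ?_⟩
    ext x
    have := LinearMap.congr_fun h0 ((f^(n+1)) x)
    have h2 : (f^(n+1)) x ∈ A := ⟨x, rfl⟩
    have h3 := Submodule.projection_apply_left hc ⟨_, h2⟩
    exact h3.symm.trans this
  · left
    apply bij_of_inj
    rw [← LinearMap.ker_eq_bot, eq_bot_iff]
    intro x hx
    have : x ∈ B := by
      rw [hB, LinearMap.mem_ker, pow_succ]; simp [show f x = 0 from hx]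
    have h3 := Submodule.projection_apply_right hc ⟨_, this⟩
    rw [h0] at h3; simpa using h3

lemma Indec.exists_bij [Module.Finite R M] (h : Indec R M) {ι : Type} (s : Finset ι)
    (φ : ι → M →ₗ[R] M) (hs : Bijective (∑ i ∈ s, φ i : M →ₗ[R] M)) : ∃ i ∈ s, Bijective (φ i) := by
  have key : ∀ a b : Module.End R M, IsUnit (a + b) → IsUnit a ∨ IsUnit b := by
    intro a b hab
    obtain ⟨u, hu⟩ := hab
    rcases h.fitting (↑u⁻¹ * a : Module.End R M) with h1 | ⟨n, h1⟩
    · left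
      have h1 := (Module.End.isUnit_iff _).2 h1
      exact (Units.isUnit_units_mul u⁻¹ a).1 h1
    · right
      have h2 : IsUnit (1 - ↑u⁻¹ * a : Module.End R M) := IsNilpotent.isUnit_one_sub ⟨n, h1⟩
      have : (1 - ↑u⁻¹ * a : Module.End R M) = ↑u⁻¹ * b := by
        rw [sub_eq_iff_eq_add, ← mul_add, add_comm b, ← hu]; simp
      rw [this] at h2
      exact (Units.isUnit_units_mul u⁻¹ b).1 h2
  classical
  induction s using Finset.induction_on with
  | empty =>
    exfalso
    obtain ⟨x, hx⟩ := @exists_ne M h.1 0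
    exact hx (hs.1 (by simp))
  | insert i s hi ih =>
    rw [Finset.sum_insert hi] at hs
    rcases key _ _ ((Module.End.isUnit_iff _).2 hs) with h1 | h1
    · exact ⟨i, by simp, (Module.End.isUnit_iff _).1 h1⟩
    · obtain ⟨j, hj, hb⟩ := ih ((Module.End.isUnit_iff _).1 h1)
      exact ⟨j, by simp [hj], hb⟩

/-- if `N` indecomposable is in add `V`, it is a retract. -/
lemma AddMem.retract [Module.Finite R V] (hN : Indec R N) (h : AddMem R N V) :
    ∃ (s : N →ₗ[R] V) (r : V →ₗ[R] N), r ∘ₗ s = LinearMap.id := by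
  have := h.finite
  obtain ⟨ι, _, a, b, h⟩ := h
  obtain ⟨i, -, hi⟩ := hN.exists_bij Finset.univ (fun i => b i ∘ₗ a i) (by rw [h]; exact bijective_id)
  refine ⟨a i, (LinearEquiv.ofBijective _ hi).symm.toLinearMap ∘ₗ b i, ?_⟩
  ext x
  exact (LinearEquiv.ofBijective _ hi).symm_apply_apply x

/-- a retract of positive size of an indecomposable is everything. -/
lemma Indec.bij_of_retract [Nontrivial N] (h : Indec R M) (s : N →ₗ[R] M) (r : M →ₗ[R] N)
    (hr : r ∘ₗ s = LinearMap.id) : Bijective s ∧ Bijective r := by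
  have hr' : ∀ x, r (s x) = x := fun x => LinearMap.congr_fun hr x
  rcases h.2 (s ∘ₗ r) (by ext x; simp [hr']) with h0 | h0
  · exfalso
    obtain ⟨x, hx⟩ := exists_ne (0:N)
    have := congrArg r (LinearMap.congr_fun h0 (s x))
    simp [hr'] at this; exact hx this
  · have h' : ∀ x, s (r x) = x := fun x => LinearMap.congr_fun h0 x
    exact ⟨⟨LeftInverse.injective hr', fun x => ⟨r x, h' x⟩⟩,
      ⟨LeftInverse.injective h', fun x => ⟨s x, hr' x⟩⟩⟩

lemma Indec.congr (e : M ≃ₗ[R] N) (h : Indec R M) : Indec R N := by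
  refine ⟨@Equiv.nontrivial _ _ e.symm.toEquiv h.1, fun f hf => ?_⟩
  have hf' : ∀ x, f (f x) = f x := fun x => LinearMap.congr_fun hf x
  rcases h.2 (e.symm.toLinearMap ∘ₗ f ∘ₗ e.toLinearMap) (by ext x; simp [hf']) with h0 | h0
  · left; ext x
    have := congrArg e (LinearMap.congr_fun h0 (e.symm x)); simpa using this
  · right; ext x
    have := congrArg e (LinearMap.congr_fun h0 (e.symm x)); simpa using this

variable (R M) in
structure Sm where
  W : ModuleCat.{0} R
  a : M →ₗ[R] W
  b : W →ₗ[R] M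
  fin : Module.Finite R W
  ind : Indec R W
  ab : ∀ x, a (b x) = x

variable (R M) in
lemma exists_decomp [Module.Finite R M] :
    ∃ (ι : Type) (_ : Fintype ι) (s : ι → Sm R M), ∀ x, ∑ i, (s i).b ((s i).a x) = x := by
  induction hn : len R M using Nat.strong_induction_on generalizing M with
  | _ n ih =>
  subst hn
  by_cases hM : Nontrivial M
  swap
  · rw [not_nontrivial_iff_subsingleton] at hM
    exact ⟨Empty, inferInstance, fun i => i.elim, fun x => Subsingleton.elim _ _⟩
  by_cases hI : Indec R M
  · exact ⟨Unit, inferInstance, fun _ => ⟨ModuleCat.of R M, LinearMap.id,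
      LinearMap.id, inferInstance, hI, fun _ => rfl⟩, by simp⟩
  simp only [Indec, hM, true_and, not_forall, not_or] at hI
  obtain ⟨e, he, h0, h1⟩ := hI
  have he' : ∀ x, e (e x) = e x := fun x => LinearMap.congr_fun he x
  have hk : LinearMap.ker e ≠ ⊤ := fun h => h0 (LinearMap.ker_eq_top.1 h)
  have hr : LinearMap.range e ≠ ⊤ := by
    intro h
    apply h1; ext x
    obtain ⟨y, rfl⟩ : x ∈ LinearMap.range e := h ▸ Submodule.mem_top
    exact he' y
  obtain ⟨ι, _, s, hs⟩ := ih _ (len_sub_lt hk) (LinearMap.ker e) rfl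
  obtain ⟨ι', _, s', hs'⟩ := ih _ (len_sub_lt hr) (LinearMap.range e) rfl
  let q : M →ₗ[R] LinearMap.ker e := (LinearMap.id - e).codRestrict _ (fun x => by simp [he'])
  have hq : ∀ x : LinearMap.ker e, q x = x := by
    intro x; ext; simp [q]
  have hr : ∀ x : LinearMap.range e, e.rangeRestrict x = x := by
    rintro ⟨_, x, rfl⟩; ext; simp [he']
  refine ⟨ι ⊕ ι', inferInstance, Sum.elim
    (fun i => ⟨(s i).W, (s i).a ∘ₗ q, (LinearMap.ker e).subtype ∘ₗ (s i).b, (s i).fin, (s i).ind,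
      fun x => by simp [hq, (s i).ab]⟩)
    (fun i => ⟨(s' i).W, (s' i).a ∘ₗ e.rangeRestrict, (LinearMap.range e).subtype ∘ₗ (s' i).b,
      (s' i).fin, (s' i).ind,
      fun x => by simp only [LinearMap.comp_apply, Submodule.subtype_apply, hr, (s' i).ab]⟩), ?_⟩
  intro x
  have e1 := congrArg (LinearMap.ker e).subtype (hs (q x))
  have e2 := congrArg (LinearMap.range e).subtype (hs' (e.rangeRestrict x))
  rw [map_sum] at e1 e2
  rw [Fintype.sum_sum_type]
  exact (congrArg₂ (· + ·) e1 e2).trans (by simp [q])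

lemma exists_indec_src [Module.Finite R M] (g : M →ₗ[R] N) (hg : g ≠ 0) :
    ∃ s : Sm R M, g ∘ₗ s.b ≠ 0 := by
  obtain ⟨ι, _, s, hs⟩ := exists_decomp R M
  by_contra hc
  push Not at hc
  apply hg; ext x
  rw [← hs x, map_sum, LinearMap.zero_apply]
  exact Finset.sum_eq_zero fun i _ => LinearMap.congr_fun (hc (s i)) _

lemma exists_indec_tgt [Module.Finite R M] (g : N →ₗ[R] M) (hg : g ≠ 0) :
    ∃ s : Sm R M, s.a ∘ₗ g ≠ 0 := by
  obtain ⟨ι, _, s, hs⟩ := exists_decomp R M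
  by_contra hc
  push Not at hc
  apply hg; ext x
  rw [← hs (g x), LinearMap.zero_apply]
  refine Finset.sum_eq_zero fun i _ => ?_
  have : (s i).a (g x) = 0 := LinearMap.congr_fun (hc (s i)) x
  rw [this, map_zero]

end Basics

section Kstr
variable {M N L V : Type} [AddCommGroup M] [Module R M] [AddCommGroup N] [Module R N]
variable (K : Type) [Field K] [Algebra K R]

variable (R M) in
def scal (c : K) : M →ₗ[R] M where
  toFun m := algebraMap K R c • m
  map_add' := smul_add _
  map_smul' r m := by simp [← mul_smul, Algebra.commutes]

variable {K}
lemma scal_apply (c : K) (m : M) : scal R M K c m = algebraMap K R c • m := rfl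
lemma map_scal (f : M →ₗ[R] N) (c : K) (m : M) : f (scal R M K c m) = scal R N K c (f m) := by
  simp [scal_apply]

lemma scal_bij {c : K} (hc : c ≠ 0) : Bijective (scal R M K c) := by
  have : ∀ m, scal R M K c⁻¹ (scal R M K c m) = m := by
    intro m; simp [scal_apply, ← mul_smul, ← map_mul, hc]
  have h' : ∀ m, scal R M K c (scal R M K c⁻¹ m) = m := by
    intro m; simp [scal_apply, ← mul_smul, ← map_mul, hc]
  exact ⟨LeftInverse.injective this, fun m => ⟨_, h' m⟩⟩

variable (K M N) in
lemma hom_basis [FiniteDimensional K R] [Module.Finite R M] [Module.Finite R N] :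
    ∃ (k : ℕ) (h : Fin k → M →ₗ[R] N),
      (∀ g : M →ₗ[R] N, ∃ c : Fin k → K, ∀ m, g m = ∑ i, scal R N K (c i) (h i m)) ∧
      (∀ c : Fin k → K, (∀ m, ∑ i, scal R N K (c i) (h i m) = 0) → c = 0) := by
  letI : Module K N := Module.compHom N (algebraMap K R)
  letI : Module K M := Module.compHom M (algebraMap K R)
  haveI : IsScalarTower K R N := .of_algebraMap_smul fun _ _ => rfl
  haveI : IsScalarTower K R M := .of_algebraMap_smul fun _ _ => rfl
  haveI : SMulCommClass R K N := ⟨fun r c n => by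
    change r • algebraMap K R c • n = algebraMap K R c • r • n
    rw [← mul_smul, ← mul_smul, Algebra.commutes]⟩
  haveI : FiniteDimensional K N := Module.Finite.trans R N
  haveI : FiniteDimensional K M := Module.Finite.trans R M
  let j : (M →ₗ[R] N) →ₗ[K] (M →ₗ[K] N) :=
    { toFun := fun f => f.restrictScalars K, map_add' := fun _ _ => rfl, map_smul' := fun _ _ => rfl }
  haveI : FiniteDimensional K (M →ₗ[R] N) :=
    Module.Finite.of_injective j (fun a b h => by ext x; exact LinearMap.congr_fun h x)
  let b := Module.finBasis K (M →ₗ[R] N)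
  refine ⟨_, b, fun g => ⟨b.repr g, fun m => ?_⟩, fun c hc => ?_⟩
  · conv_lhs => rw [← b.sum_repr g]
    rw [LinearMap.sum_apply]; rfl
  · have : ∑ i, c i • b i = 0 := by
      ext m; rw [LinearMap.sum_apply]; exact hc m
    exact funext fun i => Fintype.linearIndependent_iff.1 b.linearIndependent c this i

/-- every endomorphism has an eigenvalue -/
lemma exists_eig [FiniteDimensional K R] [IsAlgClosed K] [Module.Finite R M] [Nontrivial M]
    (f : M →ₗ[R] M) : ∃ c : K, ¬ Injective (f - scal R M K c) := by
  letI : Module K M := Module.compHom M (algebraMap K R)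
  haveI : IsScalarTower K R M := .of_algebraMap_smul fun _ _ => rfl
  haveI : FiniteDimensional K M := Module.Finite.trans R M
  obtain ⟨c, hc⟩ := Module.End.exists_eigenvalue (f.restrictScalars K)
  obtain ⟨v, hv⟩ := hc.exists_hasEigenvector
  refine ⟨c, fun h => hv.2 (h ?_)⟩
  have := hv.apply_eq_smul
  rw [map_zero, LinearMap.sub_apply, sub_eq_zero]; exact this

lemma end_scal [FiniteDimensional K R] [IsAlgClosed K] [Module.Finite R M] [Nontrivial M]
    (h : ∀ f : M →ₗ[R] M, f ≠ 0 → Injective f) (f : M →ₗ[R] M) :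
    ∃ c : K, f = scal R M K c := by
  obtain ⟨c, hc⟩ := exists_eig (K := K) f
  exact ⟨c, by by_contra h'; exact hc (h _ (sub_ne_zero.2 h'))⟩

end Kstr


abbrev MP (R : Type) [Ring R] := ∀ (M : Type) [AddCommGroup M] [Module R M], Prop

structure Tors (T : MP R) : Prop where
  fin : ∀ (Y : Type) [AddCommGroup Y] [Module R Y], T Y → Module.Finite R Y
  quot : ∀ {Y Z : Type} [AddCommGroup Y] [Module R Y] [AddCommGroup Z] [Module R Z]
    (g : Y →ₗ[R] Z), Surjective g → T Y → T Z
  ext : ∀ {Y Z : Type} [AddCommGroup Y] [Module R Y] [AddCommGroup Z] [Module R Z]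
    (g : Y →ₗ[R] Z), Surjective g → T (LinearMap.ker g) → T Z → T Y

def MinIn (T : MP R) (X : Type) [AddCommGroup X] [Module R X] : Prop :=
  Nontrivial X ∧ T X ∧ ∀ (Y : Type) [AddCommGroup Y] [Module R Y], T Y →
    ∀ g : Y →ₗ[R] X, g ≠ 0 → ∃ s : X →ₗ[R] Y, ∀ x, g (s x) = x

def EP (T : MP R) (U : Type) [AddCommGroup U] [Module R U] : Prop :=
  ∀ ⦃E B : Type⦄ [AddCommGroup E] [Module R E] [AddCommGroup B] [Module R B]
    (p : E →ₗ[R] B), Surjective p → T (LinearMap.ker p) → ∀ g : U →ₗ[R] B,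
    ∃ h : U →ₗ[R] E, ∀ x, p (h x) = g x

def Gen (T : MP R) (U : Type) [AddCommGroup U] [Module R U] : Prop :=
  ∀ (Y : Type) [AddCommGroup Y] [Module R Y], T Y → ∃ (U₀ : ModCat R), AddMem R U₀ U ∧
    ∃ q : U₀ →ₗ[R] Y, Surjective q ∧ T (LinearMap.ker q)

def cut (T : MP R) (X : Type) [AddCommGroup X] [Module R X] : MP R :=
  fun Y _ _ => T Y ∧ ∀ g : Y →ₗ[R] X, g = 0

section Tor
variable {M N L V : Type} [AddCommGroup M] [Module R M] [AddCommGroup N] [Module R N]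
  [AddCommGroup L] [Module R L] [AddCommGroup V] [Module R V]
variable {T : MP R}

lemma Tors.congr (hT : Tors T) (e : M ≃ₗ[R] N) (h : T M) : T N := hT.quot e.toLinearMap e.surjective h

lemma Tors.prod (hT : Tors T) (h : T M) (h' : T N) : T (M × N) := by
  refine hT.ext (LinearMap.snd R M N) LinearMap.snd_surjective ?_ h'
  refine hT.quot ((LinearMap.inl R M N).codRestrict (LinearMap.ker (LinearMap.snd R M N)) (by simp)) ?_ h
  rintro ⟨⟨a, b⟩, hb⟩
  exact ⟨a, Subtype.ext (Prod.ext rfl hb.symm)⟩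

lemma Tors.zero (hT : Tors T) (h : T M) [Subsingleton N] : T N :=
  hT.quot (0 : M →ₗ[R] N) (fun x => ⟨0, Subsingleton.elim _ _⟩) h

lemma Tors.fun (hT : Tors T) {ι : Type} [Finite ι] (h : T M) : T (ι → M) := by
  have key : ∀ n : ℕ, T (Fin n → M) := by
    intro n
    induction n with
    | zero => exact hT.zero h
    | succ n ih =>
      refine hT.quot (Y := M × (Fin n → M)) ⟨⟨fun x => Fin.cons x.1 x.2, ?_⟩, ?_⟩ ?_ (hT.prod h ih)
      · intro x y; ext i; refine Fin.cases ?_ (fun i => ?_) i <;> simp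
      · intro r x; ext i; refine Fin.cases ?_ (fun i => ?_) i <;> simp
      · intro x; exact ⟨(x 0, fun i => x i.succ), by ext i; refine Fin.cases ?_ (fun i => ?_) i <;> rfl⟩
  obtain ⟨n, ⟨e⟩⟩ := Finite.exists_equiv_fin ι
  exact hT.congr (LinearEquiv.funCongrLeft R M e) (key n)

lemma Tors.add (hT : Tors T) (h : AddMem R N V) (hV : T V) : T N := by
  classical
  obtain ⟨ι, _, a, b, h⟩ := h
  refine hT.quot (LinearMap.lsum R (fun _ : ι => V) ℕ b) (fun n => ⟨fun i => a i n, ?_⟩) (hT.fun hV)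
  have := LinearMap.congr_fun h n
  simpa [LinearMap.sum_apply] using this

lemma Tors.cut (hT : Tors T) : Tors (cut T L) where
  fin Y _ _ h := hT.fin Y h.1
  quot g hg h := ⟨hT.quot g hg h.1, fun k => by
    have := h.2 (k ∘ₗ g)
    ext z; obtain ⟨y, rfl⟩ := hg z; exact LinearMap.congr_fun this y⟩
  ext g hg h h' := ⟨hT.ext g hg h.1 h'.1, fun k => by
    obtain ⟨s, hs⟩ := desc g hg k (fun m hm =>
      LinearMap.congr_fun (h.2 (k ∘ₗ (LinearMap.ker g).subtype)) ⟨m, hm⟩)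
    ext y; rw [← hs, h'.2 s]; rfl⟩

lemma EP.add (h : EP T V) (ha : AddMem R N V) : EP T N := by
  intro E B _ _ _ _ p hp hk g
  obtain ⟨ι, _, a, b, hab⟩ := ha
  choose f hf using fun i => h p hp hk (g ∘ₗ b i)
  refine ⟨∑ i, f i ∘ₗ a i, fun x => ?_⟩
  have := congrArg g (LinearMap.congr_fun hab x)
  simp only [LinearMap.sum_apply, map_sum, LinearMap.comp_apply, hf] at this ⊢
  exact this

lemma EP.prod (h : EP T M) (h' : EP T N) : EP T (M × N) := by
  intro E B _ _ _ _ p hp hk g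
  obtain ⟨f, hf⟩ := h p hp hk (g ∘ₗ LinearMap.inl R M N)
  obtain ⟨f', hf'⟩ := h' p hp hk (g ∘ₗ LinearMap.inr R M N)
  refine ⟨f.coprod f', fun x => ?_⟩
  rw [LinearMap.coprod_apply, map_add, hf, hf']
  simp [← map_add]

lemma EP.mono {T' : MP R} (h : EP T M) (hTT : ∀ (Y : Type) [AddCommGroup Y] [Module R Y], T' Y → T Y) :
    EP T' M := fun _ _ _ _ _ _ p hp hk g => h p hp (hTT _ hk) g

/-- the cokernel-side retract given by section. -/
lemma retract_ker (r : M →ₗ[R] N) (s : N →ₗ[R] M) (h : ∀ x, r (s x) = x) :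
    ∃ p : M →ₗ[R] LinearMap.ker r, ∀ x, (p x : M) = x - s (r x) :=
  ⟨(LinearMap.id - s ∘ₗ r).codRestrict _ (fun x => by simp [h]), fun x => rfl⟩

lemma ker_ne_top_len [IsArtinianRing R] [Module.Finite R M] (r : M →ₗ[R] N) (h : r ≠ 0) :
    len R (LinearMap.ker r) < len R M :=
  len_sub_lt (fun h' => h (LinearMap.ker_eq_top.1 h'))

end Tor

section Step
variable {T : MP R} {X U : Type} [AddCommGroup X] [Module R X] [AddCommGroup U] [Module R U]
  [IsArtinianRing R]

lemma split_off (hT : Tors T) (hX : MinIn T X) (Y : Type) [AddCommGroup Y] [Module R Y] (hY : T Y) :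
    ∃ (ι : Type) (_ : Fintype ι) (s : ι → X →ₗ[R] Y) (r : ι → Y →ₗ[R] X) (Y' : ModCat R)
      (i : Y' →ₗ[R] Y) (p : Y →ₗ[R] Y'), (∀ y, ∑ j, s j (r j y) + i (p y) = y) ∧
      (∀ y, p (i y) = y) ∧ (∀ g : Y' →ₗ[R] X, g = 0) := by
  have := hT.fin Y hY
  induction hn : len R Y using Nat.strong_induction_on generalizing Y with
  | _ n ih =>
  subst hn
  by_cases h0 : ∀ g : Y →ₗ[R] X, g = 0
  · exact ⟨Empty, inferInstance, fun i => i.elim, fun i => i.elim, .of R Y, LinearMap.id,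
      LinearMap.id, fun y => by simp, fun y => rfl, h0⟩
  push Not at h0
  obtain ⟨g, hg⟩ := h0
  obtain ⟨s, hs⟩ := hX.2.2 Y hY g hg
  obtain ⟨p, hp⟩ := retract_ker g s hs
  have hsurj : Surjective p := fun x => ⟨x, by
    ext; rw [hp]; have := x.2; rw [LinearMap.mem_ker] at this; simp [this]⟩
  obtain ⟨ι, _, s', r', Y', i, p', h1, h2, h3⟩ := ih _ (ker_ne_top_len g hg) (LinearMap.ker g)
    (hT.quot p hsurj hY) inferInstance rfl
  refine ⟨Option ι, inferInstance, fun o => o.elim s (fun j => (LinearMap.ker g).subtype ∘ₗ s' j),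
    fun o => o.elim g (fun j => r' j ∘ₗ p), Y', (LinearMap.ker g).subtype ∘ₗ i, p' ∘ₗ p, ?_, ?_, h3⟩
  · intro y
    have h1 := congrArg (LinearMap.ker g).subtype (h1 (p y))
    rw [map_add, map_sum] at h1
    simp only [Fintype.sum_option, Option.elim, LinearMap.comp_apply]
    rw [add_assoc, h1]; simp [hp]
  · intro y
    have : p (i y) = i y := by
      ext; rw [hp]; have := (i y).2; rw [LinearMap.mem_ker] at this; simp [this]
    simp [this, h2]

lemma gen_cut (hT : Tors T) (hU : T U) (hX : MinIn T X) (Y : Type) [AddCommGroup Y] [Module R Y]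
    (hY : cut T X Y) (U₀ : ModCat R) (h0 : AddMem R U₀ U) (q : U₀ →ₗ[R] Y) (hq : Surjective q)
    (hk : T (LinearMap.ker q)) :
    ∃ (V₀ : ModCat R), AddMem R V₀ U ∧ (∀ g : V₀ →ₗ[R] X, g = 0) ∧
    ∃ q : V₀ →ₗ[R] Y, Surjective q ∧ T (LinearMap.ker q) := by
  have hTU : T U₀ := hT.add h0 hU
  have := hT.fin _ hTU
  induction hn : len R U₀ using Nat.strong_induction_on generalizing U₀ with
  | _ n ih =>
  subst hn
  by_cases hz : ∀ g : U₀ →ₗ[R] X, g = 0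
  · exact ⟨U₀, h0, hz, q, hq, hk⟩
  push Not at hz
  obtain ⟨c, hc⟩ := hz
  by_cases hcq : c ∘ₗ (LinearMap.ker q).subtype = 0
  · exfalso
    obtain ⟨s, hs⟩ := desc q hq c (fun m hm => LinearMap.congr_fun hcq ⟨m, hm⟩)
    apply hc; ext y; rw [← hs, hY.2 s]; rfl
  obtain ⟨s, hs⟩ := hX.2.2 _ hk _ hcq
  obtain ⟨p, hp⟩ := retract_ker c ((LinearMap.ker q).subtype ∘ₗ s) hs
  have hpid : ∀ x : LinearMap.ker c, p x = x := fun x => by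
    ext; rw [hp]; have := x.2; rw [LinearMap.mem_ker] at this; simp [this]
  have hqs : ∀ x, q (s x) = 0 := fun x => (s x).2
  have hA : AddMem R (LinearMap.ker c) U₀ := .of_retract (LinearMap.ker c).subtype p
    (by ext x; simp [hpid])
  refine ih _ (ker_ne_top_len c hc) (.of R (LinearMap.ker c)) (hA.trans h0)
    (q ∘ₗ (LinearMap.ker c).subtype) ?_ ?_ (hT.add hA hTU) (hA.finite) rfl
  · intro y
    obtain ⟨x, rfl⟩ := hq y
    exact ⟨p x, by simp [hp, hqs]⟩
  · let f := LinearMap.codRestrict (LinearMap.ker (q ∘ₗ (LinearMap.ker c).subtype))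
      (p ∘ₗ (LinearMap.ker q).subtype) (fun x => by
        have := x.2; rw [LinearMap.mem_ker] at this; simp [hp, hqs, this])
    refine hT.quot f ?_ hk
    rintro ⟨x, hx⟩
    refine ⟨⟨x, hx⟩, ?_⟩
    apply Subtype.ext
    exact hpid x

lemma exists_approx (K : Type) [Field K] [Algebra K R] [FiniteDimensional K R]
    (V : Type) [AddCommGroup V] [Module R V] [Module.Finite R X] [Module.Finite R V] :
    ∃ (V' : ModCat R) (u : X →ₗ[R] V'), AddMem R V' V ∧
    (∀ (V₀ : Type) [AddCommGroup V₀] [Module R V₀], AddMem R V₀ V → ∀ g : X →ₗ[R] V₀,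
      ∃ h : V' →ₗ[R] V₀, ∀ x, h (u x) = g x) ∧
    (∀ v : V' →ₗ[R] V', (∀ x, v (u x) = u x) → Bijective v) := by
  let P : ModCat R → Prop := fun V' => AddMem R V' V ∧ ∃ u : X →ₗ[R] V',
    (∀ (V₀ : Type) [AddCommGroup V₀] [Module R V₀], AddMem R V₀ V → ∀ g : X →ₗ[R] V₀,
      ∃ h : V' →ₗ[R] V₀, ∀ x, h (u x) = g x)
  have hex : ∃ n V', P V' ∧ len R V' = n := by
    obtain ⟨k, h, h1, -⟩ := hom_basis (R := R) X V K
    refine ⟨_, .of R (Fin k → V), ⟨.pi fun _ => .refl R V, LinearMap.pi h, ?_⟩, rfl⟩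
    intro V₀ _ _ hV g
    have key : ∀ g : X →ₗ[R] V, ∃ l : (Fin k → V) →ₗ[R] V, ∀ x, l (LinearMap.pi h x) = g x := by
      intro g
      obtain ⟨c, hc⟩ := h1 g
      exact ⟨∑ i, scal R V K (c i) ∘ₗ LinearMap.proj i, fun x => by
        rw [hc]; simp [LinearMap.sum_apply]⟩
    obtain ⟨ι, _, a, b, hab⟩ := hV
    choose l hl using fun i => key (a i ∘ₗ g)
    refine ⟨∑ i, b i ∘ₗ l i, fun x => ?_⟩
    have := LinearMap.congr_fun hab (g x)
    simp only [LinearMap.sum_apply, LinearMap.comp_apply, LinearMap.id_apply] at this ⊢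
    rw [← this]
    exact Finset.sum_congr rfl fun i _ => congrArg (b i) (hl i x)
  classical
  obtain ⟨V', ⟨hV', u, hu⟩, hlen⟩ := Nat.find_spec hex
  have hmin := fun m hm => Nat.find_min hex (m := m) hm
  have := hV'.finite
  refine ⟨V', u, hV', hu, fun v hv => ?_⟩
  obtain ⟨n, hn⟩ := Filter.eventually_atTop.1 (LinearMap.eventually_isCompl_ker_pow_range_pow v)
  have hc := (hn (n+1) (by omega)).symm
  have hvn : ∀ m x, (v ^ m) (u x) = u x := by
    intro m x
    induction m with
    | zero => rfl
    | succ m ih => rw [pow_succ]; simp [hv, ih]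
  have htop : LinearMap.range (v ^ (n+1)) = ⊤ := by
    by_contra hne
    have hlt := len_sub_lt hne
    rw [hlen] at hlt
    refine hmin _ hlt ⟨.of R (LinearMap.range (v ^ (n+1))), ⟨?_, ?_⟩, rfl⟩
    · refine AddMem.trans (.of_retract (LinearMap.range (v ^ (n+1))).subtype
        (Submodule.projectionOnto _ _ hc) ?_) hV'
      exact Submodule.projectionOnto_comp_subtype hc
    · refine ⟨u.codRestrict _ (fun x => ⟨u x, hvn _ x⟩), fun V₀ _ _ hV₀ g => ?_⟩
      obtain ⟨h, hh⟩ := hu V₀ hV₀ g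
      exact ⟨h ∘ₗ (LinearMap.range (v ^ (n+1))).subtype, hh⟩
  apply bij_of_surj
  intro x
  obtain ⟨y, rfl⟩ := LinearMap.range_eq_top.1 htop x
  exact ⟨(v^n) y, by rw [pow_succ']; rfl⟩

theorem chain_step (K : Type) [Field K] [Algebra K R] [FiniteDimensional K R]
    (hT : Tors T) (hU : T U) (hG : Gen T U) (hE : EP T U) (hX : MinIn T X) :
    AddMem R X U ∧
    ∃ U' : ModCat R, cut T X U' ∧ Gen (cut T X) U' ∧ EP (cut T X) U' ∧
    ∀ T'' : MP R, (∀ (Y : Type) [AddCommGroup Y] [Module R Y], T'' Y → cut T X Y) →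
      (∀ (Y Z : Type) [AddCommGroup Y] [Module R Y] [AddCommGroup Z] [Module R Z]
        (g : Y →ₗ[R] Z), Surjective g → T'' Y → T'' Z) →
      ∀ (Y : Type) [AddCommGroup Y] [Module R Y], T'' Y → ∀ g : Y →ₗ[R] U', g ≠ 0 →
      (∃ X' : ModCat R, MinIn T'' X') ∨
      (∃ Y : ModCat R, T'' Y ∧ ∃ g : Y →ₗ[R] U, g ≠ 0) := by
  have := hT.fin U hU
  have := hT.fin X hX.2.1
  have hXU : AddMem R X U := by
    obtain ⟨U₀, h0, q, hq, hk⟩ := hG X hX.2.1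
    have hq0 : q ≠ 0 := by
      rintro rfl
      obtain ⟨x, hx⟩ := @exists_ne X hX.1 0
      obtain ⟨y, hy⟩ := hq x
      exact hx hy.symm
    obtain ⟨s, hs⟩ := hX.2.2 _ (hT.add h0 hU) q hq0
    exact (AddMem.of_retract s q (by ext x; exact hs x)).trans h0
  refine ⟨hXU, ?_⟩
  obtain ⟨ι, _, s, r, V, i, p, h1, h2, hVX⟩ := split_off hT hX U hU
  have hVU : AddMem R V U := .of_retract i p (by ext x; exact h2 x)
  have hVfin := hVU.finite
  have hAV : ∀ (V₀ : Type) [AddCommGroup V₀] [Module R V₀], AddMem R V₀ U →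
      (∀ g : V₀ →ₗ[R] X, g = 0) → AddMem R V₀ V := by
    intro V₀ _ _ h hz
    obtain ⟨κ, _, a, b, hab⟩ := h
    refine ⟨κ, inferInstance, fun k => p ∘ₗ a k, fun k => b k ∘ₗ i, ?_⟩
    rw [← hab]
    refine Finset.sum_congr rfl fun k _ => ?_
    ext x
    have h3 : ∀ j, r j (a k x) = 0 := fun j => LinearMap.congr_fun (hz (r j ∘ₗ a k)) x
    have := h1 (a k x)
    simp only [h3, map_zero, Finset.sum_const_zero, zero_add] at this
    simp [this]
  have hT' : Tors (cut T X) := hT.cut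
  have hVT : cut T X V := ⟨hT.add hVU hU, hVX⟩
  obtain ⟨V', u, hV', hu, humin⟩ := exists_approx (R := R) (X := X) K V
  have hV'T : cut T X V' := hT'.add hV' hVT
  have hV'fin := hV'.finite
  have F1 : ∀ (Y : Type) [AddCommGroup Y] [Module R Y], cut T X Y →
      ∃ (V₀ : ModCat R), AddMem R V₀ V ∧
        ∃ q : V₀ →ₗ[R] Y, Surjective q ∧ T (LinearMap.ker q) := by
    intro Y _ _ hY
    obtain ⟨U₀, h0, q, hq, hk⟩ := hG Y hY.1
    obtain ⟨V₀, h0, hz, q, hq, hk⟩ := gen_cut hT hU hX Y hY U₀ h0 q hq hk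
    exact ⟨V₀, hAV _ h0 hz, q, hq, hk⟩
  have F2 : ∀ (Y : Type) [AddCommGroup Y] [Module R Y], cut T X Y → ∀ g : X →ₗ[R] Y,
      ∃ h : V' →ₗ[R] Y, ∀ x, h (u x) = g x := by
    intro Y _ _ hY g
    obtain ⟨V₀, h0, q, hq, hk⟩ := F1 Y hY
    obtain ⟨g', hg'⟩ := (hE.add hXU) q hq hk g
    obtain ⟨h, hh⟩ := hu V₀ h0 g'
    exact ⟨q ∘ₗ h, fun x => by simp [hh, hg']⟩
  obtain ⟨M, π, hπ, hπu, hπ0⟩ : ∃ (M : ModCat R) (π : V' →ₗ[R] M), Surjective π ∧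
      (∀ x, π (u x) = 0) ∧ (∀ v, π v = 0 → ∃ x, u x = v) :=
    ⟨.of R (V' ⧸ LinearMap.range u), (LinearMap.range u).mkQ, Submodule.mkQ_surjective _,
      fun x => (Submodule.Quotient.mk_eq_zero _).2 ⟨x, rfl⟩,
      fun v hv => (Submodule.Quotient.mk_eq_zero _).1 hv⟩
  have hMT : cut T X M := hT'.quot π hπ hV'T
  have hMfin := hT'.fin M hMT
  have Q : ∀ (Y : Type) [AddCommGroup Y] [Module R Y], cut T X Y → ∀ g : Y →ₗ[R] M,
      (∃ l : Y →ₗ[R] V', ∀ y, π (l y) = g y) ∨ (∃ s : M →ₗ[R] Y, ∀ m, g (s m) = m) := by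
    intro Y _ _ hY g
    let W : Submodule R (V' × Y) := LinearMap.ker (π ∘ₗ LinearMap.fst R V' Y - g ∘ₗ LinearMap.snd R V' Y)
    have hW : ∀ w : V' × Y, w ∈ W ↔ π w.1 = g w.2 := fun w => by simp [W, sub_eq_zero]
    let p1 : W →ₗ[R] V' := LinearMap.fst R V' Y ∘ₗ W.subtype
    let p2 : W →ₗ[R] Y := LinearMap.snd R V' Y ∘ₗ W.subtype
    have h12 : ∀ w, π (p1 w) = g (p2 w) := fun w => (hW w).1 w.2
    have hp2 : Surjective p2 := by
      intro y
      obtain ⟨v, hv⟩ := hπ (g y)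
      exact ⟨⟨(v, y), (hW _).2 hv⟩, rfl⟩
    let κ : X →ₗ[R] W := (LinearMap.inl R V' Y ∘ₗ u).codRestrict W (fun x => (hW _).2 (by simp [hπu]))
    have hκ : ∀ w, p2 w = 0 → ∃ x, κ x = w := by
      rintro ⟨⟨v, y⟩, hw⟩ (h0 : y = 0)
      subst h0
      obtain ⟨x, hx⟩ := hπ0 v (by simpa using (hW _).1 hw)
      exact ⟨x, by ext <;> simp [κ, hx]⟩
    have hκ2 : ∀ x, p2 (κ x) = 0 := fun x => rfl
    have hκ1 : ∀ x, p1 (κ x) = u x := fun x => rfl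
    have hWT : T W := by
      refine hT.ext p2 hp2 ?_ hY.1
      refine hT.quot (κ.codRestrict _ hκ2) ?_ hX.2.1
      rintro ⟨w, hw⟩
      obtain ⟨x, hx⟩ := hκ w hw
      exact ⟨x, Subtype.ext hx⟩
    clear_value κ p1 p2
    by_cases hz : ∀ r : W →ₗ[R] X, r = 0
    · right
      obtain ⟨w, hw⟩ := F2 W ⟨hWT, hz⟩ κ
      have hv := humin (p1 ∘ₗ w) (fun x => by simp [hw, hκ1])
      obtain ⟨h, hh⟩ := desc π hπ (p2 ∘ₗ w) (fun m hm => by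
        obtain ⟨x, rfl⟩ := hπ0 m hm
        simp [hw, hκ2])
      have hs : Surjective (g ∘ₗ h) := by
        intro m
        obtain ⟨v, rfl⟩ := hπ m
        obtain ⟨v', rfl⟩ := hv.2 v
        refine ⟨π v', ?_⟩
        simp only [LinearMap.comp_apply, hh]
        exact (h12 _).symm
      let e := LinearEquiv.ofBijective _ (bij_of_surj _ hs)
      exact ⟨h ∘ₗ e.symm.toLinearMap, fun m => e.apply_symm_apply m⟩
    · left
      push Not at hz
      obtain ⟨r, hr⟩ := hz
      have hrk : r ∘ₗ κ ≠ 0 := by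
        intro h0
        obtain ⟨t, ht⟩ := desc p2 hp2 r (fun w hw => by
          obtain ⟨x, rfl⟩ := hκ w hw
          exact LinearMap.congr_fun h0 x)
        apply hr; ext w; rw [← ht, hY.2 t]; rfl
      obtain ⟨s, hs⟩ := hX.2.2 X hX.2.1 _ hrk
      have hb := bij_of_surj (r ∘ₗ κ) (fun x => ⟨s x, hs x⟩)
      let e := LinearEquiv.ofBijective _ hb
      obtain ⟨l, hl⟩ := desc p2 hp2 (p1 - p1 ∘ₗ κ ∘ₗ e.symm.toLinearMap ∘ₗ r) (fun w hw => by
          obtain ⟨x, rfl⟩ := hκ w hw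
          have : e.symm (r (κ x)) = x := e.symm_apply_apply x
          simp [this])
      refine ⟨l, fun y => ?_⟩
      obtain ⟨w, rfl⟩ := hp2 y
      rw [hl]; simp [h12, hκ2]
  have E4 : EP (cut T X) M := by
    intro E B _ _ _ _ p hp hk g
    obtain ⟨h, hh⟩ := ((hE.add hVU).add hV') p hp hk.1 (g ∘ₗ π)
    obtain ⟨n, hn⟩ := F2 _ hk ((h ∘ₗ u).codRestrict _ (fun x => by simp [hh, hπu]))
    obtain ⟨l, hl⟩ := desc π hπ (h - (LinearMap.ker p).subtype ∘ₗ n) (fun v hv => by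
      obtain ⟨x, rfl⟩ := hπ0 v hv
      simp [hn])
    refine ⟨l, fun m => ?_⟩
    obtain ⟨v, rfl⟩ := hπ m
    rw [hl]
    have : p (n v) = 0 := (n v).2
    simp [hh, this]
  refine ⟨.of R (V × M), hT'.prod hVT hMT, ?_, ((hE.add hVU).mono fun _ _ _ h => h.1).prod E4, ?_⟩
  · intro Y _ _ hY
    obtain ⟨V₀, h0, q, hq, hk⟩ := F1 Y hY
    obtain ⟨κ, _, s, r, L', i, p, g1, g2, g3⟩ := split_off hT hX _ hk
    choose e he using fun j => hu V₀ h0 ((LinearMap.ker q).subtype ∘ₗ s j)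
    have hL' : cut T X L' := ⟨hT.quot p (fun y => ⟨i y, g2 y⟩) hk, g3⟩
    have hqs : ∀ j x, q (s j x) = 0 := fun j x => (s j x).2
    choose qb hqb using fun j => desc π hπ (q ∘ₗ e j) (fun v hv => by
      obtain ⟨x, rfl⟩ := hπ0 v hv
      simp [he, hqs])
    let ρ : (V₀ × (κ → M)) →ₗ[R] Y := q.coprod (∑ j, qb j ∘ₗ LinearMap.proj j)
    have hρ : ∀ v m, ρ (v, m) = q v + ∑ j, qb j (m j) := fun v m => by
      simp [ρ, LinearMap.sum_apply]
    refine ⟨.of R (V₀ × (κ → M)), ?_, ρ, ?_, ?_⟩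
    · refine (h0.trans (.of_retract (LinearMap.inl R V M) (LinearMap.fst R V M) ?_)).prod
        (.pi fun _ => .of_retract (LinearMap.inr R V M) (LinearMap.snd R V M) ?_)
      · ext; rfl
      · ext; rfl
    · intro y
      obtain ⟨v, rfl⟩ := hq y
      exact ⟨(v, 0), by rw [hρ]; simp⟩
    · let σ : (L' × (κ → V')) →ₗ[R] (V₀ × (κ → M)) :=
        LinearMap.prod (((LinearMap.ker q).subtype ∘ₗ i).coprod (-∑ j, e j ∘ₗ LinearMap.proj j))
          ((LinearMap.pi fun j => π ∘ₗ LinearMap.proj j) ∘ₗ LinearMap.snd R L' (κ → V'))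
      have hσ : ∀ l w, σ (l, w) = ((i l : V₀) - ∑ j, e j (w j), fun j => π (w j)) := fun l w => by
        apply Prod.ext
        · simp [σ, LinearMap.sum_apply, sub_eq_add_neg]
        · rfl
      refine hT'.quot (σ.codRestrict (LinearMap.ker ρ) ?_) ?_ (hT'.prod hL' (hT'.fun hV'T))
      · rintro ⟨l, w⟩
        have : q (i l) = 0 := (i l).2
        rw [hσ, LinearMap.mem_ker, hρ]
        simp [hqb, this]
      · rintro ⟨⟨v, m⟩, hvm⟩
        rw [LinearMap.mem_ker, hρ] at hvm
        choose w hw using fun j => hπ (m j)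
        have hl : v + ∑ j, e j (w j) ∈ LinearMap.ker q := by
          rw [LinearMap.mem_ker, map_add, map_sum, ← hvm]
          congr 1
          exact Finset.sum_congr rfl fun j _ => by rw [← hw j, hqb]; rfl
        have hg := congrArg (LinearMap.ker q).subtype (g1 ⟨_, hl⟩)
        rw [map_add, map_sum] at hg
        refine ⟨(p ⟨_, hl⟩, fun j => w j - u (r j ⟨_, hl⟩)), ?_⟩
        apply Subtype.ext
        refine (hσ _ _).trans ?_
        apply Prod.ext
        · simp only [map_sub, he, Finset.sum_sub_distrib]
          simp only [Submodule.subtype_apply, LinearMap.comp_apply] at hg ⊢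
          rw [sub_sub_eq_add_sub, add_comm, hg]; simp
        · ext j; simp [hπu, hw]
  · intro T'' hle hq Y _ _ hY g hg
    by_cases hV0 : ∃ Y : ModCat R, T'' Y ∧ ∃ g : Y →ₗ[R] V, g ≠ 0
    · right
      obtain ⟨Y, hY, g, hg⟩ := hV0
      refine ⟨Y, hY, ?_⟩
      by_contra hc; push Not at hc
      exact hg (hVU.hom_zero' hc g)
    · left
      push Not at hV0
      have hsec : ∀ (Y : Type) [AddCommGroup Y] [Module R Y], T'' Y → ∀ g : Y →ₗ[R] M, g ≠ 0 →
          ∃ s : M →ₗ[R] Y, ∀ m, g (s m) = m := by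
        intro Y _ _ hY g hg
        rcases Q Y (hle Y hY) g with ⟨l, hl⟩ | h
        · exfalso; apply hg
          have := hV'.hom_zero' (hV0 (.of R Y) hY) l
          ext y; rw [← hl, this]; simp
        · exact h
      let g2 : Y →ₗ[R] M := LinearMap.snd R V M ∘ₗ g
      have hg2 : g2 ≠ 0 := by
        intro h0; apply hg
        have h1 := hV0 (.of R Y) hY (LinearMap.fst R V M ∘ₗ g)
        apply LinearMap.ext; intro y
        exact Prod.ext (LinearMap.congr_fun h1 y) (LinearMap.congr_fun h0 y)
      obtain ⟨s, hs⟩ := hsec Y hY g2 hg2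
      refine ⟨.of R M, ?_, hq Y M g2 (fun m => ⟨s m, hs m⟩) hY, hsec⟩
      by_contra hn
      rw [not_nontrivial_iff_subsingleton] at hn
      exact hg2 (by ext y; exact hn.elim _ _)
end Step


/-- modules generated by `M` -/
def Fac (M : Type) [AddCommGroup M] [Module R M] : MP R := fun Y _ _ =>
  ∃ (ι : Type) (_ : Fintype ι) (t : (ι → M) →ₗ[R] Y), Surjective t

variable (R) in
def TR (M : Type) [AddCommGroup M] [Module R M] : Prop :=
  ∃ (P₁ P₀ : ModCat R) (f : P₁ →ₗ[R] P₀) (g : P₀ →ₗ[R] M),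
    Module.Projective R P₁ ∧ Module.Projective R P₀ ∧ Module.Finite R P₁ ∧ Module.Finite R P₀ ∧
    Surjective g ∧ Function.Exact f g ∧ ∀ h : P₁ →ₗ[R] M, ∃ k : P₀ →ₗ[R] M, ∀ x, k (f x) = h x

section Rig
variable {M N L V P Q : Type} [AddCommGroup M] [Module R M] [AddCommGroup N] [Module R N]
  [AddCommGroup L] [Module R L] [AddCommGroup V] [Module R V]
  [AddCommGroup P] [Module R P] [AddCommGroup Q] [Module R Q]

lemma proj_lift [Module.Projective R P] (p : M →ₗ[R] N) (hp : Surjective p) (g : P →ₗ[R] N) :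
    ∃ h : P →ₗ[R] M, ∀ x, p (h x) = g x := by
  obtain ⟨h, hh⟩ := Module.projective_lifting_property p g hp
  exact ⟨h, fun x => LinearMap.congr_fun hh x⟩

lemma Fac.of_surj (t : M →ₗ[R] N) (ht : Surjective t) : Fac (R := R) M N :=
  ⟨Unit, inferInstance, t ∘ₗ LinearMap.proj (), fun y => by
    obtain ⟨x, rfl⟩ := ht y; exact ⟨fun _ => x, rfl⟩⟩

lemma Fac.trans (h : Fac (R := R) M N) (h' : Fac (R := R) N L) : Fac (R := R) M L := by
  obtain ⟨ι, _, t, ht⟩ := h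
  obtain ⟨κ, _, s, hs⟩ := h'
  refine ⟨κ × ι, inferInstance, s ∘ₗ LinearMap.pi fun k => t ∘ₗ LinearMap.pi fun i => LinearMap.proj (k, i), ?_⟩
  intro y
  obtain ⟨n, rfl⟩ := hs y
  choose m hm using fun k => ht (n k)
  refine ⟨fun x => m x.1 x.2, ?_⟩
  simp only [LinearMap.comp_apply]
  congr 1
  ext k
  exact hm k

lemma Fac.quot (h : Fac (R := R) M N) (g : N →ₗ[R] L) (hg : Surjective g) : Fac (R := R) M L :=
  h.trans (.of_surj g hg)

lemma Fac.add (h : AddMem R N V) : Fac (R := R) V N := by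
  classical
  obtain ⟨ι, _, a, b, h⟩ := h
  refine ⟨ι, inferInstance, LinearMap.lsum R (fun _ : ι => V) ℕ b, fun n => ⟨fun i => a i n, ?_⟩⟩
  have := LinearMap.congr_fun h n
  simpa [LinearMap.sum_apply] using this

lemma TR.ep (h : TR R M) : EP (Fac (R := R) M) M := by
  obtain ⟨P₁, P₀, f, g, _, _, _, _, hg, hfg, hk⟩ := h
  intro E B _ _ _ _ p hp ⟨ι, _, t, ht⟩ φ
  obtain ⟨l, hl⟩ := proj_lift p hp (φ ∘ₗ g)
  obtain ⟨h', hh'⟩ := proj_lift t ht ((l ∘ₗ f).codRestrict (LinearMap.ker p) (fun x => by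
    have : g (f x) = 0 := (hfg _).2 ⟨x, rfl⟩
    simp [hl, this]))
  choose k hk using fun i => hk (LinearMap.proj i ∘ₗ h')
  obtain ⟨s, hs⟩ := desc g hg (l - (LinearMap.ker p).subtype ∘ₗ t ∘ₗ LinearMap.pi k) (fun x hx => by
    obtain ⟨y, rfl⟩ := (hfg _).1 hx
    have : LinearMap.pi k (f y) = h' y := by ext i; exact hk i y
    simp [this, hh'])
  refine ⟨s, fun m => ?_⟩
  obtain ⟨x, rfl⟩ := hg m
  rw [hs]
  have : p (t (LinearMap.pi k x)) = 0 := (t (LinearMap.pi k x)).2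
  simp [hl, this]

lemma ext_of_EP (f : P →ₗ[R] Q) (g : Q →ₗ[R] M) (hg : Surjective g) (hfg : Function.Exact f g)
    {T : MP R} (h : EP T M) (hT : ∀ {Y Z : Type} [AddCommGroup Y] [Module R Y] [AddCommGroup Z]
      [Module R Z] (g : Y →ₗ[R] Z), Surjective g → T Y → T Z) (hN : T N)
    (ψ : P →ₗ[R] N) (hψ : ∀ x, f x = 0 → ψ x = 0) : ∃ k : Q →ₗ[R] N, ∀ x, k (f x) = ψ x := by
  let G : Submodule R (Q × N) := LinearMap.range (f.prod (-ψ))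
  let p : ((Q × N) ⧸ G) →ₗ[R] M := G.liftQ (g ∘ₗ LinearMap.fst R Q N) (by
    rintro _ ⟨x, rfl⟩
    simpa using (hfg _).2 ⟨x, rfl⟩)
  have hp : Surjective p := fun m => by
    obtain ⟨x, rfl⟩ := hg m
    exact ⟨G.mkQ (x, 0), rfl⟩
  let j : N →ₗ[R] LinearMap.ker p := (G.mkQ ∘ₗ LinearMap.inr R Q N).codRestrict _ (fun n => by
    rw [LinearMap.mem_ker]; exact map_zero g)
  have hj0 : Injective j := by
    rw [injective_iff_map_eq_zero]
    intro n hn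
    have : (0, n) ∈ G := (Submodule.Quotient.mk_eq_zero _).1 (congrArg Subtype.val hn)
    obtain ⟨x, hx⟩ := this
    have h1 : f x = 0 := congrArg Prod.fst hx
    have h2 : -ψ x = n := congrArg Prod.snd hx
    rw [← h2, hψ x h1, neg_zero]
  have hj1 : Surjective j := by
    rintro ⟨e, he⟩
    obtain ⟨⟨x, n⟩, rfl⟩ := G.mkQ_surjective e
    have : g x = 0 := he
    obtain ⟨y, rfl⟩ := (hfg _).1 this
    refine ⟨n + ψ y, Subtype.ext ?_⟩
    refine (Submodule.Quotient.eq _).2 ⟨-y, ?_⟩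
    apply Prod.ext <;> simp
  obtain ⟨s, hs⟩ := h p hp (hT j hj1 hN) LinearMap.id
  let e := LinearEquiv.ofBijective j ⟨hj0, hj1⟩
  let d : Q →ₗ[R] LinearMap.ker p := (G.mkQ ∘ₗ LinearMap.inl R Q N - s ∘ₗ g).codRestrict _ (fun x => by
    rw [LinearMap.mem_ker, LinearMap.sub_apply, map_sub, LinearMap.comp_apply, LinearMap.comp_apply, hs]
    exact sub_self _)
  refine ⟨e.symm.toLinearMap ∘ₗ d, fun x => ?_⟩
  have : d (f x) = e (ψ x) := by
    apply Subtype.ext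
    have h0 : g (f x) = 0 := (hfg _).2 ⟨x, rfl⟩
    change G.mkQ (f x, 0) - s (g (f x)) = G.mkQ (0, ψ x)
    rw [h0, map_zero, sub_zero]
    refine (Submodule.Quotient.eq _).2 ⟨x, ?_⟩
    apply Prod.ext <;> simp
  simp [this]

variable [IsArtinianRing R]

/-- Lemma L -/
lemma ext_of_EP' [Module.Finite R N] [Module.Projective R Q] (f : P →ₗ[R] Q) (g : Q →ₗ[R] M)
    (hg : Surjective g) (hfg : Function.Exact f g)
    (hsup : ∀ L : Submodule R P, L ⊔ LinearMap.ker f = ⊤ → L = ⊤)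
    (h : EP (Fac (R := R) N) M)
    (φ : P →ₗ[R] N) : ∃ k : Q →ₗ[R] N, ∀ x, k (f x) = φ x := by
  induction hn : len R (LinearMap.range φ) using Nat.strong_induction_on generalizing φ with
  | _ n ih =>
  subst hn
  let D := (LinearMap.ker f).map φ
  have hD : D ≤ LinearMap.range φ := LinearMap.map_le_range
  obtain ⟨k', hk'⟩ := ext_of_EP f g hg hfg h (fun g hg h => h.quot g hg)
    (Fac.of_surj D.mkQ D.mkQ_surjective) (D.mkQ ∘ₗ φ)
    (fun x hx => (Submodule.Quotient.mk_eq_zero _).2 ⟨x, hx, rfl⟩)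
  obtain ⟨k, hk⟩ := proj_lift D.mkQ D.mkQ_surjective k'
  by_cases hDr : D = LinearMap.range φ
  · have : LinearMap.ker φ = ⊤ := by
      apply hsup
      rw [eq_top_iff]
      intro x _
      have : φ x ∈ D := hDr ▸ ⟨x, rfl⟩
      obtain ⟨y, hy, hyx⟩ := this
      rw [show x = (x - y) + y by abel]
      exact Submodule.add_mem_sup (by simp [hyx]) hy
    exact ⟨0, fun x => by rw [LinearMap.ker_eq_top.1 this]; rfl⟩
  · let φ' := φ - k ∘ₗ f
    have hr : LinearMap.range φ' ≤ D := by
      rintro _ ⟨x, rfl⟩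
      rw [← Submodule.ker_mkQ D, LinearMap.mem_ker]
      simp only [φ', LinearMap.sub_apply, map_sub, LinearMap.comp_apply, hk, hk', sub_self]
    have hlt : len R (LinearMap.range φ') < len R (LinearMap.range φ) := by
      refine len_lt_of_inj (Submodule.inclusion (hr.trans hD)) (Submodule.inclusion_injective _) ?_
      intro hs
      apply hDr
      apply le_antisymm hD
      intro y hy
      obtain ⟨z, hz⟩ := hs ⟨y, hy⟩
      have : (z : N) = y := congrArg Subtype.val hz
      exact this ▸ hr z.2
    obtain ⟨k₂, hk₂⟩ := ih _ hlt φ' rfl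
    exact ⟨k + k₂, fun x => by simp [hk₂, φ']⟩

variable (R M) in
lemma exists_min_pres [Module.Finite R M] : ∃ (P₁ P₀ : ModCat R) (f : P₁ →ₗ[R] P₀) (g : P₀ →ₗ[R] M),
    Module.Projective R P₁ ∧ Module.Projective R P₀ ∧ Module.Finite R P₁ ∧ Module.Finite R P₀ ∧
    Surjective g ∧ Function.Exact f g ∧
    ∀ L : Submodule R P₁, L ⊔ LinearMap.ker f = ⊤ → L = ⊤ := by
  obtain ⟨n, g, hg⟩ := Module.Finite.exists_fin' R M
  let Ω := LinearMap.ker g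
  have hex : ∃ n, ∃ P₁ : ModCat R, (Module.Projective R P₁ ∧ Module.Finite R P₁ ∧
      ∃ f : P₁ →ₗ[R] Ω, Surjective f) ∧ len R P₁ = n := by
    obtain ⟨n, g, hg⟩ := Module.Finite.exists_fin' R Ω
    exact ⟨_, .of R (Fin n → R), ⟨inferInstance, inferInstance, g, hg⟩, rfl⟩
  classical
  obtain ⟨P₁, ⟨hP, hPf, f, hf⟩, hlen⟩ := Nat.find_spec hex
  have hmin := fun m hm => Nat.find_min hex (m := m) hm
  refine ⟨P₁, .of R (Fin n → R), Ω.subtype ∘ₗ f, g, hP, inferInstance, hPf, inferInstance, hg, ?_, ?_⟩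
  · intro x
    constructor
    · intro hx
      obtain ⟨y, hy⟩ := hf ⟨x, hx⟩
      exact ⟨y, congrArg Subtype.val hy⟩
    · rintro ⟨y, rfl⟩; exact (f y).2
  · intro L hL
    have hfL : Surjective (f ∘ₗ L.subtype) := by
      intro y
      obtain ⟨x, rfl⟩ := hf y
      have : x ∈ L ⊔ LinearMap.ker (Ω.subtype ∘ₗ f) := hL ▸ Submodule.mem_top
      obtain ⟨l, hl, z, hz, rfl⟩ := Submodule.mem_sup.1 this
      have : f z = 0 := Subtype.ext hz
      exact ⟨⟨l, hl⟩, by simp [this]⟩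
    obtain ⟨s, hs⟩ := proj_lift _ hfL f
    let v : P₁ →ₗ[R] P₁ := L.subtype ∘ₗ s
    have hv : ∀ x, f (v x) = f x := hs
    obtain ⟨n, hn⟩ := Filter.eventually_atTop.1 (LinearMap.eventually_isCompl_ker_pow_range_pow v)
    have hc := (hn (n+1) (by omega)).symm
    have hvn : ∀ m x, f ((v ^ m) x) = f x := by
      intro m
      induction m with
      | zero => intro x; rfl
      | succ m ih => intro x; rw [pow_succ]; simp [hv, ih]
    have htop : LinearMap.range (v ^ (n+1)) = ⊤ := by
      by_contra hne
      have hlt := len_sub_lt hne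
      rw [hlen] at hlt
      refine hmin _ hlt ⟨.of R (LinearMap.range (v ^ (n+1))), ⟨?_, inferInstance, ?_⟩, rfl⟩
      · exact Module.Projective.of_split (LinearMap.range (v ^ (n+1))).subtype
          (Submodule.projectionOnto _ _ hc) (Submodule.projectionOnto_comp_subtype hc)
      · refine ⟨f ∘ₗ (LinearMap.range (v ^ (n+1))).subtype, fun y => ?_⟩
        obtain ⟨x, rfl⟩ := hf y
        exact ⟨⟨_, x, rfl⟩, hvn (n+1) x⟩
    rw [eq_top_iff]
    intro x _
    obtain ⟨y, rfl⟩ := LinearMap.range_eq_top.1 htop x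
    rw [pow_succ']; exact (s ((v^n) y)).2

lemma TR.of_ep [Module.Finite R M] (h : EP (Fac (R := R) M) M) : TR R M := by
  obtain ⟨P₁, P₀, f, g, h1, h2, h3, h4, hg, hfg, hs⟩ := exists_min_pres R M
  exact ⟨P₁, P₀, f, g, h1, h2, h3, h4, hg, hfg, ext_of_EP' f g hg hfg hs h⟩

lemma TR.add [Module.Finite R V] (h : TR R V) (ha : AddMem R N V) : TR R N := by
  have := ha.finite
  refine TR.of_ep ((h.ep.add ha).mono fun Y _ _ hY => ?_)
  exact (Fac.add ha).trans hY

/-! translation to the categorical definitions -/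

lemma isFG_iff (M : ModCat R) : IsFGMod M ↔ Module.Finite R M := Iff.rfl

lemma proj_iff (P : ModCat R) : Projective P ↔ Module.Projective R P :=
  (IsProjective.iff_projective (R := R) P).symm

lemma tr_iff (M : ModCat R) : IsTauRigidMod M ↔ TR R M := by
  constructor
  · rintro ⟨P₁, P₀, f, g, h1, h2, h3, h4, hg, hfg, hk⟩
    refine ⟨P₁, P₀, f.hom, g.hom, (proj_iff _).1 h1, (proj_iff _).1 h2, h3, h4, hg, hfg, fun h => ?_⟩
    obtain ⟨k, hk⟩ := hk (ModuleCat.ofHom h)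
    exact ⟨k.hom, fun x => by
      have := congrArg (fun t => t.hom x) hk
      simpa using this⟩
  · rintro ⟨P₁, P₀, f, g, h1, h2, h3, h4, hg, hfg, hk⟩
    refine ⟨P₁, P₀, ModuleCat.ofHom f, ModuleCat.ofHom g, (proj_iff _).2 h1, (proj_iff _).2 h2, h3, h4,
      hg, hfg, fun h => ?_⟩
    obtain ⟨k, hk⟩ := hk h.hom
    exact ⟨ModuleCat.ofHom k, by ext x; exact hk x⟩

def biprodEquiv (M N : ModCat R) : ↑(M ⊞ N : ModCat R) ≃ₗ[R] (M × N) :=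
  (ModuleCat.biprodIsoProd M N).toLinearEquiv

lemma isZero_iff (M : ModCat R) : IsZero M ↔ Subsingleton M :=
  ⟨fun h => ModuleCat.subsingleton_of_isZero h, fun h => ModuleCat.isZero_of_subsingleton M⟩

lemma iso_iff (M N : ModCat R) : Nonempty (M ≅ N) ↔ Nonempty (M ≃ₗ[R] N) :=
  ⟨fun ⟨e⟩ => ⟨e.toLinearEquiv⟩, fun ⟨e⟩ => ⟨e.toModuleIso⟩⟩

lemma indec_iff (M : ModCat R) : IsIndecMod M ↔ Indec R M := by
  rw [IsIndecMod, isZero_iff, not_subsingleton_iff_nontrivial, Indec]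
  refine and_congr Iff.rfl ⟨fun h e he => ?_, fun h A B hi => ?_⟩
  · have he' : ∀ x, e (e x) = e x := fun x => LinearMap.congr_fun he x
    have hc : IsCompl (LinearMap.range e) (LinearMap.ker e) := LinearMap.IsIdempotentElem.isCompl he
    have e1 := (Submodule.prodEquivOfIsCompl _ _ hc).symm
    have := h (.of R (LinearMap.range e)) (.of R (LinearMap.ker e))
      ((iso_iff _ _).2 ⟨e1.trans (biprodEquiv (.of R (LinearMap.range e)) (.of R (LinearMap.ker e))).symm⟩)
    simp only [isZero_iff] at this
    rcases this with h1 | h1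
    · left; exact LinearMap.range_eq_bot.1 ((Submodule.subsingleton_iff_eq_bot).1 h1)
    · right; ext x
      have h2 : e x - x ∈ LinearMap.ker e := by simp [he']
      rw [(Submodule.subsingleton_iff_eq_bot).1 h1] at h2
      exact sub_eq_zero.1 h2
  · rw [iso_iff] at hi
    obtain ⟨i⟩ := hi
    have i := i.trans (biprodEquiv A B)
    rw [isZero_iff, isZero_iff]
    let e := i.symm.toLinearMap ∘ₗ LinearMap.inl R A B ∘ₗ LinearMap.fst R A B ∘ₗ i.toLinearMap
    rcases h e (by ext x; simp [e]) with h1 | h1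
    · left
      refine subsingleton_of_forall_eq 0 fun a => ?_
      have := congrArg (fun z => (i z).1) (LinearMap.congr_fun h1 (i.symm (a, 0)))
      simpa [e] using this
    · right
      refine subsingleton_of_forall_eq 0 fun a => ?_
      have := congrArg (fun z => (i z).2) (LinearMap.congr_fun h1 (i.symm (0, a)))
      simpa [e] using this.symm

lemma addMem_iff (N M : ModCat R) : MemAddMod N M ↔ AddMem R N M := by
  classical
  constructor
  · rintro ⟨k, g, h, hgh⟩
    let e := (ModuleCat.biproductIsoPi (fun _ : Fin k => M)).toLinearEquiv
    have h2 : AddMem R (Fin k → M) M := .pi fun _ => .refl R M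
    refine AddMem.trans (.of_retract (e.toLinearMap ∘ₗ g.hom) (h.hom ∘ₗ e.symm.toLinearMap) ?_) h2
    ext x
    have := congrArg (fun t => t.hom x) hgh
    simpa using this
  · rintro ⟨ι, _, a, b, hab⟩
    let σ := (Fintype.equivFin ι).symm
    let e := ModuleCat.biproductIsoPi (fun _ : Fin (Fintype.card ι) => M)
    refine ⟨Fintype.card ι,
      ModuleCat.ofHom (LinearMap.pi fun i => a (σ i)) ≫ e.inv,
      e.hom ≫ ModuleCat.ofHom (LinearMap.lsum R (fun _ : Fin (Fintype.card ι) => (M : Type)) ℕ fun i => b (σ i)), ?_⟩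
    rw [Category.assoc, e.inv_hom_id_assoc]
    ext x
    have := LinearMap.congr_fun hab x
    rw [LinearMap.sum_apply, ← Equiv.sum_comp σ] at this
    simpa [LinearMap.sum_apply] using this

end Rig


section FT
variable {M N L V P Q : Type} [AddCommGroup M] [Module R M] [AddCommGroup N] [Module R N]
  [AddCommGroup L] [Module R L] [AddCommGroup V] [Module R V]
  [AddCommGroup P] [Module R P] [AddCommGroup Q] [Module R Q]

lemma AddMem.of_decomp {ι : Type} [Fintype ι] (s : ι → Sm R M)
    (hs : ∀ x, ∑ i, (s i).b ((s i).a x) = x) (h : ∀ i, AddMem R (s i).W V) : AddMem R M V := by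
  classical
  refine AddMem.trans (N := ∀ i, (s i).W) (.of_retract (LinearMap.pi fun i => (s i).a)
    (LinearMap.lsum R (fun i => ((s i).W : Type)) ℕ fun i => (s i).b) ?_) (.pi h)
  ext x
  simpa [LinearMap.sum_apply] using hs x

lemma AddMem.of_proj [Module.Projective R P] [Module.Finite R P] : AddMem R P R := by
  obtain ⟨n, g, hg⟩ := Module.Finite.exists_fin' R P
  obtain ⟨h, hh⟩ := proj_lift g hg LinearMap.id
  exact AddMem.trans (.of_retract h g (by ext x; exact hh x)) (.pi fun _ => .refl R R)

lemma proj_pi {ι : Type} [Fintype ι] {W : ι → Type} [∀ i, AddCommGroup (W i)]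
    [∀ i, Module R (W i)] (h : ∀ i, Module.Projective R (W i)) : Module.Projective R (∀ i, W i) := by
  classical
  refine Module.Projective.of_lifting_property'' fun t ht => ?_
  choose l hl using fun j => proj_lift t ht (LinearMap.single R W j)
  refine ⟨LinearMap.lsum R W ℕ l, LinearMap.pi_ext' fun j => LinearMap.ext fun x => ?_⟩
  change t (LinearMap.lsum R W ℕ l (Pi.single j x)) = Pi.single j x
  rw [LinearMap.lsum_piSingle, hl]
  rfl

lemma Sm.iso_of [IsArtinianRing R] [Module.Finite R V] {ι : Type} [Fintype ι] (s : ι → Sm R V)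
    (hs : ∀ x, ∑ i, (s i).b ((s i).a x) = x) (hi : Indec R P) (h : AddMem R P V) :
    ∃ i, Nonempty ((s i).W ≃ₗ[R] P) := by
  have := h.finite
  obtain ⟨a, b, hab⟩ := h.retract hi
  obtain ⟨i, -, hb⟩ := hi.exists_bij Finset.univ (fun i => (b ∘ₗ (s i).b) ∘ₗ ((s i).a ∘ₗ a)) (by
    have : (∑ i, (b ∘ₗ (s i).b) ∘ₗ ((s i).a ∘ₗ a)) = LinearMap.id := by
      ext x
      have := congrArg b (hs (a x))
      rw [map_sum] at this
      rw [LinearMap.sum_apply]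
      exact this.trans (LinearMap.congr_fun hab x)
    rw [this]; exact bijective_id)
  have := hi.1
  refine ⟨i, ⟨(LinearEquiv.ofBijective _ ((s i).ind.bij_of_retract ((s i).a ∘ₗ a)
    ((LinearEquiv.ofBijective _ hb).symm.toLinearMap ∘ₗ (b ∘ₗ (s i).b)) ?_).1).symm⟩⟩
  ext x
  exact (LinearEquiv.ofBijective _ hb).symm_apply_apply x

lemma EP_of_pres [Module.Projective R Q] (f : P →ₗ[R] Q) (g : Q →ₗ[R] M) (hg : Surjective g)
    (hfg : Function.Exact f g) {T : MP R} (hT : ∀ (Y : Type) [AddCommGroup Y] [Module R Y], T Y →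
      ∀ φ : P →ₗ[R] Y, ∃ k : Q →ₗ[R] Y, ∀ x, k (f x) = φ x) : EP T M := by
  intro E B _ _ _ _ p hp hk φ
  obtain ⟨l, hl⟩ := proj_lift p hp (φ ∘ₗ g)
  obtain ⟨k, hk⟩ := hT _ hk ((l ∘ₗ f).codRestrict (LinearMap.ker p) (fun x => by
    have : g (f x) = 0 := (hfg _).2 ⟨x, rfl⟩
    simp [hl, this]))
  obtain ⟨s, hs⟩ := desc g hg (l - (LinearMap.ker p).subtype ∘ₗ k) (fun x hx => by
    obtain ⟨y, rfl⟩ := (hfg _).1 hx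
    simp [hk])
  refine ⟨s, fun m => ?_⟩
  obtain ⟨x, rfl⟩ := hg m
  rw [hs]
  have : p (k x) = 0 := (k x).2
  simp [hl, this]

/-- the Bongartz-type completion -/
lemma bongartz (K : Type) [Field K] [Algebra K R] [FiniteDimensional K R] [IsArtinianRing R]
    [Module.Finite R M] (h : TR R M) : ∃ T : ModCat R, Module.Finite R T ∧ AddMem R M T ∧ TR R T ∧
    ∀ (N : Type) [AddCommGroup N] [Module R N], TR R (T × N) → Module.Finite R N → AddMem R N T := by
  classical
  obtain ⟨P₁, P₀, f, g, h1, h2, h3, h4, hg, hfg, hsup⟩ := exists_min_pres R M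
  let T' : MP R := fun Y _ _ => Module.Finite R Y ∧
    ∀ φ : P₁ →ₗ[R] Y, ∃ k : P₀ →ₗ[R] Y, ∀ x, k (f x) = φ x
  have hM : ∀ φ : P₁ →ₗ[R] M, ∃ k : P₀ →ₗ[R] M, ∀ x, k (f x) = φ x :=
    ext_of_EP' f g hg hfg hsup h.ep
  have hrig : ∀ φ : P₁ →ₗ[R] P₀, ∃ (α : P₀ →ₗ[R] P₀) (β : P₁ →ₗ[R] P₁),
      ∀ x, φ x = α (f x) + f (β x) := by
    intro φ
    obtain ⟨k, hk⟩ := hM (g ∘ₗ φ)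
    obtain ⟨α, hα⟩ := proj_lift g hg k
    obtain ⟨β, hβ⟩ := proj_lift f.rangeRestrict f.surjective_rangeRestrict
      ((φ - α ∘ₗ f).codRestrict (LinearMap.range f) (fun x => (hfg _).1 (by
        have := hk x
        simp only [LinearMap.comp_apply] at this
        simp [hα, this])))
    refine ⟨α, β, fun x => ?_⟩
    have := congrArg Subtype.val (hβ x)
    have h' : f (β x) = φ x - α (f x) := this
    rw [h']; abel
  obtain ⟨k, b, hb, -⟩ := hom_basis (R := R) P₁ R K
  let Φ : (Fin k → P₁) →ₗ[R] ((Fin k → P₀) × R) :=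
    (LinearMap.pi fun i => f ∘ₗ LinearMap.proj i).prod (∑ i, b i ∘ₗ LinearMap.proj i)
  have hΦ : ∀ v, Φ v = (fun i => f (v i), ∑ i, b i (v i)) := fun v => by
    apply Prod.ext
    · rfl
    · change (∑ i, b i ∘ₗ LinearMap.proj i) v = _
      rw [LinearMap.sum_apply]; rfl
  let E := ((Fin k → P₀) × R) ⧸ LinearMap.range Φ
  let π : ((Fin k → P₀) × R) →ₗ[R] E := (LinearMap.range Φ).mkQ
  have hπ : Surjective π := Submodule.mkQ_surjective _
  have hex : Function.Exact Φ π := LinearMap.exact_map_mkQ_range Φ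
  have hrel : ∀ i x, π (Pi.single i (f x), 0) = - π (0, b i x) := by
    intro i x
    have := (hex _).2 ⟨Pi.single i x, rfl⟩
    rw [hΦ, show ((fun j => f (Pi.single (M := fun _ => (P₁ : Type)) i x j), ∑ j, b j (Pi.single (M := fun _ => (P₁ : Type)) i x j)) : (Fin k → P₀) × R)
      = (Pi.single i (f x), 0) + (0, b i x) from ?_, map_add] at this
    · exact eq_neg_of_add_eq_zero_left this
    · apply Prod.ext
      · simp only [Prod.fst_add, add_zero]
        ext j
        exact (Pi.apply_single (fun _ => f) (fun _ => map_zero f) i x j)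
      · simp only [Prod.snd_add, zero_add]
        rw [Finset.sum_eq_single i]
        · simp
        · intro j _ hj; simp [Pi.single_eq_of_ne hj]
        · simp
  -- extension of maps into E
  have hER : ∀ ψ : P₁ →ₗ[R] R, ∃ κ : P₀ →ₗ[R] E, ∀ x, κ (f x) = π (0, ψ x) := by
    intro ψ
    obtain ⟨c, hc⟩ := hb ψ
    refine ⟨- ∑ i, scal R E K (c i) ∘ₗ π ∘ₗ LinearMap.inl R _ _ ∘ₗ LinearMap.single R (fun _ => (P₀ : Type)) i, fun x => ?_⟩
    rw [hc, LinearMap.neg_apply, LinearMap.sum_apply]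
    have : π (0, ∑ i, scal R R K (c i) (b i x)) = ∑ i, scal R E K (c i) (π (0, b i x)) := by
      refine (map_sum (π ∘ₗ LinearMap.inr R (Fin k → P₀) R)
        (fun i => scal R R K (c i) (b i x)) Finset.univ).trans ?_
      refine Finset.sum_congr rfl fun i _ => ?_
      exact map_scal (π ∘ₗ LinearMap.inr R (Fin k → P₀) R) (c i) (b i x)
    rw [this, ← Finset.sum_neg_distrib]
    refine Finset.sum_congr rfl fun i _ => ?_
    change - scal R E K (c i) (π (Pi.single i (f x), 0)) = _
    rw [hrel, map_neg, neg_neg]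
  have hE : T' E := by
    refine ⟨inferInstance, fun φ => ?_⟩
    obtain ⟨l, hl⟩ := proj_lift π hπ φ
    have h0 : ∀ i, ∃ κ : P₀ →ₗ[R] E, ∀ x, κ (f x) = π (Pi.single i ((l x).1 i), 0) := by
      intro i
      obtain ⟨α, β, hαβ⟩ := hrig (LinearMap.proj i ∘ₗ LinearMap.fst R _ _ ∘ₗ l)
      obtain ⟨κ, hκ⟩ := hER (b i ∘ₗ β)
      refine ⟨π ∘ₗ LinearMap.inl R _ _ ∘ₗ LinearMap.single R (fun _ => (P₀ : Type)) i ∘ₗ α - κ, fun x => ?_⟩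
      have h5 : (l x).1 i = α (f x) + f (β x) := hαβ x
      have h6 := hrel i (β x)
      rw [h5, LinearMap.sub_apply, hκ, sub_eq_add_neg]
      change π (Pi.single i (α (f x)), 0) + - π (0, b i (β x)) = _
      rw [← h6, ← map_add, Prod.mk_add_mk, ← Pi.single_add, add_zero]
    choose κ hκ using h0
    obtain ⟨κ', hκ'⟩ := hER (LinearMap.snd R _ _ ∘ₗ l)
    refine ⟨∑ i, κ i + κ', fun x => ?_⟩
    rw [LinearMap.add_apply, LinearMap.sum_apply, hκ', ← hl]
    simp_rw [hκ]
    rw [← map_sum, ← map_add]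
    congr 1
    apply Prod.ext
    · rw [Prod.fst_add, Prod.fst_sum]
      simp only [add_zero]
      exact Finset.univ_sum_single _
    · rw [Prod.snd_add, Prod.snd_sum]
      simp
  have hgen : ∀ (Y : Type) [AddCommGroup Y] [Module R Y], T' Y → Fac (R := R) E Y := by
    intro Y _ _ ⟨hY, hY'⟩
    have hψ : ∀ ψ : R →ₗ[R] Y, ∃ s : E →ₗ[R] Y, ∀ r, s (π (0, r)) = ψ r := by
      intro ψ
      choose κ hκ using fun i => hY' (ψ ∘ₗ b i)
      obtain ⟨s, hs⟩ := desc π hπ (ψ ∘ₗ LinearMap.snd R _ _ -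
        (∑ i, κ i ∘ₗ LinearMap.proj i) ∘ₗ LinearMap.fst R _ _) (fun m hm => by
          obtain ⟨v, rfl⟩ := (hex _).1 hm
          rw [hΦ]
          simp only [LinearMap.sub_apply, LinearMap.comp_apply, LinearMap.snd_apply, LinearMap.fst_apply,
            LinearMap.sum_apply, LinearMap.proj_apply, map_sum, hκ, sub_self])
      refine ⟨s, fun r => ?_⟩
      rw [hs]; simp
    obtain ⟨n, t, ht⟩ := Module.Finite.exists_fin' R Y
    choose s hs using fun i => hψ (t ∘ₗ LinearMap.single R (fun _ => R) i)
    refine ⟨Fin n, inferInstance, LinearMap.lsum R (fun _ => E) ℕ s, fun y => ?_⟩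
    obtain ⟨v, rfl⟩ := ht y
    refine ⟨fun i => π (0, v i), ?_⟩
    rw [LinearMap.lsum_apply, LinearMap.sum_apply]
    simp only [LinearMap.comp_apply, LinearMap.proj_apply, hs]
    rw [← map_sum]
    congr 1
    exact Finset.univ_sum_single v
  have hM' : T' M := ⟨inferInstance, hM⟩
  have hT : Tors T' := by
    refine ⟨fun Y _ _ h => h.1, ?_, ?_⟩
    · intro Y Z _ _ _ _ t ht ⟨hY, hY'⟩
      refine ⟨Module.Finite.of_surjective t ht, fun φ => ?_⟩
      obtain ⟨l, hl⟩ := proj_lift t ht φ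
      obtain ⟨κ, hκ⟩ := hY' l
      exact ⟨t ∘ₗ κ, fun x => by simp [hκ, hl]⟩
    · intro Y Z _ _ _ _ t ht ⟨hY, hY'⟩ ⟨hZ, hZ'⟩
      refine ⟨?_, fun φ => ?_⟩
      · have := Module.Finite.equiv (t.quotKerEquivOfSurjective ht).symm
        exact Module.Finite.of_submodule_quotient (LinearMap.ker t)
      · obtain ⟨κ', hκ'⟩ := hZ' (t ∘ₗ φ)
        obtain ⟨κ, hκ⟩ := proj_lift t ht κ'
        obtain ⟨μ, hμ⟩ := hY' ((φ - κ ∘ₗ f).codRestrict (LinearMap.ker t) (fun x => by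
          have := hκ' x
          simp only [LinearMap.comp_apply] at this
          simp [hκ, this]))
        refine ⟨κ + (LinearMap.ker t).subtype ∘ₗ μ, fun x => ?_⟩
        simp [hμ]
  have hEM : EP T' M := EP_of_pres f g hg hfg fun Y _ _ hY => hY.2
  have hpp : Module.Projective R ((Fin k → P₀) × R) := 
    have : Module.Projective R (Fin k → P₀) := proj_pi fun _ => h2
    inferInstance
  have hEE : EP T' E := EP_of_pres Φ π hπ hex fun Y _ _ hY φ => by
    choose κ hκ using fun i => hY.2 (φ ∘ₗ LinearMap.single R (fun _ => (P₁ : Type)) i)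
    refine ⟨(∑ i, κ i ∘ₗ LinearMap.proj i) ∘ₗ LinearMap.fst R _ _, fun v => ?_⟩
    rw [hΦ]
    simp only [LinearMap.comp_apply, LinearMap.fst_apply, LinearMap.sum_apply, LinearMap.proj_apply, hκ]
    rw [← map_sum]
    congr 1
    exact Finset.univ_sum_single v
  have hT0 : T' (M × E) := hT.prod hM' hE
  refine ⟨.of R (M × E), inferInstanceAs (Module.Finite R (M × E)),
    .of_retract (LinearMap.inl R M E) (LinearMap.fst R M E) rfl, ?_, ?_⟩
  · change TR R (M × E)
    refine TR.of_ep ((hEM.prod hEE).mono fun Y _ _ hY => ?_)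
    obtain ⟨ι, _, t, ht⟩ := hY
    exact hT.quot t ht (hT.fun hT0)
  · intro N _ _ hTN hN
    change TR R ((M × E) × N) at hTN
    change AddMem R N (M × E)
    have hep := hTN.ep
    have hadM : AddMem R M ((M × E) × N) := .of_retract (LinearMap.inl R _ _ ∘ₗ LinearMap.inl R M E)
      (LinearMap.fst R M E ∘ₗ LinearMap.fst R _ _) rfl
    have hadN : AddMem R N ((M × E) × N) := .of_retract (LinearMap.inr R _ _) (LinearMap.snd R _ _) rfl
    have hadE : AddMem R E ((M × E) × N) := .of_retract (LinearMap.inl R _ _ ∘ₗ LinearMap.inr R M E)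
      (LinearMap.snd R M E ∘ₗ LinearMap.fst R _ _) rfl
    have hNT : T' N := ⟨hN, ext_of_EP' f g hg hfg hsup ((hep.add hadM).mono fun Y _ _ hY =>
      (Fac.add hadN).trans hY)⟩
    obtain ⟨n, q, hq, -⟩ := hom_basis (R := R) (M × E) N K
    let Qm : (Fin n → M × E) →ₗ[R] N := ∑ i, q i ∘ₗ LinearMap.proj i
    have hlift : ∀ t : (M × E) →ₗ[R] N, ∃ s : (M × E) →ₗ[R] (Fin n → M × E), ∀ x, Qm (s x) = t x := by
      intro t
      obtain ⟨c, hc⟩ := hq t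
      refine ⟨LinearMap.pi fun i => scal R (M × E) K (c i), fun x => ?_⟩
      rw [hc, LinearMap.sum_apply]
      refine Finset.sum_congr rfl fun i _ => ?_
      exact map_scal (q i) (c i) x
    have hQs : Surjective Qm := by
      obtain ⟨ι, _, t, ht⟩ := hgen N hNT
      intro y
      obtain ⟨v, rfl⟩ := ht y
      have : ∀ i, t (Pi.single i (v i)) ∈ LinearMap.range Qm := by
        intro i
        obtain ⟨s, hs⟩ := hlift (t ∘ₗ LinearMap.single R (fun _ => E) i ∘ₗ LinearMap.snd R M E)
        exact ⟨s (0, v i), hs (0, v i)⟩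
      have h9 := Submodule.sum_mem _ (fun i (_ : i ∈ Finset.univ) => this i)
      rw [← map_sum, Finset.univ_sum_single] at h9
      exact h9
    have hker : T' (LinearMap.ker Qm) := by
      refine ⟨inferInstance, fun φ => ?_⟩
      obtain ⟨κ, hκ⟩ := (hT.fun (ι := Fin n) hT0).2 ((LinearMap.ker Qm).subtype ∘ₗ φ)
      obtain ⟨s, hs⟩ := desc g hg (Qm ∘ₗ κ) (fun x hx => by
        obtain ⟨y, rfl⟩ := (hfg _).1 hx
        rw [LinearMap.comp_apply, hκ]; exact (φ y).2)
      obtain ⟨s', hs'⟩ := hlift (s ∘ₗ LinearMap.fst R M E)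
      refine ⟨(κ - s' ∘ₗ LinearMap.inl R M E ∘ₗ g).codRestrict _ (fun x => ?_), fun x => Subtype.ext ?_⟩
      · rw [LinearMap.mem_ker, LinearMap.sub_apply, map_sub]
        simp only [LinearMap.comp_apply, hs', LinearMap.inl_apply, LinearMap.fst_apply, hs, sub_self]
      · have : g (f x) = 0 := (hfg _).2 ⟨x, rfl⟩
        change κ (f x) - s' (LinearMap.inl R M E (g (f x))) = _
        rw [this, map_zero, map_zero, sub_zero, hκ]; rfl
    obtain ⟨s, hs⟩ := hep.add hadN Qm hQs ((Fac.add hadE).trans (hgen _ hker)) LinearMap.id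
    exact AddMem.trans (.of_retract s Qm (by ext x; exact hs x)) (.pi fun _ => .refl R _)

/-- τ-tilting finite implies finitely many indecomposable τ-rigid modules -/
theorem ft (K : Type) [Field K] [Algebra K R] [FiniteDimensional K R] [IsArtinianRing R]
    (h : IsTauTiltingFiniteRing R) : ∃ (ι : Type) (_ : Fintype ι) (F : ι → ModCat R),
    ∀ (M : Type) [AddCommGroup M] [Module R M], Module.Finite R M → Indec R M → TR R M →
      ∃ i, Nonempty (M ≃ₗ[R] F i) := by
  classical
  obtain ⟨n, G, hG⟩ := h
  have h1 : ∀ i, ∃ (κ : Type) (_ : Fintype κ) (F : κ → ModCat R),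
      ∀ (M : Type) [AddCommGroup M] [Module R M], Module.Finite R (G i) → Indec R M →
        AddMem R M (G i) → ∃ k, Nonempty (M ≃ₗ[R] F k) := by
    intro i
    by_cases hf : Module.Finite R (G i)
    · obtain ⟨κ, hκ, s, hs⟩ := exists_decomp R (G i)
      refine ⟨κ, hκ, fun k => (s k).W, fun M _ _ _ hi ha => ?_⟩
      obtain ⟨k, ⟨e⟩⟩ := Sm.iso_of s hs hi ha
      exact ⟨k, ⟨e.symm⟩⟩
    · exact ⟨Empty, inferInstance, Empty.elim, fun M _ _ h => absurd h hf⟩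
  choose κ hκ F hF using h1
  refine ⟨Σ i, κ i, inferInstance, fun x => F x.1 x.2, fun M _ _ hfin hind htr => ?_⟩
  obtain ⟨T, hTf, hMT, hTT, hmax⟩ := bongartz K htr
  -- basic version of T
  have hex : ∃ l, ∃ V : ModCat R, AddMem R V T ∧ AddMem R T V ∧ len R V = l :=
    ⟨_, T, .refl R _, .refl R _, rfl⟩
  obtain ⟨V, hVT, hTV, hl⟩ := Nat.find_spec hex
  have hmin := fun m hm => Nat.find_min hex (m := m) hm
  have hVf := hVT.finite
  have hbasic : IsBasicMod V := by
    rintro N X ⟨e⟩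
    rw [isZero_iff]
    by_contra hN
    rw [not_subsingleton_iff_nontrivial] at hN
    let e' : V ≃ₗ[R] ((N × N) × X) := e.toLinearEquiv.trans ((biprodEquiv (N ⊞ N) X).trans
      ((biprodEquiv N N).prodCongr (.refl R X)))
    have hf1 : Module.Finite R ((N × N) × X) := Module.Finite.equiv e'
    have hfX : Module.Finite R X := Module.Finite.of_surjective (LinearMap.snd R (N × N) X) (fun x => ⟨(0, x), rfl⟩)
    have hfN : Module.Finite R N := Module.Finite.of_surjective
      (LinearMap.fst R N N ∘ₗ LinearMap.fst R (N × N) X) (fun x => ⟨((x, 0), 0), rfl⟩)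
    have hlen : len R V = len R N + len R N + len R X := by
      rw [← len_prod, ← len_prod]
      exact le_antisymm (len_le_of_inj e'.toLinearMap e'.injective) (len_le_of_surj e'.toLinearMap e'.surjective)
    have hpos : 0 < len R N := len_pos
    have a1 : AddMem R (N × X) ((N × N) × X) := .of_retract
      ((LinearMap.inl R N N).prodMap LinearMap.id) ((LinearMap.fst R N N).prodMap LinearMap.id) rfl
    have aN : AddMem R N (N × X) := .of_retract (LinearMap.inl R _ _) (LinearMap.fst R _ _) rfl
    have aX : AddMem R X (N × X) := .of_retract (LinearMap.inr R _ _) (LinearMap.snd R _ _) rfl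
    have a2 : AddMem R ((N × N) × X) (N × X) := (aN.prod aN).prod aX
    refine hmin (len R (N × X)) ?_ ⟨.of R (N × X), (a1.trans (.congr e'.symm)).trans hVT,
      hTV.trans ((AddMem.congr e').trans a2), rfl⟩
    rw [← hl, len_prod, hlen]; omega
  obtain ⟨ι, _, s, hs⟩ := exists_decomp R R
  let J := {i : ι // ∀ φ : (s i).W →ₗ[R] T, φ = 0}
  let Q := ∀ j : J, (s j.1).W
  have hsp : ∀ i, Module.Projective R (s i).W := fun i =>
    Module.Projective.of_split (s i).b (s i).a (by ext x; exact (s i).ab x)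
  have hsf : ∀ i, Module.Finite R (s i).W := fun i => (s i).fin
  have hQT : ∀ φ : Q →ₗ[R] T, φ = 0 := by
    intro φ
    refine LinearMap.pi_ext' fun j => ?_
    rw [LinearMap.zero_comp]
    exact j.2 _
  have hQp : Module.Projective R Q := proj_pi fun j => hsp j.1
  have hVst : IsSupportTauTiltingMod V := by
    refine ⟨.of R Q, ⟨hVf, (tr_iff V).2 (hTT.add hVT), inferInstanceAs (Module.Finite R Q),
      (proj_iff _).2 hQp, fun φ => ?_⟩, ?_⟩
    · ext1
      exact AddMem.hom_zero' hVT hQT φ.hom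
    · rintro N Q' ⟨g1, g2, g3, g4, g5⟩
      have e1 := biprodEquiv V N
      have e2 := biprodEquiv (.of R Q) Q'
      have g1 : Module.Finite R (V ⊞ N : ModCat R) := g1
      have g3 : Module.Finite R (.of R Q ⊞ Q' : ModCat R) := g3
      have g4 := (proj_iff _).1 g4
      have hNf : Module.Finite R N := Module.Finite.of_surjective (LinearMap.snd R V N ∘ₗ e1.toLinearMap)
        (fun x => ⟨e1.symm (0, x), by simp⟩)
      have hQf : Module.Finite R Q' := Module.Finite.of_surjective (LinearMap.snd R Q Q' ∘ₗ e2.toLinearMap)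
        (fun x => ⟨e2.symm (0, x), by simp⟩)
      have hQp : Module.Projective R Q' := Module.Projective.of_split
        (e2.symm.toLinearMap ∘ₗ LinearMap.inr R Q Q') (LinearMap.snd R Q Q' ∘ₗ e2.toLinearMap) (by ext x; simp)
      have g2 := (tr_iff _).1 g2
      have hVV : AddMem R V (V × N) := .of_retract (LinearMap.inl R _ _) (LinearMap.fst R _ _) rfl
      have hNN : AddMem R N (V × N) := .of_retract (LinearMap.inr R _ _) (LinearMap.snd R _ _) rfl
      have h7 : AddMem R (T × N) (V ⊞ N : ModCat R) :=
        ((hTV.trans hVV).prod hNN).trans (.congr e1.symm)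
      rw [addMem_iff, addMem_iff]
      refine ⟨(hmax N (g2.add h7) hNf).trans hTV, ?_⟩
      change AddMem R Q' Q
      have hz : ∀ φ : Q' →ₗ[R] V, φ = 0 := by
        intro φ
        have := g5 (ModuleCat.ofHom (e1.symm.toLinearMap ∘ₗ LinearMap.inl R V N ∘ₗ φ ∘ₗ LinearMap.snd R Q Q' ∘ₗ e2.toLinearMap))
        ext x
        have := congrArg (fun t => (e1 (t.hom (e2.symm (0, x)))).1) this
        simpa using this
      have hz' := fun φ => AddMem.hom_zero' (L := Q') hTV hz φ
      obtain ⟨κ', _, s', hs'⟩ := exists_decomp R Q'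
      refine AddMem.of_decomp s' hs' fun j => ?_
      have hadj : AddMem R (s' j).W Q' := .of_retract (s' j).b (s' j).a (by ext x; exact (s' j).ab x)
      obtain ⟨i, ⟨e⟩⟩ := Sm.iso_of s hs (s' j).ind (hadj.trans .of_proj)
      have hi : ∀ φ : (s i).W →ₗ[R] T, φ = 0 := fun φ =>
        AddMem.hom_zero ((AddMem.congr e).trans hadj) hz' φ
      refine (AddMem.congr e.symm).trans (.of_retract
        (LinearMap.single R (fun j : J => ((s j.1).W : Type)) ⟨i, hi⟩) (LinearMap.proj (⟨i, hi⟩ : J)) ?_)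
      ext x
      exact Pi.single_eq_same (M := fun j : J => ((s j.1).W : Type)) (⟨i, hi⟩ : J) x
  obtain ⟨i, ⟨e⟩⟩ := hG V hVst hbasic
  have e := e.toLinearEquiv
  obtain ⟨k, hk⟩ := hF i M (Module.Finite.equiv e) hind ((hMT.trans hTV).trans (.congr e))
  exact ⟨⟨i, k⟩, hk⟩

end FT


section Pr
variable {M N L V P Q : Type} [AddCommGroup M] [Module R M] [AddCommGroup N] [Module R N]
  [AddCommGroup L] [Module R L] [AddCommGroup V] [Module R V]
  [AddCommGroup P] [Module R P] [AddCommGroup Q] [Module R Q]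

lemma exists_rad [IsArtinianRing R] [Module.Finite R P] [Module.Projective R P] (hP : Indec R P) :
    ∃ 𝔪 : Submodule R P, 𝔪 ≠ ⊤ ∧ ∀ A : Submodule R P, A = ⊤ ∨ A ≤ 𝔪 := by
  have := hP.1
  obtain ⟨𝔪, h𝔪⟩ := IsCoatomic.exists_coatom (Submodule R P)
  refine ⟨𝔪, h𝔪.1, fun A => ?_⟩
  by_contra hc
  push Not at hc
  have hsup : A ⊔ 𝔪 = ⊤ := h𝔪.2 _ (by
    rw [lt_iff_le_not_ge]
    exact ⟨le_sup_right, fun h => hc.2 (le_sup_left.trans h)⟩)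
  have hs : Surjective (A.subtype.coprod 𝔪.subtype) := by
    intro x
    have : x ∈ A ⊔ 𝔪 := hsup ▸ Submodule.mem_top
    obtain ⟨a, ha, m, hm, rfl⟩ := Submodule.mem_sup.1 this
    exact ⟨(⟨a, ha⟩, ⟨m, hm⟩), rfl⟩
  obtain ⟨s, hs⟩ := proj_lift _ hs LinearMap.id
  let φ : Bool → P →ₗ[R] P := fun i => if i then A.subtype ∘ₗ LinearMap.fst R _ _ ∘ₗ s
    else 𝔪.subtype ∘ₗ LinearMap.snd R _ _ ∘ₗ s
  obtain ⟨i, -, hi⟩ := hP.exists_bij Finset.univ φ (by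
    have : ∑ i, φ i = LinearMap.id := by
      ext x
      rw [Fintype.sum_bool]
      exact hs x
    rw [this]; exact bijective_id)
  cases i with
  | true =>
    apply hc.1
    rw [eq_top_iff]
    intro x _
    obtain ⟨y, rfl⟩ := hi.2 x
    exact (s y).1.2
  | false =>
    apply h𝔪.1
    rw [eq_top_iff]
    intro x _
    obtain ⟨y, rfl⟩ := hi.2 x
    exact (s y).2.2

lemma pres_tr [Module.Projective R P] [Module.Projective R Q] [Module.Finite R P] [Module.Finite R Q]
    (f : P →ₗ[R] Q) (hrig : ∀ φ : P →ₗ[R] Q, ∃ (α : Q →ₗ[R] Q) (β : P →ₗ[R] P), ∀ x, φ x = α (f x) + f (β x)) :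
    TR R (Q ⧸ LinearMap.range f) := by
  refine ⟨.of R P, .of R Q, f, (LinearMap.range f).mkQ, inferInstanceAs (Module.Projective R P),
    inferInstanceAs (Module.Projective R Q), inferInstanceAs (Module.Finite R P),
    inferInstanceAs (Module.Finite R Q), Submodule.mkQ_surjective _, LinearMap.exact_map_mkQ_range f, ?_⟩
  change ∀ h : P →ₗ[R] (Q ⧸ LinearMap.range f), ∃ k : Q →ₗ[R] (Q ⧸ LinearMap.range f), ∀ x, k (f x) = h x
  intro h
  obtain ⟨φ, hφ⟩ := proj_lift (LinearMap.range f).mkQ (Submodule.mkQ_surjective _) h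
  obtain ⟨α, β, hαβ⟩ := hrig φ
  refine ⟨(LinearMap.range f).mkQ ∘ₗ α, fun x => ?_⟩
  rw [← hφ, hαβ, map_add, LinearMap.comp_apply]
  have : (LinearMap.range f).mkQ (f (β x)) = 0 := (Submodule.Quotient.mk_eq_zero _).2 ⟨_, rfl⟩
  rw [this, add_zero]

lemma pres_indec (K : Type) [Field K] [Algebra K R] [Module.Projective R P] [Module.Projective R Q]
    (f : P →ₗ[R] Q) (hbr : ∀ (α : Q →ₗ[R] Q) (β : P →ₗ[R] P), (∀ x, α (f x) = f (β x)) →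
      ∃ c : K, ∀ x, α x = scal R Q K c x) (hnt : Nontrivial (Q ⧸ LinearMap.range f)) :
    Indec R (Q ⧸ LinearMap.range f) := by
  refine ⟨hnt, fun e he => ?_⟩
  let g := (LinearMap.range f).mkQ
  have hg : Surjective g := Submodule.mkQ_surjective _
  have hfg : Function.Exact f g := LinearMap.exact_map_mkQ_range f
  obtain ⟨α, hα⟩ := proj_lift g hg (e ∘ₗ g)
  obtain ⟨β, hβ⟩ := proj_lift f.rangeRestrict f.surjective_rangeRestrict
    ((α ∘ₗ f).codRestrict (LinearMap.range f) (fun x => (hfg _).1 (by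
      have : g (f x) = 0 := (hfg _).2 ⟨x, rfl⟩
      simp [hα, this])))
  obtain ⟨c, hc⟩ := hbr α β fun x => (congrArg Subtype.val (hβ x)).symm
  have hec : ∀ y, e y = scal R _ K c y := by
    intro y
    obtain ⟨x, rfl⟩ := hg y
    have := hα x
    rw [hc, map_scal] at this
    exact this.symm
  by_cases h0 : c = 0
  · left; refine LinearMap.ext fun y => ?_; rw [hec, h0, scal_apply]; simp
  · right; refine LinearMap.ext fun y => ?_
    have hb : Bijective e := by
      have : (e : (Q ⧸ LinearMap.range f) → _) = scal R _ K c := funext hec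
      rw [this]; exact scal_bij h0
    exact hb.1 (LinearMap.congr_fun he y)

lemma coker_len [IsArtinianRing R] {ι : Type} [Fintype ι] {W : ι → Type} [∀ i, AddCommGroup (W i)]
    [∀ i, Module R (W i)] [∀ i, Module.Finite R (W i)] (𝔪 : ∀ i, Submodule R (W i)) (h𝔪 : ∀ i, 𝔪 i ≠ ⊤)
    (f : P →ₗ[R] (∀ i, W i)) (hf : ∀ x i, f x i ∈ 𝔪 i) :
    Fintype.card ι ≤ len R ((∀ i, W i) ⧸ LinearMap.range f) := by
  let q : (∀ i, W i) →ₗ[R] (∀ i, W i ⧸ 𝔪 i) := LinearMap.pi fun i => (𝔪 i).mkQ ∘ₗ LinearMap.proj i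
  have hq : Surjective q := fun y => by
    choose x hx using fun i => (𝔪 i).mkQ_surjective (y i)
    exact ⟨x, funext hx⟩
  obtain ⟨s, hs⟩ := desc (LinearMap.range f).mkQ (Submodule.mkQ_surjective _) q (fun x hx => by
    obtain ⟨z, rfl⟩ := (Submodule.Quotient.mk_eq_zero _).1 hx
    ext1 i
    exact (Submodule.Quotient.mk_eq_zero _).2 (hf z i))
  have h1 := len_le_of_surj s (fun y => by
    obtain ⟨x, rfl⟩ := hq y
    exact ⟨_, hs x⟩)
  refine le_trans ?_ h1
  rw [len_pi]
  have : ∀ i, 1 ≤ len R (W i ⧸ 𝔪 i) := fun i => by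
    have : Nontrivial (W i ⧸ 𝔪 i) := Submodule.Quotient.nontrivial_iff.2 (h𝔪 i)
    exact len_pos
  calc Fintype.card ι = ∑ i : ι, 1 := by simp
    _ ≤ _ := Finset.sum_le_sum fun i _ => this i

end Pr

lemma kron (K : Type) [Field K] (n : ℕ) (hn : 2 ≤ n) (m : ℕ) :
    ∃ (a c : ℕ) (F : Fin n → (Fin a → K) →ₗ[K] (Fin c → K)), m ≤ c ∧ a < c ∧
    (∀ v, (∀ l, F l v = 0) → v = 0) ∧
    (∀ G : Fin n → (Fin a → K) →ₗ[K] (Fin c → K), ∃ (α : (Fin c → K) →ₗ[K] (Fin c → K))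
      (β : (Fin a → K) →ₗ[K] (Fin a → K)), ∀ l v, G l v = α (F l v) + F l (β v)) ∧
    (∀ (α : (Fin c → K) →ₗ[K] (Fin c → K)) (β : (Fin a → K) →ₗ[K] (Fin a → K)),
      (∀ l v, α (F l v) = F l (β v)) → ∃ s : K, (∀ v, α v = s • v) ∧ (∀ v, β v = s • v)) := by
  induction m with
  | zero =>
    refine ⟨0, 1, 0, by omega, by omega, fun v _ => Subsingleton.elim _ _, fun G => ⟨0, 0, fun l v => ?_⟩,
      fun α β _ => ⟨α 1 0, fun v => ?_, fun v => Subsingleton.elim _ _⟩⟩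
    · rw [Subsingleton.elim v 0, map_zero, map_zero, map_zero]; simp
    · have : v = v 0 • (1 : Fin 1 → K) := by ext i; simp [Subsingleton.elim i 0]
      conv_lhs => rw [this]
      rw [map_smul]
      ext i
      rw [Subsingleton.elim i 0]
      simp [mul_comm]
  | succ m ih =>
    obtain ⟨a, c, F, hm, hac, hinj, hrig, hbr⟩ := ih
    let Fh : (Fin a → K) →ₗ[K] (Fin n → Fin c → K) := LinearMap.pi F
    have hFh : Injective Fh := (injective_iff_map_eq_zero _).2 fun v hv => hinj v fun l => congrFun hv l
    let Qt := (Fin n → Fin c → K) ⧸ LinearMap.range Fh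
    have hdim : Module.finrank K Qt + a = n * c := by
      have h1 := Submodule.finrank_quotient_add_finrank (LinearMap.range Fh)
      rw [LinearMap.finrank_range_of_inj hFh] at h1
      simpa [Module.finrank_pi_fintype] using h1
    let c' := Module.finrank K Qt
    have hcc : c < c' := by
      have : 2 * c ≤ n * c := Nat.mul_le_mul_right _ hn
      change Module.finrank K Qt + a = n * c at hdim
      change c < Module.finrank K Qt
      omega
    let π : (Fin n → Fin c → K) →ₗ[K] (Fin c' → K) :=
      (Module.finBasis K Qt).equivFun.toLinearMap ∘ₗ (LinearMap.range Fh).mkQ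
    have hπ : Surjective π := (Module.finBasis K Qt).equivFun.surjective.comp (Submodule.mkQ_surjective _)
    have hker : ∀ x, π x = 0 ↔ ∃ v, Fh v = x := by
      intro x
      change (Module.finBasis K Qt).equivFun ((LinearMap.range Fh).mkQ x) = 0 ↔ _
      rw [map_eq_zero_iff _ (Module.finBasis K Qt).equivFun.injective]
      exact Submodule.Quotient.mk_eq_zero _
    let F' : Fin n → (Fin c → K) →ₗ[K] (Fin c' → K) := fun l => π ∘ₗ LinearMap.single K (fun _ => Fin c → K) l
    have hsum : ∀ x : Fin n → Fin c → K, π x = ∑ l, F' l (x l) := by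
      intro x
      conv_lhs => rw [← Finset.univ_sum_single x, map_sum]
      rfl
    have hrig' : ∀ G : Fin n → (Fin c → K) →ₗ[K] (Fin c' → K), ∃ (α : (Fin c' → K) →ₗ[K] (Fin c' → K))
      (β : (Fin c → K) →ₗ[K] (Fin c → K)), ∀ l v, G l v = α (F' l v) + F' l (β v) := by
      intro G
      let gh : (Fin n → Fin c → K) →ₗ[K] (Fin c' → K) := ∑ l, G l ∘ₗ LinearMap.proj l
      have hgh : ∀ x, gh x = ∑ l, G l (x l) := fun x => by rw [LinearMap.sum_apply]; rfl
      obtain ⟨φ, hφ⟩ := proj_lift π hπ (gh ∘ₗ Fh)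
      obtain ⟨α, β, hαβ⟩ := hrig fun l => LinearMap.proj l ∘ₗ φ
      let αn : (Fin n → Fin c → K) →ₗ[K] (Fin n → Fin c → K) := LinearMap.pi fun l => α ∘ₗ LinearMap.proj l
      have hφ' : ∀ v, φ v = αn (Fh v) + Fh (β v) := fun v => funext fun l => hαβ l v
      obtain ⟨γ, hγ⟩ := desc π hπ (gh - π ∘ₗ αn) (fun x hx => by
        obtain ⟨v, rfl⟩ := (hker x).1 hx
        have h1 : gh (Fh v) = π (φ v) := (hφ v).symm
        have h2 : π (Fh (β v)) = 0 := (hker _).2 ⟨_, rfl⟩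
        rw [LinearMap.sub_apply, h1, hφ', map_add, h2]
        simp)
      refine ⟨γ, α, fun l v => ?_⟩
      have h3 := hγ (Pi.single l v)
      have h4 : gh (Pi.single l v) = G l v := by
        rw [hgh, Finset.sum_eq_single l]
        · simp
        · intro j _ hj; simp [Pi.single_eq_of_ne hj]
        · simp
      have h5 : αn (Pi.single l v) = Pi.single l (α v) := by
        ext1 j
        exact Pi.apply_single (fun _ => α) (fun _ => map_zero α) l v j
      have h3 : γ (π (Pi.single l v)) = gh (Pi.single l v) - π (αn (Pi.single l v)) := h3
      rw [h4, h5] at h3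
      change G l v = γ (π (Pi.single l v)) + π (Pi.single l (α v))
      rw [h3]; abel
    refine ⟨c, c', F', by omega, hcc, ?_, hrig', ?_⟩
    · intro v hv
      by_contra hv0
      have hsurj : Surjective (LinearMap.pi F' : (Fin c → K) →ₗ[K] (Fin n → Fin c' → K)) := by
        intro y
        obtain ⟨ξ, hξ⟩ := Module.Projective.exists_dual_eq_one K hv0
        obtain ⟨α, β, hαβ⟩ := hrig' fun l => ξ.smulRight (y l)
        refine ⟨β v, funext fun l => ?_⟩
        have := hαβ l v
        rw [LinearMap.smulRight_apply, hξ, one_smul, hv, map_zero, zero_add] at this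
        exact this.symm
      have := LinearMap.finrank_le_finrank_of_surjective hsurj
      simp [Module.finrank_pi_fintype] at this
      have : 1 * c' ≤ n * c' := Nat.mul_le_mul_right _ (by omega)
      omega
    · intro γ β hγβ
      let βn : (Fin n → Fin c → K) →ₗ[K] (Fin n → Fin c → K) := LinearMap.pi fun l => β ∘ₗ LinearMap.proj l
      have h1 : ∀ x, γ (π x) = π (βn x) := by
        intro x
        rw [hsum, hsum, map_sum]
        exact Finset.sum_congr rfl fun l _ => hγβ l (x l)
      obtain ⟨δ, hδ⟩ := proj_lift Fh.rangeRestrict Fh.surjective_rangeRestrict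
        ((βn ∘ₗ Fh).codRestrict (LinearMap.range Fh) (fun v => (hker _).1 (by
          have : π (Fh v) = 0 := (hker _).2 ⟨_, rfl⟩
          exact (h1 (Fh v)).symm.trans (by rw [this, map_zero]))))
      have hδ' : ∀ v, Fh (δ v) = βn (Fh v) := fun v => congrArg Subtype.val (hδ v)
      obtain ⟨s, hs, -⟩ := hbr β δ fun l v => (congrFun (hδ' v) l).symm
      refine ⟨s, fun y => ?_, hs⟩
      obtain ⟨x, rfl⟩ := hπ y
      rw [h1, ← map_smul]
      congr 1
      exact funext fun l => hs (x l)


variable (R) in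
structure PD where
  S : Type
  fS : Fintype S
  P : S → ModCat R
  fin : ∀ y, Module.Finite R (P y)
  proj : ∀ y, Module.Projective R (P y)
  ind : ∀ y, Indec R (P y)
  ne : ∀ y z, Nonempty (P y ≃ₗ[R] P z) → y = z
  gen : ∀ (M : Type) [AddCommGroup M] [Module R M], (∀ y (g : P y →ₗ[R] M), g = 0) → ∀ m : M, m = 0
  inj : ∀ y z (g : P y →ₗ[R] P z), g ≠ 0 → Injective g

lemma exists_PD [IsArtinianRing R] (h : IsLocallyHereditaryRing R) : Nonempty (PD R) := by
  classical
  obtain ⟨ι, hι, s, hs⟩ := exists_decomp R R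
  have hsp : ∀ i, Module.Projective R (s i).W := fun i =>
    Module.Projective.of_split (s i).b (s i).a (by ext x; exact (s i).ab x)
  let σ : Setoid ι := ⟨fun i j => Nonempty ((s i).W ≃ₗ[R] (s j).W), fun i => ⟨.refl R _⟩,
    fun ⟨e⟩ => ⟨e.symm⟩, fun ⟨e⟩ ⟨e'⟩ => ⟨e.trans e'⟩⟩
  refine ⟨⟨Quotient σ, Fintype.ofFinite _, fun q => (s q.out).W, fun q => (s q.out).fin, fun q => hsp _,
    fun q => (s q.out).ind, fun q q' hq => ?_, fun M _ _ hM m => ?_, fun q q' g hg => ?_⟩⟩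
  · rw [← q.out_eq, ← q'.out_eq]
    exact Quotient.sound hq
  · have h1 : ∀ i (g : (s i).W →ₗ[R] M), g = 0 := by
      intro i g
      have : (Quotient.mk σ i).out ≈ i := Quotient.mk_out i
      obtain ⟨e⟩ := this
      have h2 := hM (Quotient.mk σ i) (g ∘ₗ e.toLinearMap)
      ext x
      have := LinearMap.congr_fun h2 (e.symm x)
      simpa using this
    have h2 : LinearMap.toSpanSingleton R M m 1 = 0 := by
      rw [← hs 1, map_sum]
      exact Finset.sum_eq_zero fun i _ => LinearMap.congr_fun (h1 i (LinearMap.toSpanSingleton R M m ∘ₗ (s i).b)) _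
    simpa using h2
  · rcases h (s q.out).W (s q'.out).W (ModuleCat.ofHom g) (s _).fin (s _).fin ((proj_iff _).2 (hsp _))
      ((proj_iff _).2 (hsp _)) ((indec_iff _).2 (s _).ind) ((indec_iff _).2 (s _).ind) with h1 | h1
    · exact h1
    · exact absurd (congrArg ModuleCat.Hom.hom h1) hg

section PDs
variable (D : PD R)

instance : Fintype D.S := D.fS
instance (y : D.S) : Module.Finite R (D.P y) := D.fin y
instance (y : D.S) : Module.Projective R (D.P y) := D.proj y
instance (y : D.S) : Nontrivial (D.P y) := (D.ind y).1

def PD.le (y z : D.S) : Prop := ∃ g : D.P y →ₗ[R] D.P z, g ≠ 0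

lemma PD.le_refl (y : D.S) : D.le y y := ⟨LinearMap.id, fun h => by
  obtain ⟨x, hx⟩ := exists_ne (0 : D.P y)
  exact hx (LinearMap.congr_fun h x)⟩

lemma PD.comp_ne {y z w : D.S} (g : D.P y →ₗ[R] D.P z) (g' : D.P z →ₗ[R] D.P w) (h : g ≠ 0) (h' : g' ≠ 0) :
    g' ∘ₗ g ≠ 0 := fun h0 => by
  obtain ⟨x, hx⟩ := exists_ne (0 : D.P y)
  have h1 := (D.inj _ _ g' h').comp (D.inj _ _ g h)
  exact hx (h1 ((LinearMap.congr_fun h0 x).trans (map_zero (g' ∘ₗ g)).symm))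

lemma PD.le_trans {y z w : D.S} (h : D.le y z) (h' : D.le z w) : D.le y w := by
  obtain ⟨g, hg⟩ := h
  obtain ⟨g', hg'⟩ := h'
  exact ⟨_, D.comp_ne g g' hg hg'⟩

variable [IsArtinianRing R]

lemma PD.le_antisymm {y z : D.S} (h : D.le y z) (h' : D.le z y) : y = z := by
  obtain ⟨g, hg⟩ := h
  obtain ⟨g', hg'⟩ := h'
  have h1 := bij_of_inj (g' ∘ₗ g) ((D.inj _ _ g' hg').comp (D.inj _ _ g hg))
  refine (D.ne z y ⟨LinearEquiv.ofBijective g' ⟨D.inj _ _ g' hg', fun x => ?_⟩⟩).symm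
  obtain ⟨w, hw⟩ := h1.2 x
  exact ⟨g w, hw⟩

lemma PD.eq_of_surj {y z : D.S} (g : D.P y →ₗ[R] D.P z) (hg : Surjective g) : y = z := by
  obtain ⟨s, hs⟩ := proj_lift g hg LinearMap.id
  exact D.ne y z ⟨LinearEquiv.ofBijective g ((D.ind y).bij_of_retract s g (LinearMap.ext hs)).2⟩

def PD.rad (y : D.S) : Submodule R (D.P y) := (exists_rad (D.ind y)).choose
lemma PD.rad_ne (y : D.S) : D.rad y ≠ ⊤ := (exists_rad (D.ind y)).choose_spec.1
lemma PD.rad_max (y : D.S) (A : Submodule R (D.P y)) : A = ⊤ ∨ A ≤ D.rad y :=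
  (exists_rad (D.ind y)).choose_spec.2 A

lemma PD.mem_rad {y z : D.S} (h : y ≠ z) (g : D.P y →ₗ[R] D.P z) (x : D.P y) : g x ∈ D.rad z := by
  rcases D.rad_max z (LinearMap.range g) with h1 | h1
  · exact absurd (D.eq_of_surj g (LinearMap.range_eq_top.1 h1)) h
  · exact h1 ⟨x, rfl⟩

variable (K : Type) [Field K] [Algebra K R] [FiniteDimensional K R] [IsAlgClosed K]

lemma PD.end_scal (y : D.S) (g : D.P y →ₗ[R] D.P y) : ∃ c : K, ∀ x, g x = scal R _ K c x := by
  obtain ⟨c, hc⟩ := PaperSilting.end_scal (K := K) (D.inj y y) g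
  exact ⟨c, fun x => by rw [hc]⟩

variable (R) in
/-- bounded τ-rigid modules -/
def BD : Prop := ∃ B, ∀ (M : Type) [AddCommGroup M] [Module R M], Module.Finite R M → Indec R M → TR R M →
  len R M ≤ B

/-- matrix action -/
def mt {W : Type} [AddCommGroup W] [Module R W] {a c : ℕ} (A : Matrix (Fin c) (Fin a) K) :
    (Fin a → W) →ₗ[R] (Fin c → W) :=
  LinearMap.pi fun j => ∑ i, scal R W K (A j i) ∘ₗ LinearMap.proj i

end PDs


section Th
variable {K : Type} [Field K] [Algebra K R]
variable {W W' : Type} [AddCommGroup W] [Module R W] [AddCommGroup W'] [Module R W']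

lemma scal_add (c d : K) (x : W) : scal R W K (c + d) x = scal R W K c x + scal R W K d x := by
  simp [scal_apply, add_smul]
lemma scal_mul (c d : K) (x : W) : scal R W K (c * d) x = scal R W K c (scal R W K d x) := by
  rw [scal_apply, scal_apply, scal_apply, map_mul, mul_smul]
lemma scal_zero (x : W) : scal R W K 0 x = 0 := by simp [scal_apply]
lemma scal_one (x : W) : scal R W K 1 x = x := by simp [scal_apply]
lemma scal_sum {ι : Type} (s : Finset ι) (c : ι → K) (x : W) :
    scal R W K (∑ i ∈ s, c i) x = ∑ i ∈ s, scal R W K (c i) x := by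
  simp [scal_apply, Finset.sum_smul]

lemma mt_apply {a c : ℕ} (A : Matrix (Fin c) (Fin a) K) (v : Fin a → W) (j : Fin c) :
    mt (R := R) K A v j = ∑ i, scal R W K (A j i) (v i) := by
  simp [mt]

lemma mt_mul {a c d : ℕ} (A : Matrix (Fin d) (Fin c) K) (B : Matrix (Fin c) (Fin a) K) (v : Fin a → W) :
    mt (R := R) K A (mt (R := R) K B v) = mt (R := R) K (A * B) v := by
  funext j
  simp only [mt_apply, Matrix.mul_apply, scal_sum, map_sum, scal_mul]
  exact Finset.sum_comm

lemma mt_add {a c : ℕ} (A B : Matrix (Fin c) (Fin a) K) (v : Fin a → W) :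
    mt (R := R) K (A + B) v = mt (R := R) K A v + mt (R := R) K B v := by
  funext j
  simp only [mt_apply, Matrix.add_apply, scal_add, Finset.sum_add_distrib, Pi.add_apply]

lemma mt_map {a c : ℕ} (A : Matrix (Fin c) (Fin a) K) (h : W →ₗ[R] W') (v : Fin a → W) :
    h.compLeft (Fin c) (mt (R := R) K A v) = mt (R := R) K A (h.compLeft (Fin a) v) := by
  funext j
  simp only [mt_apply, LinearMap.compLeft_apply, Function.comp_apply, map_sum, map_scal]

lemma mt_hom {n : ℕ} (h : Fin n → W →ₗ[R] W')
    (hb : ∀ g : W →ₗ[R] W', ∃ c : Fin n → K, ∀ m, g m = ∑ i, scal R W' K (c i) (h i m)) {a c : ℕ}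
    (φ : (Fin a → W) →ₗ[R] (Fin c → W')) :
    ∃ G : Fin n → Matrix (Fin c) (Fin a) K, ∀ x, φ x = ∑ l, mt (R := R) K (G l) ((h l).compLeft (Fin a) x) := by
  classical
  choose C hC using fun (j : Fin c) (i : Fin a) =>
    hb ((LinearMap.proj j : (Fin c → W') →ₗ[R] W') ∘ₗ φ ∘ₗ (LinearMap.single R (fun _ => W) i))
  refine ⟨fun l j i => C j i l, fun x => ?_⟩
  funext j
  have h1 : φ x j = ∑ i, φ (Pi.single i (x i)) j := by
    conv_lhs => rw [← Finset.univ_sum_single x, map_sum, Finset.sum_apply]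
  have h2 : ∀ i, φ (Pi.single i (x i)) j = ∑ l, scal R W' K (C j i l) (h l (x i)) := fun i => hC j i (x i)
  rw [h1, Finset.sum_apply]
  simp only [h2, mt_apply, LinearMap.compLeft_apply, Function.comp_apply]
  rw [Finset.sum_comm]
  exact Finset.sum_congr rfl fun l _ => (mt_apply (R := R) (K := K) (fun j i => C j i l) ((h l).compLeft (Fin a) x) j).symm

lemma mt_ind {n : ℕ} (h : Fin n → W →ₗ[R] W')
    (hi : ∀ c : Fin n → K, (∀ m, ∑ i, scal R W' K (c i) (h i m) = 0) → c = 0) {a c : ℕ}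
    (G H : Fin n → Matrix (Fin c) (Fin a) K)
    (hG : ∀ x, ∑ l, mt (R := R) K (G l) ((h l).compLeft (Fin a) x) =
      ∑ l, mt (R := R) K (H l) ((h l).compLeft (Fin a) x)) : G = H := by
  classical
  have key : ∀ j i, (fun l => G l j i - H l j i) = 0 := by
    intro j i
    refine hi _ fun m => ?_
    have := congrFun (hG (Pi.single i m)) j
    simp only [Finset.sum_apply] at this
    simp only [mt_apply, LinearMap.compLeft_apply, Function.comp_apply] at this
    have e : ∀ (l : Fin n) (A : Matrix (Fin c) (Fin a) K),
        ∑ i', scal R W' K (A j i') (h l ((Pi.single i m : Fin a → W) i')) = scal R W' K (A j i) (h l m) := by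
      intro l A
      rw [Finset.sum_eq_single i]
      · rw [Pi.single_eq_same]
      · intro b _ hb; rw [Pi.single_eq_of_ne hb, map_zero, map_zero]
      · intro hh; exact absurd (Finset.mem_univ _) hh
    simp only [e] at this
    have e2 : ∀ l, scal R W' K (G l j i - H l j i) (h l m) =
        scal R W' K (G l j i) (h l m) - scal R W' K (H l j i) (h l m) := fun l => by
      simp [scal_apply, sub_smul]
    simp only [e2, Finset.sum_sub_distrib, this, sub_self]
  funext l j i
  exact sub_eq_zero.1 (congrFun (key j i) l)

end Th

section Th2
variable (D : PD R) [IsArtinianRing R] (K : Type) [Field K] [Algebra K R] [FiniteDimensional K R] [IsAlgClosed K]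

lemma PD.thin (hB : BD R) {y z : D.S} (g g' : D.P y →ₗ[R] D.P z) (hg : g ≠ 0) :
    ∃ c : K, ∀ x, g' x = scal R _ K c (g x) := by
  by_cases hyz : y = z
  · subst hyz
    obtain ⟨c, hc⟩ := D.end_scal K y g
    obtain ⟨c', hc'⟩ := D.end_scal K y g'
    have h0 : c ≠ 0 := by
      rintro rfl
      exact hg (LinearMap.ext fun x => by rw [hc, scal_zero]; rfl)
    exact ⟨c' * c⁻¹, fun x => by rw [hc, hc', ← scal_mul, mul_assoc, inv_mul_cancel₀ h0, mul_one]⟩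
  obtain ⟨n, h, hb, hi⟩ := hom_basis (R := R) (D.P y) (D.P z) K
  by_cases hn : 2 ≤ n
  · exfalso
    obtain ⟨B, hB⟩ := hB
    obtain ⟨a, c, F, hm, hac, -, hrig, hbr⟩ := kron K n hn (B + 1)
    let M : Fin n → Matrix (Fin c) (Fin a) K := fun l => LinearMap.toMatrix' (F l)
    let f : (Fin a → D.P y) →ₗ[R] (Fin c → D.P z) := ∑ l, mt (R := R) K (M l) ∘ₗ (h l).compLeft (Fin a)
    have hf : ∀ x, f x = ∑ l, mt (R := R) K (M l) ((h l).compLeft (Fin a) x) := fun x => by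
      simp [f, LinearMap.sum_apply]
    have hL : ∀ (A : Matrix (Fin c) (Fin c) K) x, mt (R := R) K A (f x) =
        ∑ l, mt (R := R) K (A * M l) ((h l).compLeft (Fin a) x) := fun A x => by
      rw [hf, map_sum]
      exact Finset.sum_congr rfl fun l _ => mt_mul _ _ _
    have hR : ∀ (A : Matrix (Fin a) (Fin a) K) x, f (mt (R := R) K A x) =
        ∑ l, mt (R := R) K (M l * A) ((h l).compLeft (Fin a) x) := fun A x => by
      rw [hf]
      exact Finset.sum_congr rfl fun l _ => by rw [mt_map, mt_mul]
    have hend : ∀ (w : D.S) (g : D.P w →ₗ[R] D.P w), ∃ c : Fin 1 → K, ∀ m, g m =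
        ∑ i, scal R _ K (c i) ((fun _ => LinearMap.id : Fin 1 → D.P w →ₗ[R] D.P w) i m) := fun w g => by
      obtain ⟨c, hc⟩ := D.end_scal K w g
      exact ⟨fun _ => c, fun m => by simpa using hc m⟩
    have hend' : ∀ (w : D.S) (k : ℕ) (g : (Fin k → D.P w) →ₗ[R] (Fin k → D.P w)),
        ∃ A, ∀ x, g x = mt (R := R) K A x := fun w k g => by
      obtain ⟨G, hG⟩ := mt_hom _ (hend w) g
      exact ⟨G 0, fun x => by rw [hG, Fin.sum_univ_one]; rfl⟩
    haveI hpr : ∀ (w : D.S) (k : ℕ), Module.Projective R (Fin k → D.P w) := fun w k => proj_pi fun _ => D.proj w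
    have hlen : c ≤ len R ((Fin c → D.P z) ⧸ LinearMap.range f) := by
      have := coker_len (fun _ : Fin c => D.rad z) (fun _ => D.rad_ne z) f (fun x j => by
        rw [hf, Finset.sum_apply]
        refine Submodule.sum_mem _ fun l _ => ?_
        rw [mt_apply]
        refine Submodule.sum_mem _ fun i _ => ?_
        exact Submodule.smul_mem _ _ (D.mem_rad hyz _ _))
      simpa using this
    have hnt : Nontrivial ((Fin c → D.P z) ⧸ LinearMap.range f) := by
      by_contra hc
      rw [not_nontrivial_iff_subsingleton] at hc
      have : len R ((Fin c → D.P z) ⧸ LinearMap.range f) = 0 := by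
        unfold len; rw [Module.length_eq_zero]; rfl
      omega
    have := hB ((Fin c → D.P z) ⧸ LinearMap.range f) inferInstance
      (pres_indec K f (fun α β hαβ => by
        obtain ⟨A, hA⟩ := hend' _ _ α
        obtain ⟨A', hA'⟩ := hend' _ _ β
        have h1 := mt_ind h hi (fun l => A * M l) (fun l => M l * A') (fun x => by
          rw [← hL, ← hR, ← hA, ← hA', hαβ])
        obtain ⟨s, hs, -⟩ := hbr (Matrix.toLin' A) (Matrix.toLin' A') (fun l v => by
          have h2 := congrFun h1 l
          have h3 := congrArg (fun Z => Matrix.toLin' Z v) h2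
          simpa [M, Matrix.toLin'_mul] using h3)
        refine ⟨s, fun x => ?_⟩
        have hAs : A = s • (1 : Matrix (Fin c) (Fin c) K) := by
          apply Matrix.toLin'.injective
          refine LinearMap.ext fun v => ?_
          rw [hs v]; simp
        rw [hA, hAs]
        funext j
        rw [mt_apply, Finset.sum_eq_single j]
        · simp; rfl
        · intro b _ hb; simp [Matrix.one_apply_ne hb.symm, scal_zero]
        · intro hh; exact absurd (Finset.mem_univ _) hh) hnt)
      (pres_tr f (fun φ => by
        obtain ⟨G, hG⟩ := mt_hom h hb φ
        obtain ⟨α, β, hαβ⟩ := hrig (fun l => Matrix.toLin' (G l))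
        refine ⟨mt (R := R) K (LinearMap.toMatrix' α), mt (R := R) K (LinearMap.toMatrix' β), fun x => ?_⟩
        rw [hL, hR, ← Finset.sum_add_distrib, hG]
        refine Finset.sum_congr rfl fun l _ => ?_
        rw [← mt_add]
        congr 2
        apply Matrix.toLin'.injective
        refine LinearMap.ext fun v => ?_
        rw [hαβ]
        simp [M, Matrix.toLin'_mul]))
    omega
  · obtain ⟨k, hk⟩ := hb g
    obtain ⟨k', hk'⟩ := hb g'
    have hn1 : n = 0 ∨ n = 1 := by omega
    rcases hn1 with rfl | rfl
    · exact absurd (LinearMap.ext fun x => by rw [hk]; simp) hg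
    · simp only [Fin.sum_univ_one] at hk hk'
      have h0 : k 0 ≠ 0 := fun h0 => hg (LinearMap.ext fun x => by rw [hk, h0, scal_zero]; rfl)
      exact ⟨k' 0 * (k 0)⁻¹, fun x => by rw [hk, hk', ← scal_mul, mul_assoc, inv_mul_cancel₀ h0, mul_one]⟩

lemma bd_of_ft (K : Type) [Field K] [Algebra K R] [FiniteDimensional K R] (h : IsTauTiltingFiniteRing R) : BD R := by
  obtain ⟨ι, _, F, hF⟩ := ft K h
  refine ⟨∑ i, len R (F i), fun M _ _ hM hi ht => ?_⟩
  obtain ⟨i, ⟨e⟩⟩ := hF M hM hi ht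
  have : len R M = len R (F i) := by unfold len; rw [e.length_eq]
  rw [this]
  exact Finset.single_le_sum (f := fun i => len R (F i)) (fun _ _ => Nat.zero_le _) (Finset.mem_univ i)

end Th2


section Cr
variable {K : Type} [Field K]

def CrI (K : Type) [Field K] (p N : ℕ) (C : ℕ → ℕ → K) : Prop := ∃ A B : ℕ → ℕ → K,
  (∀ v w, ¬ v ≡ w [MOD p] → A v w = 0) ∧ (∀ v w, ¬ v ≡ w [MOD p] → B v w = 0) ∧
  ∀ v w, v ≤ N → w < N → C v w = A v w + A v (w + 1) + ((if v < N then B v w else 0) +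
    (if 1 ≤ v then B (v - 1) w else 0))

def CrX (K : Type) [Field K] (u v : ℕ) : ℕ → ℕ → K := fun v' w' => if v' = v ∧ w' = u then 1 else 0

variable {p N : ℕ}

lemma CrI.add {C C' : ℕ → ℕ → K} (h : CrI K p N C) (h' : CrI K p N C') : CrI K p N (C + C') := by
  obtain ⟨A, B, hA, hB, h⟩ := h
  obtain ⟨A', B', hA', hB', h'⟩ := h'
  refine ⟨A + A', B + B', fun v w hvw => by simp [hA v w hvw, hA' v w hvw],
    fun v w hvw => by simp [hB v w hvw, hB' v w hvw], fun v w hv hw => ?_⟩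
  simp only [Pi.add_apply, h v w hv hw, h' v w hv hw]
  split_ifs <;> ring

lemma CrI.smul (c : K) {C : ℕ → ℕ → K} (h : CrI K p N C) : CrI K p N (c • C) := by
  obtain ⟨A, B, hA, hB, h⟩ := h
  refine ⟨c • A, c • B, fun v w hvw => by simp [hA v w hvw],
    fun v w hvw => by simp [hB v w hvw], fun v w hv hw => ?_⟩
  simp only [Pi.smul_apply, smul_eq_mul, h v w hv hw]
  split_ifs <;> ring

lemma CrI.zero {C : ℕ → ℕ → K} (h : ∀ v w, v ≤ N → w < N → C v w = 0) : CrI K p N C :=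
  ⟨0, 0, fun _ _ _ => rfl, fun _ _ _ => rfl, fun v w hv hw => by simp [h v w hv hw]⟩

lemma CrI.congr {C C' : ℕ → ℕ → K} (h : CrI K p N C) (hc : ∀ v w, v ≤ N → w < N → C' v w = C v w) : CrI K p N C' := by
  obtain ⟨A, B, hA, hB, h⟩ := h
  exact ⟨A, B, hA, hB, fun v w hv hw => by rw [hc v w hv hw, h v w hv hw]⟩

lemma CrI.sub {C C' : ℕ → ℕ → K} (h : CrI K p N (C + C')) (h' : CrI K p N C') : CrI K p N C := by
  have := h.add (h'.smul (-1))
  refine this.congr fun v w _ _ => ?_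
  simp

lemma CrI.relB {u v : ℕ} (huv : v ≡ u [MOD p]) (hv : v < N) : CrI K p N (CrX K u v + CrX K u (v + 1)) := by
  refine ⟨0, CrX K u v, fun _ _ _ => rfl, fun v' w' h => ?_, fun v' w' hv' hw' => ?_⟩
  · unfold CrX
    split_ifs with h1
    · obtain ⟨rfl, rfl⟩ := h1; exact absurd huv h
    · rfl
  · simp only [CrX, Pi.add_apply, Pi.zero_apply]
    split_ifs <;> first | omega | simp

lemma CrI.relA {u v : ℕ} (huv : v ≡ u [MOD p]) :
    CrI K p N (CrX K u v + (if 1 ≤ u then CrX K (u - 1) v else 0)) := by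
  refine ⟨CrX K u v, 0, fun v' w' h => ?_, fun _ _ _ => rfl, fun v' w' hv' hw' => ?_⟩
  · unfold CrX
    split_ifs with h1
    · obtain ⟨rfl, rfl⟩ := h1; exact absurd huv h
    · rfl
  · by_cases hu : 1 ≤ u
    · rw [if_pos hu]
      simp only [CrX, Pi.add_apply, Pi.zero_apply]
      split_ifs <;> first | omega | simp
    · rw [if_neg hu]
      simp only [CrX, Pi.add_apply, Pi.zero_apply]
      split_ifs <;> first | omega | simp

lemma CrI.X0 {u v : ℕ} (h : N ≤ u ∨ N < v) : CrI K p N (CrX K u v) := .zero fun v' w' hv hw => by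
  unfold CrX
  rw [if_neg]; omega

lemma CrI.step {u v : ℕ} (huv : v ≡ u [MOD p]) (hv : v < N) :
    CrI K p N (CrX K u v) ↔ CrI K p N (CrX K (u + 1) (v + 1)) := by
  have hB := CrI.relB (K := K) huv hv
  have hA := CrI.relA (K := K) (N := N) (huv.add_right 1)
  rw [if_pos (by omega), Nat.add_sub_cancel] at hA
  constructor
  · intro h
    exact hA.sub ((show CrI K p N (CrX K u (v + 1) + CrX K u v) by rwa [add_comm]).sub h)
  · intro h
    exact hB.sub ((show CrI K p N (CrX K u (v + 1) + CrX K (u + 1) (v + 1)) by rwa [add_comm]).sub h)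

lemma CrI.X1 (u v : ℕ) (huv : v ≡ u [MOD p]) : CrI K p N (CrX K u v) := by
  rcases le_or_gt u v with h | h
  · induction u generalizing v with
    | zero =>
      have := CrI.relA (K := K) (N := N) huv
      rw [if_neg (by omega), add_zero] at this
      exact this
    | succ u ih =>
      obtain ⟨v, rfl⟩ : ∃ v', v = v' + 1 := ⟨v - 1, by omega⟩
      have huv' : v ≡ u [MOD p] := Nat.ModEq.add_right_cancel' 1 huv
      by_cases hv : v < N
      · exact (CrI.step huv' hv).1 (ih v huv' (by omega))
      · exact .X0 (by omega)
  · by_cases hu : u < N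
    · obtain ⟨k, hk⟩ : ∃ k, N = u + k := ⟨N - u, by omega⟩
      clear hu
      induction k generalizing u v with
      | zero => exact .X0 (by omega)
      | succ k ih => exact (CrI.step huv (by omega)).2 (ih _ _ (huv.add_right 1) (by omega) (by omega))
    · exact .X0 (by omega)

lemma CrI.X2 (u v : ℕ) (huv : v ≡ u + 1 [MOD p]) : CrI K p N (CrX K u v) := by
  rcases v with _ | v
  · have := CrI.relA (K := K) (N := N) huv
    rw [if_pos (by omega), Nat.add_sub_cancel, add_comm] at this
    exact this.sub (CrI.X1 _ _ huv)
  · have huv' : v ≡ u [MOD p] := Nat.ModEq.add_right_cancel' 1 huv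
    by_cases hv : v < N
    · have := CrI.relB (K := K) huv' hv
      rw [add_comm] at this
      exact this.sub (CrI.X1 _ _ huv')
    · exact .X0 (by omega)

lemma CrI.all (C : ℕ → ℕ → K) (hC : ∀ v w, ¬ (v ≡ w [MOD p] ∨ v ≡ w + 1 [MOD p]) → C v w = 0) : CrI K p N C := by
  have h1 : ∀ v w, CrI K p N (C v w • CrX K w v) := by
    intro v w
    by_cases h : v ≡ w [MOD p]
    · exact (CrI.X1 _ _ h).smul _
    · by_cases h' : v ≡ w + 1 [MOD p]
      · exact (CrI.X2 _ _ h').smul _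
      · rw [hC v w (by tauto), zero_smul]; exact .zero fun _ _ _ _ => rfl
  have h2 : ∀ s : Finset (ℕ × ℕ), CrI K p N (∑ q ∈ s, C q.1 q.2 • CrX K q.2 q.1) := by
    intro s
    induction s using Finset.cons_induction with
    | empty => exact .zero fun _ _ _ _ => rfl
    | cons a s ha ih => rw [Finset.sum_cons]; exact (h1 _ _).add ih
  refine (h2 (Finset.range (N + 1) ×ˢ Finset.range N)).congr fun v w hv hw => ?_
  rw [Finset.sum_apply, Finset.sum_apply, Finset.sum_eq_single (v, w)]
  · simp [CrX]
  · rintro ⟨a, b⟩ - hne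
    simp only [Pi.smul_apply, CrX]
    rw [if_neg, smul_zero]
    rintro ⟨rfl, rfl⟩; exact hne rfl
  · intro h; exact absurd (by simp; omega) h

lemma Cr_brick (hp : 2 ≤ p) (A B : ℕ → ℕ → K) (hA : ∀ v w, ¬ v ≡ w [MOD p] → A v w = 0)
    (hB : ∀ v w, ¬ v ≡ w [MOD p] → B v w = 0)
    (h : ∀ v w, v ≤ N → w < N → A v w + A v (w + 1) = ((if v < N then B v w else 0) +
    (if 1 ≤ v then B (v - 1) w else 0))) (v w : ℕ) (hv : v ≤ N) (hw : w ≤ N) :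
    A v w = if v = w then A 0 0 else 0 := by
  have hne : ∀ u, ¬ u ≡ u + 1 [MOD p] := by
    intro u hu
    have := (Nat.modEq_iff_dvd' (by omega)).1 hu
    rw [Nat.add_sub_cancel_left] at this
    have := Nat.le_of_dvd one_pos this
    omega
  have n1 : ∀ v w, v ≡ w [MOD p] → A v (w + 1) = 0 := fun v w h => hA _ _ fun h' => hne w (h.symm.trans h')
  have n2 : ∀ v w, v ≡ w [MOD p] → A (v + 1) w = 0 := fun v w h => hA _ _ fun h' => hne v (h.trans h'.symm)
  have n3 : ∀ v w, v ≡ w [MOD p] → B (v + 1) w = 0 := fun v w h => hB _ _ fun h' => hne v (h.trans h'.symm)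
  have n4 : ∀ v w, v ≡ w [MOD p] → 1 ≤ v → B (v - 1) w = 0 := fun v w h h1 => hB _ _ fun h' => hne (v - 1) (by
    rw [Nat.sub_add_cancel h1]; exact h'.trans h.symm)
  have hs : ∀ v w, v < N → w < N → A (v + 1) (w + 1) = A v w := by
    intro v w hv hw
    by_cases hc : v ≡ w [MOD p]
    · have e1 := h v w hv.le hw
      have e2 := h (v + 1) w hv hw
      rw [n1 v w hc, if_pos hv, add_zero] at e1
      rw [n2 v w hc, n3 v w hc, if_pos (by omega : 1 ≤ v + 1), Nat.add_sub_cancel] at e2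
      have e3 : (if 1 ≤ v then B (v - 1) w else 0) = 0 := by
        split_ifs with hh
        · exact n4 v w hc hh
        · rfl
      rw [e3, add_zero] at e1
      rw [e1]
      simpa using e2
    · rw [hA v w hc, hA]
      intro h'; exact hc (Nat.ModEq.add_right_cancel' 1 h')
  have ht : ∀ w, w < N → A N w = 0 := by
    intro w hw
    by_cases hc : N ≡ w [MOD p]
    · have e1 := h N w le_rfl hw
      rw [n1 N w hc, if_neg (lt_irrefl _), if_pos (by omega), n4 N w hc (by omega)] at e1
      simpa using e1
    · exact hA _ _ hc
  have hb : ∀ w, w < N → A 0 (w + 1) = 0 := by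
    intro w hw
    by_cases hc : 0 ≡ w + 1 [MOD p]
    · have e1 := h 0 w (Nat.zero_le _) hw
      have hn : ¬ 0 ≡ w [MOD p] := fun h' => hne w (h'.symm.trans hc)
      rw [hA 0 w hn, hB 0 w hn] at e1
      simpa using e1
    · exact hA _ _ hc
  rcases lt_trichotomy v w with h1 | h1 | h1
  · rw [if_neg h1.ne]
    induction v generalizing w with
    | zero =>
      obtain ⟨w, rfl⟩ : ∃ v', w = v' + 1 := ⟨w - 1, by omega⟩
      exact hb w (by omega)
    | succ v ih =>
      obtain ⟨w, rfl⟩ : ∃ v', w = v' + 1 := ⟨w - 1, by omega⟩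
      rw [hs v w (by omega) (by omega)]
      exact ih w (by omega) (by omega) (by omega)
  · subst h1
    rw [if_pos rfl]
    induction v with
    | zero => rfl
    | succ v ih => rw [hs v v (by omega) (by omega)]; exact ih (by omega) (by omega)
  · rw [if_neg h1.ne']
    obtain ⟨k, hk⟩ : ∃ k, N = v + k := ⟨N - v, by omega⟩
    induction k generalizing v w with
    | zero => simp only [add_zero] at hk; subst hk; exact ht w h1
    | succ k ih => rw [← hs v w (by omega) (by omega)]; exact ih _ _ (by omega) (by omega) (by omega) (by omega)

end Cr


section Cm
variable (D : PD R) (K : Type) [Field K] [Algebra K R]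

def cm (e : ∀ y z, D.P y →ₗ[R] D.P z) (n m : ℕ) (s s' : ℕ → D.S) (c : ℕ → ℕ → K) :
    (∀ i : Fin n, D.P (s i)) →ₗ[R] (∀ j : Fin m, D.P (s' j)) :=
  LinearMap.pi fun j => ∑ i : Fin n, scal R _ K (c j i) ∘ₗ e (s i) (s' j) ∘ₗ LinearMap.proj i

variable {D K} {e : ∀ y z, D.P y →ₗ[R] D.P z} {n m l : ℕ} {s s' s'' : ℕ → D.S}

lemma cm_apply (c : ℕ → ℕ → K) (x : ∀ i : Fin n, D.P (s i)) (j : Fin m) :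
    cm D K e n m s s' c x j = ∑ i : Fin n, scal R _ K (c j i) (e (s i) (s' j) (x i)) := by
  simp [cm]

lemma cm_comp (c c' : ℕ → ℕ → K) (h : ∀ i j k, c' k j ≠ 0 → c j i ≠ 0 → ∀ x, e (s' j) (s'' k) (e (s i) (s' j) x) = e (s i) (s'' k) x)
    (x : ∀ i : Fin n, D.P (s i)) :
    cm D K e m l s' s'' c' (cm D K e n m s s' c x) = cm D K e n l s s'' (fun k i => ∑ j : Fin m, c' k j * c j i) x := by
  funext k
  rw [cm_apply, cm_apply]
  simp only [cm_apply, map_sum, scal_sum, scal_mul]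
  rw [Finset.sum_comm]
  refine Finset.sum_congr rfl fun i _ => Finset.sum_congr rfl fun j _ => ?_
  rw [map_scal]
  by_cases h1 : c' k j = 0
  · rw [h1, scal_zero, scal_zero]
  by_cases h2 : c j i = 0
  · rw [h2, scal_zero, scal_zero]
  rw [h i j k h1 h2]

lemma cm_congr (c c' : ℕ → ℕ → K) (h : ∀ j i, j < m → i < n → c j i = c' j i) : cm D K e n m s s' c = cm D K e n m s s' c' := by
  refine LinearMap.ext fun x => funext fun j => ?_
  rw [cm_apply, cm_apply]
  exact Finset.sum_congr rfl fun i _ => by rw [h j i j.2 i.2]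

lemma cm_add (c c' : ℕ → ℕ → K) (x) : cm D K e n m s s' (fun j i => c j i + c' j i) x = cm D K e n m s s' c x + cm D K e n m s s' c' x := by
  funext j
  rw [Pi.add_apply, cm_apply, cm_apply, cm_apply, ← Finset.sum_add_distrib]
  exact Finset.sum_congr rfl fun i _ => scal_add _ _ _

lemma cm_inj (he : ∀ y z, D.le y z → e y z ≠ 0) (c c' : ℕ → ℕ → K)
    (h : ∀ x, cm D K e n m s s' c x = cm D K e n m s s' c' x) (j i : ℕ) (hj : j < m) (hi : i < n)
    (hle : D.le (s i) (s' j)) : c j i = c' j i := by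
  classical
  by_contra hne
  refine he _ _ hle (LinearMap.ext fun x => ?_)
  have h1 := congrFun (h (Pi.single (⟨i, hi⟩ : Fin n) x)) ⟨j, hj⟩
  rw [cm_apply, cm_apply] at h1
  have h2 : ∀ c : ℕ → ℕ → K, ∑ i' : Fin n, scal R _ K (c j i') (e (s i') (s' j) ((Pi.single (⟨i, hi⟩ : Fin n) x : ∀ i : Fin n, D.P (s i)) i'))
      = scal R _ K (c j i) (e (s i) (s' j) x) := by
    intro c
    rw [Finset.sum_eq_single (⟨i, hi⟩ : Fin n)]
    · rw [Pi.single_eq_same]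
    · intro b _ hb; rw [Pi.single_eq_of_ne hb, map_zero, map_zero]
    · intro hh; exact absurd (Finset.mem_univ _) hh
  have h3 := (h2 c).symm.trans (h1.trans (h2 c'))
  have h4 : scal R _ K (c j i - c' j i) (e (s i) (s' j) x) = 0 := by
    rw [scal_apply, map_sub, sub_smul]; exact sub_eq_zero.2 h3
  exact (scal_bij (sub_ne_zero.2 hne)).1 (h4.trans (map_zero _).symm)

lemma cm_ex [IsArtinianRing R] [FiniteDimensional K R] [IsAlgClosed K] (hB : BD R) (he : ∀ y z, D.le y z → e y z ≠ 0)
    (φ : (∀ i : Fin n, D.P (s i)) →ₗ[R] (∀ j : Fin m, D.P (s' j))) :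
    ∃ c : ℕ → ℕ → K, (∀ j i, ¬ D.le (s i) (s' j) → c j i = 0) ∧ ∀ x, φ x = cm D K e n m s s' c x := by
  classical
  have h0 : ∀ (j : Fin m) (i : Fin n), ∃ c : K, (¬ D.le (s i) (s' j) → c = 0) ∧
      ∀ x, φ (Pi.single i x) j = scal R _ K c (e (s i) (s' j) x) := by
    intro j i
    let g : D.P (s i) →ₗ[R] D.P (s' j) := LinearMap.proj j ∘ₗ φ ∘ₗ LinearMap.single R (fun i : Fin n => (D.P (s i) : Type)) i
    by_cases h : D.le (s i) (s' j)
    · obtain ⟨c, hc⟩ := D.thin K hB _ g (he _ _ h)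
      exact ⟨c, fun h' => absurd h h', hc⟩
    · refine ⟨0, fun _ => rfl, fun x => ?_⟩
      rw [scal_zero]
      have : g = 0 := by
        by_contra hg; exact h ⟨g, hg⟩
      exact LinearMap.congr_fun this x
  choose C hC1 hC2 using h0
  refine ⟨fun j i => if h : j < m ∧ i < n then C ⟨j, h.1⟩ ⟨i, h.2⟩ else 0, fun j i h => ?_, fun x => funext fun j => ?_⟩
  · dsimp only
    split_ifs with h1
    · exact hC1 _ _ h
    · rfl
  · have h1 : φ x j = ∑ i, φ (Pi.single i (x i)) j := by
      conv_lhs => rw [← Finset.univ_sum_single x, map_sum, Finset.sum_apply]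
    rw [h1, cm_apply]
    refine Finset.sum_congr rfl fun i _ => ?_
    rw [dif_pos ⟨j.2, i.2⟩]
    exact hC2 j i (x i)

lemma exists_e (D : PD R) : ∃ e : ∀ y z, D.P y →ₗ[R] D.P z, (∀ y x, e y y x = x) ∧ (∀ y z, D.le y z → e y z ≠ 0) := by
  classical
  have h0 : ∀ y z, ∃ g : D.P y →ₗ[R] D.P z, (∀ h : y = z, ∀ x, g x = cast (congrArg (fun w => (D.P w : Type)) h) x) ∧ (D.le y z → g ≠ 0) := by
    intro y z
    by_cases h1 : y = z
    · subst h1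
      refine ⟨LinearMap.id, fun _ x => rfl, fun _ h0 => ?_⟩
      obtain ⟨x, hx⟩ := exists_ne (0 : D.P y)
      exact hx (LinearMap.congr_fun h0 x)
    · by_cases h : D.le y z
      · obtain ⟨g, hg⟩ := id h
        exact ⟨g, fun h => absurd h h1, fun _ => hg⟩
      · exact ⟨0, fun h => absurd h h1, fun h' => absurd h' h⟩
  choose e h1 h2 using h0
  exact ⟨e, fun y x => h1 y y rfl x, h2⟩

def crF (K : Type) [Field K] : ℕ → ℕ → K := fun v w => if v = w ∨ v = w + 1 then 1 else 0

lemma crF_L (A : ℕ → ℕ → K) (v w N : ℕ) (hw : w < N) : ∑ j : Fin (N + 1), A v j * crF K j w = A v w + A v (w + 1) := by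
  rw [Fin.sum_univ_eq_sum_range (fun j => A v j * crF K j w) (N + 1)]
  have : ∀ j, A v j * crF K j w = (if j = w then A v j else 0) + (if j = w + 1 then A v j else 0) := by
    intro j; unfold crF
    split_ifs <;> first | omega | simp
  simp only [this, Finset.sum_add_distrib, Finset.sum_ite_eq', Finset.mem_range]
  rw [if_pos (by omega), if_pos (by omega)]

lemma crF_R (B : ℕ → ℕ → K) (v w N : ℕ) (hv : v ≤ N) : ∑ j : Fin N, crF K v j * B j w =
    (if v < N then B v w else 0) + (if 1 ≤ v then B (v - 1) w else 0) := by
  rw [Fin.sum_univ_eq_sum_range (fun j => crF K v j * B j w) N]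
  have : ∀ j, crF K v j * B j w = (if j = v then B j w else 0) + (if j + 1 = v then B j w else 0) := by
    intro j; unfold crF
    split_ifs <;> first | omega | simp
  simp only [this, Finset.sum_add_distrib, Finset.sum_ite_eq', Finset.mem_range]
  congr 1
  rcases v with _ | v
  · simp
  · have h2 : ∀ j, (j + 1 = v + 1) = (j = v) := fun j => by simp
    simp only [h2, Finset.sum_ite_eq', Finset.mem_range]
    rw [if_pos (by omega), if_pos (by omega)]; rfl

lemma PD.no_crown [IsArtinianRing R] (K : Type) [Field K] [Algebra K R] [FiniteDimensional K R] [IsAlgClosed K] (hB : BD R)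
    (p : ℕ) (hp : 2 ≤ p) (b t : ℕ → D.S)
    (hbb : ∀ u v, D.le (b u) (b v) ↔ u ≡ v [MOD p]) (htt : ∀ u v, D.le (t u) (t v) ↔ u ≡ v [MOD p])
    (hbt : ∀ u v, D.le (b u) (t v) ↔ v ≡ u [MOD p] ∨ v ≡ u + 1 [MOD p]) : False := by
  obtain ⟨e, he1, he⟩ := exists_e D
  obtain ⟨N, hN⟩ := id hB
  have hbe : ∀ u v, D.le (b u) (b v) → b u = b v := fun u v h => D.le_antisymm h ((hbb _ _).2 ((hbb _ _).1 h).symm)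
  have hte : ∀ u v, D.le (t u) (t v) → t u = t v := fun u v h => D.le_antisymm h ((htt _ _).2 ((htt _ _).1 h).symm)
  have hne : ∀ u v, b u ≠ t v := by
    intro u v h
    have h1 := (hbt u u).2 (Or.inl rfl)
    have h2 := (hbt u (u + 1)).2 (Or.inr rfl)
    rw [h, htt] at h1 h2
    have h3 := (Nat.modEq_iff_dvd' (by omega)).1 (h1.symm.trans h2)
    rw [Nat.add_sub_cancel_left] at h3
    have := Nat.le_of_dvd one_pos h3
    omega
  have hE1 : ∀ y z w, y = z → ∀ x, e z w (e y z x) = e y w x := by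
    rintro y z w rfl x; rw [he1]
  have hE2 : ∀ y z w, z = w → ∀ x, e z w (e y z x) = e y w x := by
    rintro y z w rfl x; rw [he1]
  let f := cm D K e N (N + 1) b t (crF K)
  haveI p1 : Module.Projective R (∀ i : Fin N, D.P (b i)) := proj_pi fun i => D.proj _
  haveI p2 : Module.Projective R (∀ i : Fin (N + 1), D.P (t i)) := proj_pi fun i => D.proj _
  have hL : ∀ A : ℕ → ℕ → K, (∀ v w, ¬ v ≡ w [MOD p] → A v w = 0) → ∀ x, cm D K e (N + 1) (N + 1) t t A (f x) =
      cm D K e N (N + 1) b t (fun v w => A v w + A v (w + 1)) x := by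
    intro A hA x
    rw [cm_comp]
    · refine LinearMap.congr_fun (cm_congr _ _ fun v w hv hw => ?_) x
      exact crF_L A v w N hw
    · intro i j k h1 h2
      have : k ≡ j [MOD p] := by by_contra h; exact h1 (hA _ _ h)
      exact hE2 _ _ _ (hte _ _ ((htt _ _).2 this.symm))
  have hR : ∀ A : ℕ → ℕ → K, (∀ v w, ¬ v ≡ w [MOD p] → A v w = 0) → ∀ x, f (cm D K e N N b b A x) =
      cm D K e N (N + 1) b t (fun v w => (if v < N then A v w else 0) + (if 1 ≤ v then A (v - 1) w else 0)) x := by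
    intro A hA x
    change cm D K e N (N + 1) b t (crF K) _ = _
    rw [cm_comp]
    · refine LinearMap.congr_fun (cm_congr _ _ fun v w hv hw => ?_) x
      exact crF_R A v w N (by omega)
    · intro i j k h1 h2
      have : j ≡ i [MOD p] := by by_contra h; exact h2 (hA _ _ h)
      exact hE1 _ _ _ (hbe _ _ ((hbb _ _).2 this.symm))
  have hlen : N + 1 ≤ len R ((∀ i : Fin (N + 1), D.P (t i)) ⧸ LinearMap.range f) := by
    have := coker_len (fun i : Fin (N + 1) => D.rad (t i)) (fun _ => D.rad_ne _) f (fun x j => by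
      change cm D K e N (N + 1) b t (crF K) x j ∈ _
      rw [cm_apply]
      refine Submodule.sum_mem _ fun i _ => ?_
      exact Submodule.smul_mem _ _ (D.mem_rad (hne _ _) _ _))
    simpa using this
  have hnt : Nontrivial ((∀ i : Fin (N + 1), D.P (t i)) ⧸ LinearMap.range f) := by
    by_contra hc
    rw [not_nontrivial_iff_subsingleton] at hc
    have : len R ((∀ i : Fin (N + 1), D.P (t i)) ⧸ LinearMap.range f) = 0 := by
      unfold len; rw [Module.length_eq_zero]; rfl
    omega
  have := hN ((∀ i : Fin (N + 1), D.P (t i)) ⧸ LinearMap.range f) inferInstance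
    (pres_indec K f (fun α β hαβ => by
      obtain ⟨A, hA, hA'⟩ := cm_ex (K := K) hB he α
      obtain ⟨A2, hA2, hA2'⟩ := cm_ex (K := K) hB he β
      have gA : ∀ v w, ¬ v ≡ w [MOD p] → A v w = 0 := fun v w h => hA _ _ fun h' => h ((htt _ _).1 h').symm
      have gA2 : ∀ v w, ¬ v ≡ w [MOD p] → A2 v w = 0 := fun v w h => hA2 _ _ fun h' => h ((hbb _ _).1 h').symm
      have h1 := cm_inj he (fun v w => A v w + A v (w + 1))
        (fun v w => (if v < N then A2 v w else 0) + (if 1 ≤ v then A2 (v - 1) w else 0)) (fun x => by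
          rw [← hL A gA, ← hR A2 gA2, ← hA', ← hA2', hαβ])
      have h2 := Cr_brick hp A A2 gA gA2 (N := N) (fun v w hv hw => by
        by_cases hle : D.le (b w) (t v)
        · exact h1 v w (by omega) hw hle
        · rw [hbt] at hle
          push Not at hle
          rw [gA v w hle.1, gA v (w + 1) hle.2, gA2 v w hle.1]
          have : 1 ≤ v → A2 (v - 1) w = 0 := fun h => gA2 _ _ fun h' => hle.2 (by
            have := h'.add_right 1
            rwa [Nat.sub_add_cancel h] at this)
          split_ifs <;> simp_all)
      refine ⟨A 0 0, fun x => ?_⟩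
      rw [hA']
      funext j
      rw [cm_apply, Finset.sum_eq_single j]
      · rw [h2 j j (by omega) (by omega), if_pos rfl, he1]; rfl
      · intro i _ hi
        rw [h2 j i (by omega) (by omega), if_neg (fun h => hi (Fin.ext h.symm)), scal_zero]
      · intro hh; exact absurd (Finset.mem_univ _) hh) hnt)
    (pres_tr f (fun φ => by
      obtain ⟨C, hC, hC'⟩ := cm_ex (K := K) hB he φ
      obtain ⟨A, A2, hA, hA2, h⟩ := CrI.all (N := N) (p := p) C (fun v w h => hC _ _ (by rwa [hbt]))
      refine ⟨cm D K e _ _ t t A, cm D K e _ _ b b A2, fun x => ?_⟩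
      rw [hL A hA, hR A2 hA2, ← cm_add, hC']
      exact LinearMap.congr_fun (cm_congr _ _ fun v w hv hw => h v w (by omega) hw) x))
  omega

end Cm


section Sep
lemma rtg_seq {α : Type} {r : α → α → Prop} {a b : α} (h : Relation.ReflTransGen r a b) :
    ∃ (m : ℕ) (s : ℕ → α), s 0 = a ∧ s m = b ∧ ∀ i, i < m → r (s i) (s (i + 1)) := by
  induction h with
  | refl => exact ⟨0, fun _ => a, rfl, rfl, fun i hi => by omega⟩
  | @tail b c _ hbc ih =>
    obtain ⟨m, s, h0, hm, hs⟩ := ih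
    refine ⟨m + 1, fun i => if i ≤ m then s i else c, ?_, ?_, fun i hi => ?_⟩
    · simp [h0]
    · simp
    · by_cases h : i + 1 ≤ m
      · simp only [if_pos h, if_pos (by omega : i ≤ m)]; exact hs i h
      · have : i = m := by omega
        subst this
        simp only [le_refl, if_true, if_neg h]; rw [hm]; exact hbc

variable {D : PD R} [IsArtinianRing R]

def PD.con (D : PD R) (W : Set D.S) (x y z : D.S) : Prop := (D.le y z ∨ D.le z y) ∧ y ∈ W ∧ z ∈ W ∧ y ≠ x ∧ z ≠ x

lemma PD.sep (K : Type) [Field K] [Algebra K R] [FiniteDimensional K R] [IsAlgClosed K] (hB : BD R)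
    (W : Set D.S) (x : D.S) (hmax : ∀ z ∈ W, D.le x z → z = x) (C : D.S → Prop)
    (hC : ∀ y z, D.le y x → D.le z x → y ≠ x → z ≠ x → D.le y z → (C y ↔ C z)) (y y' : D.S)
    (hy : D.le y x) (hy' : D.le y' x) (hyx : y ≠ x) (hyx' : y' ≠ x)
    (h : Relation.ReflTransGen (D.con W x) y y') (hCy : C y) : C y' := by
  classical
  by_contra hCy'
  let r : D.S → D.S → Prop := fun a b => ∃ t, t ∈ W ∧ t ≠ x ∧ D.le a t ∧ D.le b t ∧ a ≠ x ∧ b ≠ x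
  let Q : ℕ → Prop := fun m => ∃ s : ℕ → D.S, (D.le (s 0) x ∧ s 0 ≠ x ∧ C (s 0)) ∧
    (D.le (s m) x ∧ s m ≠ x ∧ ¬ C (s m)) ∧ ∀ i, i < m → r (s i) (s (i + 1))
  have hQ : ∃ m, Q m := by
    have h1 : Relation.ReflTransGen r y y' := Relation.ReflTransGen.mono (by
      rintro a b ⟨hab | hab, ha, hb, hax, hbx⟩
      · exact ⟨b, hb, hbx, hab, D.le_refl b, hax, hbx⟩
      · exact ⟨a, ha, hax, D.le_refl a, hab, hax, hbx⟩) _ _ h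
    obtain ⟨m, s, h0, hm, hs⟩ := rtg_seq h1
    exact ⟨m, s, by rw [h0]; exact ⟨hy, hyx, hCy⟩, by rw [hm]; exact ⟨hy', hyx', hCy'⟩, hs⟩
  obtain ⟨m, ⟨b, h0, hm, hs⟩, hmin⟩ : ∃ m, Q m ∧ ∀ k < m, ¬ Q k :=
    ⟨Nat.find hQ, Nat.find_spec hQ, fun k hk => Nat.find_min hQ hk⟩
  have hm1 : 1 ≤ m := by
    by_contra h
    have : m = 0 := by omega
    subst this
    exact hm.2.2 h0.2.2
  -- the tops
  have ht' : ∀ i, ∃ t, 1 ≤ i → i ≤ m → t ∈ W ∧ t ≠ x ∧ D.le (b (i - 1)) t ∧ D.le (b i) t := by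
    intro i
    by_cases hi : 1 ≤ i ∧ i ≤ m
    · obtain ⟨t, h1, h2, h3, h4, -, -⟩ := hs (i - 1) (by omega)
      rw [Nat.sub_add_cancel hi.1] at h4
      exact ⟨t, fun _ _ => ⟨h1, h2, h3, h4⟩⟩
    · exact ⟨x, fun h1 h2 => absurd ⟨h1, h2⟩ hi⟩
  choose t ht using ht'
  have hbx : ∀ i, i ≤ m → b i ≠ x := by
    intro i hi
    rcases Nat.lt_or_ge i m with h | h
    · obtain ⟨t, -, -, -, -, h1, -⟩ := hs i h
      exact h1
    · have : i = m := by omega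
      subst this; exact hm.2.1
  -- shortcut: from b i to b j
  have hcut : ∀ i j, i + 1 < j → j ≤ m → ¬ r (b i) (b j) := by
    intro i j hij hj hr
    refine hmin (m - (j - i - 1)) (by omega) ⟨fun k => if k ≤ i then b k else b (k + (j - i - 1)), ?_, ?_, ?_⟩
    · simpa using h0
    · dsimp only
      rw [if_neg (by omega), Nat.sub_add_cancel (by omega)]; exact hm
    · intro k hk
      dsimp only
      rcases lt_trichotomy k i with h | h | h
      · rw [if_pos (by omega), if_pos (by omega)]; exact hs k (by omega)
      · rw [if_pos (by omega), if_neg (by omega), h]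
        have : i + 1 + (j - i - 1) = j := by omega
        rw [this]; exact hr
      · rw [if_neg (by omega), if_neg (by omega)]
        have : k + 1 + (j - i - 1) = (k + (j - i - 1)) + 1 := by omega
        rw [this]; exact hs _ (by omega)
  have hint : ∀ i, i ≤ m → D.le (b i) x → i = 0 ∨ i = m := by
    intro i him hi
    by_contra hc
    by_cases hCi : C (b i)
    · refine hmin (m - i) (by omega) ⟨fun k => b (k + i), ?_, ?_, fun k hk => ?_⟩
      · simp only [zero_add]; exact ⟨hi, hbx i him, hCi⟩
      · simp only [Nat.sub_add_cancel him]; exact hm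
      · have : k + 1 + i = k + i + 1 := by omega
        simp only [this]; exact hs _ (by omega)
    · exact hmin i (by omega) ⟨b, h0, ⟨hi, hbx i him, hCi⟩, fun k hk => hs k (by omega)⟩
  have hC1 : ∀ y z, D.le y x → D.le z x → y ≠ x → z ≠ x → C y → ¬ C z → ¬ D.le y z ∧ ¬ D.le z y := by
    intro y z h1 h2 h3 h4 h5 h6
    exact ⟨fun h => h6 ((hC y z h1 h2 h3 h4 h).1 h5), fun h => h6 ((hC z y h2 h1 h4 h3 h).2 h5)⟩
  have htx : ∀ i, 1 ≤ i → i ≤ m → ¬ D.le (t i) x := by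
    intro i h1 h2 h
    obtain ⟨-, g1, g2, g3⟩ := ht i h1 h2
    have e1 := hint (i - 1) (by omega) (D.le_trans g2 h)
    have e2 := hint i h2 (D.le_trans g3 h)
    have e3 : i = 1 := by omega
    have e4 : m = 1 := by omega
    subst e3 e4
    have a1 := (hC (b 0) (t 1) h0.1 h h0.2.1 g1 g2).1 h0.2.2
    exact hm.2.2 ((hC (b 1) (t 1) hm.1 h hm.2.1 g1 g3).2 a1)
  have hxt : ∀ i, 1 ≤ i → i ≤ m → ¬ D.le x (t i) := fun i h1 h2 h =>
    (ht i h1 h2).2.1 (hmax _ (ht i h1 h2).1 h)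
  have hbt : ∀ i j, i ≤ m → 1 ≤ j → j ≤ m → (D.le (b i) (t j) ↔ j = i ∨ j = i + 1) := by
    intro i j hi hj1 hj
    obtain ⟨g0, g1, g2, g3⟩ := ht j hj1 hj
    constructor
    · intro h
      by_contra hc
      rcases Nat.lt_or_ge j i with h1 | h1
      · exact hcut (j - 1) i (by omega) hi ⟨t j, g0, g1, g2, h, hbx _ (by omega), hbx _ hi⟩
      · exact hcut i j (by omega) hj ⟨t j, g0, g1, h, g3, hbx _ (by omega), hbx _ hj⟩
    · rintro (rfl | rfl)
      · exact g3
      · exact g2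
  have hbx' : ∀ i, i ≤ m → (D.le (b i) x ↔ i = 0 ∨ i = m) := fun i hi => ⟨hint i hi, by
    rintro (rfl | rfl)
    · exact h0.1
    · exact hm.1⟩
  have hbb : ∀ i j, i ≤ m → j ≤ m → (D.le (b i) (b j) ↔ i = j) := by
    intro i j hi hj
    refine ⟨fun h => ?_, by rintro rfl; exact D.le_refl _⟩
    by_contra hc
    have f1 : 1 ≤ j → j = i ∨ j = i + 1 := fun h1 => (hbt i j hi h1 hj).1 (D.le_trans h (ht j h1 hj).2.2.2)
    have f2 : j < m → j + 1 = i ∨ j + 1 = i + 1 := fun h1 =>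
      (hbt i (j + 1) hi (by omega) h1).1 (D.le_trans h (by simpa using (ht (j + 1) (by omega) h1).2.2.1))
    have f3 : j = 0 ∨ j = m → i = 0 ∨ i = m := fun h1 => (hbx' i hi).1 (D.le_trans h ((hbx' j hj).2 h1))
    have hcc := hC1 _ _ h0.1 hm.1 h0.2.1 hm.2.1 h0.2.2 hm.2.2
    have : (i = 0 ∧ j = m) ∨ (i = m ∧ j = 0) := by omega
    rcases this with ⟨rfl, rfl⟩ | ⟨rfl, rfl⟩
    · exact hcc.1 h
    · exact hcc.2 h
  have htt : ∀ i j, 1 ≤ i → i ≤ m → 1 ≤ j → j ≤ m → (D.le (t i) (t j) ↔ i = j) := by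
    intro i j hi1 hi hj1 hj
    refine ⟨fun h => ?_, by rintro rfl; exact D.le_refl _⟩
    have f1 := (hbt i j hi hj1 hj).1 (D.le_trans (ht i hi1 hi).2.2.2 h)
    have f2 := (hbt (i - 1) j (by omega) hj1 hj).1 (D.le_trans (ht i hi1 hi).2.2.1 h)
    omega
  have hlt : ∀ u, u % (m + 1) ≤ m := fun u => Nat.lt_succ_iff.1 (Nat.mod_lt u (by omega))
  refine D.no_crown K hB (m + 1) (by omega) (fun u => b (u % (m + 1)))
    (fun v => if v % (m + 1) = 0 then x else t (v % (m + 1))) (fun u v => hbb _ _ (hlt u) (hlt v)) (fun u v => ?_) (fun u v => ?_)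
  · have h1 := hlt u
    have h2 := hlt v
    dsimp only [Nat.ModEq]
    generalize u % (m + 1) = i at *
    generalize v % (m + 1) = j at *
    split_ifs with g1 g2 g2
    · subst g1 g2; exact ⟨fun _ => rfl, fun _ => D.le_refl x⟩
    · exact ⟨fun h => absurd h (hxt j (by omega) h2), fun h => by omega⟩
    · exact ⟨fun h => absurd h (htx i (by omega) h1), fun h => by omega⟩
    · exact htt i j (by omega) h1 (by omega) h2
  · have h1 := hlt u
    have h2 := hlt v
    dsimp only [Nat.ModEq]
    have h3 : (u + 1) % (m + 1) = if u % (m + 1) = m then 0 else u % (m + 1) + 1 := by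
      rw [Nat.add_mod]
      split_ifs with h
      · rw [h]; rcases m with _ | m
        · omega
        · rw [Nat.mod_eq_of_lt (a := 1) (by omega), Nat.mod_self]
      · rw [Nat.mod_eq_of_lt (a := 1) (by omega), Nat.mod_eq_of_lt]; omega
    rw [h3]
    generalize u % (m + 1) = i at *
    generalize v % (m + 1) = j at *
    split_ifs with g1 g2 g2
    · rw [hbx' i h1]; omega
    · rw [hbx' i h1]; omega
    · rw [hbt i j h1 (by omega) h2]; omega
    · rw [hbt i j h1 (by omega) h2]

end Sep


section Md
variable (D : PD R)

def PD.md (W : Set D.S) : MP R := fun M _ _ => Module.Finite R M ∧ ∀ z, z ∉ W → ∀ g : D.P z →ₗ[R] M, g = 0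

def PD.tr (A : Set D.S) (M : Type) [AddCommGroup M] [Module R M] : Submodule R M :=
  ⨆ i : (Σ y : {y : D.S // y ∈ A}, D.P y.1 →ₗ[R] M), LinearMap.range i.2

variable {D} {M N L : Type} [AddCommGroup M] [Module R M] [AddCommGroup N] [Module R N] [AddCommGroup L] [Module R L]
  {A W : Set D.S}

lemma PD.mem_tr {y : D.S} (hy : y ∈ A) (g : D.P y →ₗ[R] M) (x : D.P y) : g x ∈ D.tr A M :=
  Submodule.mem_iSup_of_mem (⟨⟨y, hy⟩, g⟩ : Σ y : {y : D.S // y ∈ A}, D.P y.1 →ₗ[R] M) ⟨x, rfl⟩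

lemma PD.tr_le {L : Submodule R M} (h : ∀ y ∈ A, ∀ (g : D.P y →ₗ[R] M) x, g x ∈ L) : D.tr A M ≤ L :=
  iSup_le fun i => by rintro _ ⟨x, rfl⟩; exact h i.1.1 i.1.2 i.2 x

lemma PD.tr_map (f : M →ₗ[R] N) {m : M} (hm : m ∈ D.tr A M) : f m ∈ D.tr A N := by
  have : D.tr A M ≤ (D.tr A N).comap f := PD.tr_le fun y hy g x => PD.mem_tr hy (f ∘ₗ g) x
  exact this hm

lemma PD.tr_hom {w : D.S} (g : D.P w →ₗ[R] D.tr A M) (hg : g ≠ 0) : ∃ y ∈ A, D.le w y := by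
  classical
  by_contra hc
  push Not at hc
  apply hg
  let I := (Σ y : {y : D.S // y ∈ A}, D.P y.1 →ₗ[R] M)
  let Φ : (Π₀ i : I, D.P i.1.1) →ₗ[R] M := DFinsupp.lsum ℕ fun i : I => i.2
  have hΦ : ∀ m, m ∈ D.tr A M → ∃ v, Φ v = m := by
    intro m hm
    have : D.tr A M ≤ LinearMap.range Φ := iSup_le fun i => by
      rintro _ ⟨x, rfl⟩
      exact ⟨DFinsupp.single i x, by simp [Φ]⟩
    exact this hm
  have hΦ' : ∀ v, Φ v ∈ D.tr A M := by
    intro v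
    simp only [Φ, DFinsupp.lsum_apply_apply, DFinsupp.sumAddHom_apply]
    exact Submodule.sum_mem _ fun i _ => PD.mem_tr i.1.2 i.2 _
  obtain ⟨h, hh⟩ := proj_lift (Φ.codRestrict (D.tr A M) hΦ') (fun m => by
    obtain ⟨v, hv⟩ := hΦ m m.2; exact ⟨v, Subtype.ext hv⟩) g
  have h0 : h = 0 := by
    refine LinearMap.ext fun x => DFinsupp.ext fun i => ?_
    by_contra hne
    exact hc i.1.1 i.1.2 ⟨(DFinsupp.lapply i : (Π₀ i : I, D.P i.1.1) →ₗ[R] D.P i.1.1) ∘ₗ h, fun h0 => hne (LinearMap.congr_fun h0 x)⟩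
  refine LinearMap.ext fun x => ?_
  rw [← hh, h0, LinearMap.zero_apply, map_zero, LinearMap.zero_apply]

lemma PD.md_top (h : D.md A M) : D.tr A M = ⊤ := by
  rw [eq_top_iff]
  intro m _
  rw [← Submodule.Quotient.mk_eq_zero]
  refine D.gen _ (fun y g => ?_) _
  obtain ⟨g', hg'⟩ := proj_lift (D.tr A M).mkQ (Submodule.mkQ_surjective _) g
  refine LinearMap.ext fun x => ?_
  rw [← hg']
  by_cases hy : y ∈ A
  · exact (Submodule.Quotient.mk_eq_zero _).2 (PD.mem_tr hy g' x)
  · rw [h.2 y hy g']; simp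

lemma PD.md_mono (hAW : A ⊆ W) (h : D.md A M) : D.md W M := ⟨h.1, fun z hz => h.2 z fun h' => hz (hAW h')⟩

lemma PD.md_quot (f : M →ₗ[R] N) (hf : Surjective f) (h : D.md W M) : D.md W N := by
  have := h.1
  refine ⟨Module.Finite.of_surjective f hf, fun z hz g => ?_⟩
  obtain ⟨g', hg'⟩ := proj_lift f hf g
  refine LinearMap.ext fun x => ?_
  rw [← hg', h.2 z hz g']; simp

/-- a nonzero module admits a nonzero map from some `P y` -/
lemma PD.hom_ne (g : M →ₗ[R] N) (hg : g ≠ 0) : ∃ y, ∃ h : D.P y →ₗ[R] M, g ∘ₗ h ≠ 0 := by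
  by_contra hc
  push Not at hc
  apply hg
  refine LinearMap.ext fun m => ?_
  have h1 := D.gen (LinearMap.range g) (fun y h => by
    obtain ⟨h', hh'⟩ := proj_lift g.rangeRestrict g.surjective_rangeRestrict h
    refine LinearMap.ext fun x => ?_
    rw [← hh']
    exact Subtype.ext (LinearMap.congr_fun (hc y h') x)) (g.rangeRestrict m)
  exact congrArg Subtype.val h1

lemma PD.hom_zero_of (hM : D.md A M) (hN : D.md W N) (hd : ∀ y, y ∈ A → y ∈ W → False) (g : M →ₗ[R] N) : g = 0 := by
  by_contra hg
  obtain ⟨y, h, hh⟩ := D.hom_ne g hg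
  by_cases hy : y ∈ A
  · exact hh (hN.2 y (hd y hy) _)
  · exact hh (by rw [hM.2 y hy h]; simp)

variable [IsArtinianRing R]

lemma PD.md_sub (f : M →ₗ[R] N) (hf : Injective f) (h : D.md W N) : D.md W M := by
  have := h.1
  refine ⟨fin_inj f hf, fun z hz g => ?_⟩
  refine LinearMap.ext fun x => hf ?_
  have := LinearMap.congr_fun (h.2 z hz (f ∘ₗ g)) x
  rw [LinearMap.zero_apply, map_zero]; exact this

lemma PD.md_ext (g : M →ₗ[R] N) (hg : Surjective g) (hk : D.md W (LinearMap.ker g)) (hN : D.md W N) : D.md W M := by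
  have := hk.1
  have := hN.1
  refine ⟨?_, fun z hz f => ?_⟩
  · have : Module.Finite R (M ⧸ LinearMap.ker g) :=
      Module.Finite.equiv (LinearMap.quotKerEquivOfSurjective g hg).symm
    exact Module.Finite.of_submodule_quotient (LinearMap.ker g)
  · have h1 := hN.2 z hz (g ∘ₗ f)
    have h2 := hk.2 z hz (f.codRestrict _ fun x => LinearMap.congr_fun h1 x)
    exact LinearMap.ext fun x => congrArg Subtype.val (LinearMap.congr_fun h2 x)

lemma PD.md_tors : Tors (D.md W) :=
  ⟨fun _ _ _ h => h.1, fun g hg h => PD.md_quot g hg h, fun g hg h h' => PD.md_ext g hg h h'⟩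

lemma PD.md_tr [Module.Finite R M] (h : ∀ w, ∀ y ∈ A, D.le w y → w ∈ W) : D.md W (D.tr A M) := by
  refine ⟨inferInstance, fun z hz g => ?_⟩
  by_contra hg
  obtain ⟨y, hy, hle⟩ := PD.tr_hom g hg
  exact hz (h z y hy hle)

lemma PD.md_rad (x : D.S) : D.md {w | D.le w x ∧ w ≠ x} (D.rad x) := by
  refine ⟨inferInstance, fun z hz g => ?_⟩
  by_contra hg
  have h1 : (D.rad x).subtype ∘ₗ g ≠ 0 := fun h => hg (LinearMap.ext fun v => Subtype.ext (LinearMap.congr_fun h v))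
  apply hz
  refine ⟨⟨_, h1⟩, ?_⟩
  rintro rfl
  have h2 := (bij_of_inj _ (D.inj _ _ _ h1)).2
  apply D.rad_ne z
  rw [eq_top_iff]
  intro v _
  obtain ⟨u, rfl⟩ := h2 v
  exact (g u).2

/-- Lemma 1 -/
lemma PD.lem1 (K : Type) [Field K] [Algebra K R] [FiniteDimensional K R] [IsAlgClosed K]
    (hW : ∀ y z, D.le y z → z ∈ W → y ∈ W) {x : D.S} (hx : x ∈ W)
    (hmax : ∀ z ∈ W, D.le x z → z = x) {Z Y : ModCat R} (hZ : Indec R Z) (hZW : D.md W Z)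
    (hZB : ¬ D.md (W \ {x}) Z) (hY : Indec R Y) (hYB : D.md (W \ {x}) Y) (g : Z →ₗ[R] Y) (hg : g ≠ 0) :
    ∃ X : ModCat R, Indec R X ∧ D.md (W \ {x}) X ∧ (∃ h : D.rad x →ₗ[R] X, h ≠ 0) ∧
      ∃ u : X →ₗ[R] Y, u ≠ 0 ∧ ¬ Bijective u := by
  classical
  have hfZ := hZW.1
  have hfY := hYB.1
  have hradB : D.md (W \ {x}) (D.rad x) := PD.md_mono (fun w hw => ⟨hW _ _ hw.1 hx, hw.2⟩) (PD.md_rad x)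
  let ZB := D.tr (W \ {x}) Z
  have hZBB : D.md (W \ {x}) ZB := PD.md_tr fun w y hy hle => ⟨hW _ _ hle hy.1, fun h => by
    have h' : w = x := h
    subst h'; exact hy.2 (hmax _ hy.1 hle)⟩
  have hfZB := hZBB.1
  obtain ⟨k, h, hb, hi⟩ := hom_basis (R := R) (D.P x) Z K
  let c : (Fin k → D.P x) →ₗ[R] Z := ∑ j, h j ∘ₗ LinearMap.proj j
  have hc : ∀ v, c v = ∑ j, h j (v j) := fun v => by simp [c, LinearMap.sum_apply]
  have hspan : ∀ z : Z, ∃ (a : ZB) (v : Fin k → D.P x), (a : Z) + c v = z := by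
    have : D.tr W Z ≤ ZB ⊔ LinearMap.range c := PD.tr_le fun y hy g u => by
      by_cases hyx : y = x
      · subst hyx
        obtain ⟨d, hd⟩ := hb g
        refine Submodule.mem_sup_right ⟨fun j => scal R _ K (d j) u, ?_⟩
        rw [hc, hd]
        exact Finset.sum_congr rfl fun j _ => map_scal _ _ _
      · exact Submodule.mem_sup_left (PD.mem_tr (A := W \ {x}) (show y ∈ W \ {x} from ⟨hy, hyx⟩) g u)
    intro z
    have h1 : z ∈ D.tr W Z := by rw [PD.md_top hZW]; trivial
    obtain ⟨a, ha, b, ⟨v, rfl⟩, hab⟩ := Submodule.mem_sup.1 (this h1)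
    exact ⟨⟨a, ha⟩, v, hab⟩
  have hL : ∀ v, c v ∈ ZB → ∀ j, v j ∈ D.rad x := by
    intro v hv j
    let L : Submodule R (Fin k → D.P x) := ZB.comap c
    let pj : L →ₗ[R] D.P x := LinearMap.proj j ∘ₗ L.subtype
    rcases D.rad_max x (LinearMap.range pj) with ht | ht
    · exfalso
      obtain ⟨σ, hσ⟩ := proj_lift pj (LinearMap.range_eq_top.1 ht) LinearMap.id
      choose d hd using fun i => D.end_scal K x (LinearMap.proj i ∘ₗ L.subtype ∘ₗ σ)
      have h0 : ((c ∘ₗ L.subtype).codRestrict ZB (fun l => l.2)) ∘ₗ σ = 0 :=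
        hZBB.2 x (fun h => h.2 rfl) _
      have h1 := hi d (fun m => by
        have e1 : c (σ m : Fin k → D.P x) = 0 := congrArg Subtype.val (LinearMap.congr_fun h0 m)
        rw [hc] at e1
        rw [← e1]
        refine Finset.sum_congr rfl fun i _ => ?_
        rw [← map_scal, ← hd]; rfl)
      obtain ⟨m, hm⟩ := exists_ne (0 : D.P x)
      have h2 : m = scal R _ K (d j) m := (hσ m).symm.trans (hd j m)
      rw [h1, Pi.zero_apply, scal_zero] at h2
      exact hm h2
    · exact ht ⟨⟨v, hv⟩, rfl⟩
  have hrB : ∀ j (u : D.rad x), h j u ∈ ZB := by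
    intro j u
    have h1 : u ∈ D.tr (W \ {x}) (D.rad x) := by rw [PD.md_top hradB]; trivial
    exact PD.tr_map (h j ∘ₗ (D.rad x).subtype) h1
  have hgc : ∀ v, g (c v) = 0 := by
    intro v
    rw [hc, map_sum]
    exact Finset.sum_eq_zero fun j _ => LinearMap.congr_fun (hYB.2 x (fun h => h.2 rfl) (g ∘ₗ h j)) _
  have hg0 : g ∘ₗ ZB.subtype ≠ 0 := by
    intro h0
    apply hg
    refine LinearMap.ext fun z => ?_
    obtain ⟨a, v, rfl⟩ := hspan z
    rw [map_add, hgc, add_zero]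
    exact LinearMap.congr_fun h0 a
  obtain ⟨s, hs⟩ := exists_indec_src (g ∘ₗ ZB.subtype) hg0
  have hsn := s.ind.1
  have hsfin := s.fin
  have hWB : D.md (W \ {x}) s.W := PD.md_quot s.a (fun y => ⟨s.b y, s.ab y⟩) hZBB
  have hnoretr : ∀ (Y : ModCat R), Nontrivial Y → D.md (W \ {x}) Y → ∀ (i : Y →ₗ[R] Z) (p : Z →ₗ[R] Y), ¬ ∀ y, p (i y) = y := by
    intro Y _ hY i p hip
    have h1 := hZ.bij_of_retract i p (LinearMap.ext hip)
    exact hZB (PD.md_quot i h1.1.2 hY)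
  refine ⟨s.W, s.ind, hWB, ?_, _, hs, fun hbij => ?_⟩
  · by_contra hno
    push Not at hno
    let q : (ZB × (Fin k → D.P x)) →ₗ[R] Z := ZB.subtype.coprod c
    obtain ⟨p, hp⟩ := desc q (fun z => by
      obtain ⟨a, v, hav⟩ := hspan z
      exact ⟨(a, v), hav⟩) (s.a ∘ₗ LinearMap.fst R _ _) (by
      rintro ⟨a, v⟩ h0
      have h0' : (a : Z) + c v = 0 := h0
      have hcv : c v = ((-a : ZB) : Z) := by
        rw [Submodule.coe_neg]; exact (neg_eq_of_add_eq_zero_right h0').symm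
      have hr := hL v (by rw [hcv]; exact (-a).2)
      have e1 : -a = ∑ j, (⟨h j (v j), hrB j ⟨v j, hr j⟩⟩ : ZB) := by
        apply Subtype.ext
        rw [← hcv, hc, AddSubmonoidClass.coe_finsetSum]
      have e2 : s.a (-a) = 0 := by
        rw [e1, map_sum]
        refine Finset.sum_eq_zero fun j _ => ?_
        exact LinearMap.congr_fun (hno (s.a ∘ₗ ((h j ∘ₗ (D.rad x).subtype).codRestrict ZB (hrB j)))) ⟨v j, hr j⟩
      rw [map_neg, neg_eq_zero] at e2
      exact e2)
    refine hnoretr s.W s.ind.1 hWB (ZB.subtype ∘ₗ s.b) p fun y => ?_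
    have h1 := hp (s.b y, 0)
    have h2 : q (s.b y, 0) = (s.b y : Z) := by simp [q]
    rw [h2] at h1
    exact h1.trans (s.ab y)
  · let E := LinearEquiv.ofBijective ((g ∘ₗ ZB.subtype) ∘ₗ s.b) hbij
    exact hnoretr Y hY.1 hYB (ZB.subtype ∘ₗ s.b ∘ₗ E.symm.toLinearMap) g fun y => E.apply_symm_apply y

end Md


section Blk
variable {D : PD R} [IsArtinianRing R]

lemma PD.block {A A' : Set D.S} (hA : ∀ w y, D.le w y → y ∈ A → w ∈ A) (hA' : ∀ w y, D.le w y → y ∈ A' → w ∈ A')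
    (hd : ∀ w, w ∈ A → w ∈ A' → False) (Y : ModCat R) (hY : Indec R Y) (h : D.md (A ∪ A') Y) :
    D.md A Y ∨ D.md A' Y := by
  have hf := h.1
  have hmA : D.md A (D.tr A Y) := PD.md_tr fun w y hy hle => hA w y hle hy
  have hmA' : D.md A' (D.tr A' Y) := PD.md_tr fun w y hy hle => hA' w y hle hy
  let q : (D.tr A Y × D.tr A' Y) →ₗ[R] Y := (D.tr A Y).subtype.coprod (D.tr A' Y).subtype
  have hq : Surjective q := by
    intro m
    have h1 : D.tr (A ∪ A') Y ≤ LinearMap.range q := PD.tr_le fun y hy g u => by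
      rcases hy with hy | hy
      · exact ⟨(⟨g u, PD.mem_tr hy g u⟩, 0), by simp [q]⟩
      · exact ⟨(0, ⟨g u, PD.mem_tr hy g u⟩), by simp [q]⟩
    have h2 : m ∈ D.tr (A ∪ A') Y := by rw [PD.md_top h]; trivial
    exact h1 h2
  have hz : ∀ m : Y, m ∈ D.tr A Y → m ∈ D.tr A' Y → m = 0 := by
    intro m h1 h2
    let I : Submodule R Y := D.tr A Y ⊓ D.tr A' Y
    have i1 : D.md A I := PD.md_sub (Submodule.inclusion inf_le_left) (Submodule.inclusion_injective _) hmA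
    have i2 : D.md A' I := PD.md_sub (Submodule.inclusion inf_le_right) (Submodule.inclusion_injective _) hmA'
    have := PD.hom_zero_of i1 i2 hd LinearMap.id
    exact congrArg Subtype.val (LinearMap.congr_fun this ⟨m, h1, h2⟩)
  obtain ⟨e, he⟩ := desc q hq ((D.tr A Y).subtype ∘ₗ LinearMap.fst R _ _) (by
    rintro ⟨a, b⟩ h0
    have h0' : (a : Y) + b = 0 := h0
    refine hz _ a.2 ?_
    have : (a : Y) = -(b : Y) := eq_neg_of_add_eq_zero_left h0'
    show (a : Y) ∈ _
    rw [this]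
    exact Submodule.neg_mem _ b.2)
  have heA : ∀ a : D.tr A Y, e a = a := fun a => by
    have := he (a, 0)
    have h2 : q (a, 0) = a := by simp [q]
    rw [h2] at this; exact this
  have heA' : ∀ a : D.tr A' Y, e a = 0 := fun a => by
    have := he (0, a)
    have h2 : q (0, a) = a := by simp [q]
    rw [h2] at this; simpa using this
  rcases hY.2 e (by
    refine LinearMap.ext fun m => ?_
    obtain ⟨⟨a, b⟩, rfl⟩ := hq m
    show e (e _) = e _
    rw [he]; exact heA a) with h0 | h0
  · right
    refine PD.md_quot (D.tr A' Y).subtype (fun m => ?_) hmA'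
    obtain ⟨⟨a, b⟩, hab⟩ := hq m
    refine ⟨b, ?_⟩
    rw [← hab]
    have h1 : (a : Y) = 0 := by rw [← heA a, h0]; rfl
    show (b : Y) = (a : Y) + b
    rw [h1, zero_add]
  · left
    refine PD.md_quot (D.tr A Y).subtype (fun m => ?_) hmA
    obtain ⟨⟨a, b⟩, hab⟩ := hq m
    refine ⟨a, ?_⟩
    rw [← hab]
    have h1 : (b : Y) = 0 := by rw [← heA' b, h0]; rfl
    show (a : Y) = (a : Y) + b
    rw [h1, add_zero]

def PD.cl (D : PD R) (W : Set D.S) (x y0 : D.S) : Set D.S := {z | Relation.ReflTransGen (D.con W x) y0 z}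

def PD.pr (D : PD R) (W : Set D.S) (Z Y : ModCat R) : Prop :=
  Indec R Z ∧ D.md W Z ∧ Indec R Y ∧ D.md W Y ∧ ∃ g : Z →ₗ[R] Y, g ≠ 0

def PD.Good (D : PD R) (W : Set D.S) (x : D.S) (Y : ModCat R) : Prop :=
  Indec R Y ∧ D.md W Y ∧ ∀ Z, Relation.ReflTransGen (D.pr W) Z Y → D.md (W \ {x}) Z

def PD.DR (D : PD R) (W : Set D.S) (r : ModCat R → ℕ) : Prop := ∀ Y Y' : ModCat R, Indec R Y → D.md W Y →
  Indec R Y' → D.md W Y' → ∀ g : Y →ₗ[R] Y', g ≠ 0 → r Y ≤ r Y' ∧ (r Y = r Y' → Bijective g)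

lemma PD.Good.pred {W : Set D.S} {x : D.S} {Z Y : ModCat R} (h : D.Good W x Y) (hp : D.pr W Z Y) : D.Good W x Z :=
  ⟨hp.1, hp.2.1, fun _ hV => h.2.2 _ (hV.tail hp)⟩


structure PD.Ctx (D : PD R) (W : Set D.S) (x : D.S) : Prop where
  dn : ∀ y z, D.le y z → z ∈ W → y ∈ W
  hx : x ∈ W
  mx : ∀ z ∈ W, D.le x z → z = x

section
variable {W : Set D.S} {x y0 : D.S}

lemma PD.Ctx.dn' (h : D.Ctx W x) (w y : D.S) (hle : D.le w y) (hy : y ∈ W \ {x}) : w ∈ W \ {x} :=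
  ⟨h.dn _ _ hle hy.1, fun h0 => by
    have h' : w = x := h0
    subst h'; exact hy.2 (h.mx _ hy.1 hle)⟩

lemma PD.Ctx.lt (h : D.Ctx W x) (y : D.S) (hy : D.le y x) (hyx : y ≠ x) : y ∈ W \ {x} := ⟨h.dn _ _ hy h.hx, hyx⟩

lemma PD.cl_sub (h0 : y0 ∈ W \ {x}) : D.cl W x y0 ⊆ W \ {x} := by
  intro z hz
  rcases Relation.ReflTransGen.cases_tail hz with h | ⟨c, _, h⟩
  · rw [h]; exact h0
  · exact ⟨h.2.2.1, h.2.2.2.2⟩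

lemma PD.cl_adj (h0 : y0 ∈ W \ {x}) {y w : D.S} (hy : y ∈ D.cl W x y0) (hw : w ∈ W \ {x})
    (h : D.le y w ∨ D.le w y) : w ∈ D.cl W x y0 :=
  Relation.ReflTransGen.tail hy ⟨h, (PD.cl_sub h0 hy).1, hw.1, (PD.cl_sub h0 hy).2, hw.2⟩

lemma PD.Ctx.cl_dn (h : D.Ctx W x) (h0 : y0 ∈ W \ {x}) (w y : D.S) (hle : D.le w y) (hy : y ∈ D.cl W x y0) :
    w ∈ D.cl W x y0 :=
  PD.cl_adj h0 hy (h.dn' w y hle (PD.cl_sub h0 hy)) (Or.inr hle)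

lemma PD.Ctx.blk (h : D.Ctx W x) (h0 : y0 ∈ W \ {x}) (Y : ModCat R) (hY : Indec R Y) (hm : D.md (W \ {x}) Y) :
    D.md (D.cl W x y0) Y ∨ D.md ((W \ {x}) \ D.cl W x y0) Y := by
  refine PD.block (A := D.cl W x y0) (A' := (W \ {x}) \ D.cl W x y0) (h.cl_dn h0) (fun w y hle hy => ⟨h.dn' w y hle hy.1, fun hw => hy.2 ?_⟩) (fun w h1 h2 => h2.2 h1) Y hY ?_
  · exact PD.cl_adj h0 hw hy.1 (Or.inl hle)
  · rwa [Set.union_diff_cancel (PD.cl_sub h0)]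

lemma PD.Ctx.blk_hom (h : D.Ctx W x) (h0 : y0 ∈ W \ {x}) (Z Y : ModCat R) (hZ : Indec R Z)
    (hm : D.md (W \ {x}) Z) (hY : D.md (D.cl W x y0) Y) (g : Z →ₗ[R] Y) (hg : g ≠ 0) :
    D.md (D.cl W x y0) Z := by
  rcases h.blk h0 Z hZ hm with h1 | h1
  · exact h1
  · exact absurd (PD.hom_zero_of h1 hY (fun w h1 h2 => h1.2 h2) g) hg

/-- the component of the radical -/
def PD.ra (D : PD R) (W : Set D.S) (x y0 : D.S) : ModCat R :=
  ModuleCat.of R (D.tr (D.cl W x y0 ∩ {y | D.le y x}) (D.P x))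

def PD.rai (D : PD R) (W : Set D.S) (x y0 : D.S) : D.ra W x y0 →ₗ[R] D.P x :=
  (D.tr (D.cl W x y0 ∩ {y | D.le y x}) (D.P x)).subtype

lemma PD.rai_inj : Injective (D.rai W x y0) := Subtype.val_injective

lemma PD.ra_lift (M : Type) [AddCommGroup M] [Module R M] (g : M →ₗ[R] D.P x)
    (hg : ∀ m, g m ∈ D.tr (D.cl W x y0 ∩ {y | D.le y x}) (D.P x)) :
    ∃ g' : M →ₗ[R] D.ra W x y0, ∀ m, D.rai W x y0 (g' m) = g m :=
  ⟨g.codRestrict _ hg, fun m => rfl⟩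

lemma PD.ra_lift' {y : D.S} (hy : y ∈ D.cl W x y0) (g : D.P y →ₗ[R] D.P x) :
    ∃ g' : D.P y →ₗ[R] D.ra W x y0, ∀ m, D.rai W x y0 (g' m) = g m := by
  refine PD.ra_lift _ g fun m => ?_
  by_cases h0 : g = 0
  · rw [h0]; exact Submodule.zero_mem _
  · exact PD.mem_tr (A := D.cl W x y0 ∩ {y | D.le y x}) ⟨hy, ⟨g, h0⟩⟩ g m

lemma PD.Ctx.ra_md (h : D.Ctx W x) (h0 : y0 ∈ W \ {x}) :
    D.md (D.cl W x y0 ∩ {y | D.le y x}) (D.ra W x y0) := by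
  have : D.md (D.cl W x y0 ∩ {y | D.le y x}) (D.tr (D.cl W x y0 ∩ {y | D.le y x}) (D.P x)) :=
    PD.md_tr fun w y hy hle => ⟨h.cl_dn h0 w y hle hy.1, D.le_trans hle hy.2⟩
  exact this

lemma PD.ra_hom_ne {y : D.S} (g : D.P y →ₗ[R] D.ra W x y0) (hg : g ≠ 0) : D.rai W x y0 ∘ₗ g ≠ 0 := fun h0 =>
  hg (LinearMap.ext fun v => PD.rai_inj ((LinearMap.congr_fun h0 v).trans (map_zero _).symm))

lemma PD.Ctx.ra_indec (h : D.Ctx W x) (K : Type) [Field K] [Algebra K R] [FiniteDimensional K R] [IsAlgClosed K] (hB : BD R) (hy : D.le y0 x) (hyx : y0 ≠ x) : Indec R (D.ra W x y0) := by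
  classical
  have h0 := h.lt y0 hy hyx
  have hne : ∀ y ∈ D.cl W x y0, D.le y x → ∃ g : D.P y →ₗ[R] D.ra W x y0, g ≠ 0 := by
    rintro y hy ⟨g, hg⟩
    obtain ⟨g', hg'⟩ := PD.ra_lift' hy g
    exact ⟨g', fun h => hg (LinearMap.ext fun m => by rw [← hg', h]; simp)⟩
  have hy0 : y0 ∈ D.cl W x y0 := Relation.ReflTransGen.refl
  refine ⟨?_, fun e he => ?_⟩
  · obtain ⟨g, hg⟩ := hne y0 hy0 hy
    by_contra hc
    rw [not_nontrivial_iff_subsingleton] at hc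
    exact hg (LinearMap.ext fun v => Subsingleton.elim _ _)
  have he' : ∀ m, e (e m) = e m := fun m => LinearMap.congr_fun he m
  let C : D.S → Prop := fun y => ∀ (g : D.P y →ₗ[R] D.ra W x y0) v, e (g v) = g v
  let Cz : D.S → Prop := fun y => ∀ (g : D.P y →ₗ[R] D.ra W x y0) v, e (g v) = 0
  have hor : ∀ y, C y ∨ Cz y := by
    intro y
    by_cases hg : ∃ g : D.P y →ₗ[R] D.ra W x y0, g ≠ 0
    · obtain ⟨g, hg⟩ := hg
      have hth : ∀ g' : D.P y →ₗ[R] D.ra W x y0, ∃ c : K, ∀ v, g' v = scal R _ K c (g v) := by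
        intro g'
        obtain ⟨c, hc⟩ := D.thin K hB (D.rai W x y0 ∘ₗ g) (D.rai W x y0 ∘ₗ g') (PD.ra_hom_ne g hg)
        refine ⟨c, fun v => PD.rai_inj ?_⟩
        rw [map_scal]; exact hc v
      obtain ⟨d, hd⟩ := hth (e ∘ₗ g)
      have hd' : ∀ v, e (g v) = scal R _ K d (g v) := hd
      by_cases hd0 : d = 0
      · right
        intro g' v
        obtain ⟨c, hc⟩ := hth g'
        rw [hc, map_scal, hd', hd0, scal_zero, map_zero]
      · left
        have h1 : ∀ v, e (g v) = g v := by
          intro v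
          have := he' (g v)
          rw [hd', map_scal] at this
          have h2 := (scal_bij (R := R) (M := D.ra W x y0) hd0).1 this
          exact h2
        intro g' v
        obtain ⟨c, hc⟩ := hth g'
        rw [hc, map_scal, h1]
    · push Not at hg
      left
      intro g v
      rw [hg g]; simp
  have hnot : ∀ y z, D.le y z → (∃ g : D.P z →ₗ[R] D.ra W x y0, g ≠ 0) → (C y ↔ C z) := by
    rintro y z ⟨k, hk⟩ ⟨g, hg⟩
    have h1 := D.comp_ne k _ hk (PD.ra_hom_ne g hg)
    have h2 : g ∘ₗ k ≠ 0 := fun h => h1 (LinearMap.ext fun v => by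
      have := LinearMap.congr_fun h v
      show D.rai W x y0 (g (k v)) = 0
      have h3 : g (k v) = 0 := this
      rw [h3, map_zero])
    constructor
    · intro hC
      rcases hor z with h3 | h3
      · exact h3
      · exact absurd (LinearMap.ext fun v => (hC (g ∘ₗ k) v).symm.trans (h3 g (k v))) h2
    · intro hC
      rcases hor y with h3 | h3
      · exact h3
      · exact absurd (LinearMap.ext fun v => (hC g (k v)).symm.trans (h3 (g ∘ₗ k) v)) h2
  have hCC : ∀ y z, D.le y x → D.le z x → y ≠ x → z ≠ x → D.le y z → (C y ↔ C z) := by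
    intro y z h1 h2 h3 h4 h5
    by_cases hz : ∃ g : D.P z →ₗ[R] D.ra W x y0, g ≠ 0
    · exact hnot y z h5 hz
    · have hzA : z ∉ D.cl W x y0 := fun h => hz (hne z h h2)
      have hyA : y ∉ D.cl W x y0 := fun h' => hzA (PD.cl_adj h0 h' (h.lt z h2 h4) (Or.inl h5))
      have hv : ∀ w, w ∉ D.cl W x y0 → C w := fun w hw g v => by
        rw [(h.ra_md h0).2 w (fun h => hw h.1) g]; simp
      exact ⟨fun _ => hv z hzA, fun _ => hv y hyA⟩
  have htop := PD.md_top (h.ra_md h0)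
  have hdone : ∀ f : D.ra W x y0 →ₗ[R] D.ra W x y0, (∀ y ∈ D.cl W x y0, D.le y x → ∀ (g : D.P y →ₗ[R] D.ra W x y0) v,
      e (g v) = f (g v)) → e = f := by
    intro f hf
    refine LinearMap.ext fun m => ?_
    have h1 : D.tr (D.cl W x y0 ∩ {y | D.le y x}) (D.ra W x y0) ≤ LinearMap.ker (e - f) :=
      PD.tr_le fun y hy g v => by
        rw [LinearMap.mem_ker, LinearMap.sub_apply, sub_eq_zero]
        exact hf y hy.1 hy.2 g v
    rw [htop] at h1
    have h2 : m ∈ LinearMap.ker (e - f) := h1 trivial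
    rwa [LinearMap.mem_ker, LinearMap.sub_apply, sub_eq_zero] at h2
  have hsep := fun (C' : D.S → Prop) hC' y' (h1 : y' ∈ D.cl W x y0) (h2 : D.le y' x) hC0 =>
    D.sep K hB W x h.mx C' hC' y0 y' hy h2 hyx (PD.cl_sub h0 h1).2 h1 hC0
  by_cases hC0 : C y0
  · right
    exact hdone _ fun y h1 h2 => hsep C hCC y h1 h2 hC0
  · left
    refine hdone _ fun y h1 h2 => ?_
    have := hsep (fun y => ¬ C y) (fun y z h1 h2 h3 h4 h5 => not_congr (hCC y z h1 h2 h3 h4 h5)) y h1 h2 hC0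
    rcases hor y with h3 | h3
    · exact absurd h3 this
    · exact h3

lemma PD.Ctx.ra_good (h : D.Ctx W x) (K : Type) [Field K] [Algebra K R] [FiniteDimensional K R] [IsAlgClosed K] (hB : BD R) (hy : D.le y0 x) (hyx : y0 ≠ x) {r : ModCat R → ℕ}
    (hr : D.DR (W \ {x}) r) : D.Good W x (D.ra W x y0) := by
  have h0 := h.lt y0 hy hyx
  have hi := h.ra_indec K hB hy hyx
  have hcl := PD.cl_sub (D := D) h0
  have hEA : D.md (D.cl W x y0) (D.ra W x y0) := PD.md_mono Set.inter_subset_left (h.ra_md h0)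
  have hEB := PD.md_mono hcl hEA
  have hBW : W \ {x} ⊆ W := Set.diff_subset
  refine ⟨hi, PD.md_mono hBW hEB, fun Z hZ => ?_⟩
  suffices hs : D.md (D.cl W x y0) Z ∧ Indec R Z ∧ r Z ≤ r (D.ra W x y0) from PD.md_mono hcl hs.1
  induction hZ using Relation.ReflTransGen.head_induction_on with
  | refl => exact ⟨hEA, hi, le_rfl⟩
  | @head Z Z1 hp _ ih =>
    obtain ⟨hZi, hZW, hZ1, _, g, hg⟩ := hp
    have hZ1B := PD.md_mono hcl ih.1
    have hZB : D.md (W \ {x}) Z := by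
      by_contra hc
      obtain ⟨X, hX, hXB, ⟨k, hk⟩, u, hu, hub⟩ := PD.lem1 K h.dn h.hx h.mx hZi hZW hc hZ1 hZ1B g hg
      have hXA := h.blk_hom h0 X Z1 hX hXB ih.1 u hu
      obtain ⟨y, t, ht⟩ := D.hom_ne k hk
      have hyA : y ∈ D.cl W x y0 := by
        by_contra hn
        exact ht (hXA.2 y hn _)
      have ht0 : t ≠ 0 := fun h => ht (by rw [h]; simp)
      obtain ⟨t', ht'⟩ := PD.ra_lift' (y0 := y0) hyA ((D.rad x).subtype ∘ₗ t)
      have hle : D.tr (D.cl W x y0 ∩ {y | D.le y x}) (D.P x) ≤ D.rad x :=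
        PD.tr_le fun z hz g v => PD.mem_rad D (hcl hz.1).2 g v
      have hk' : ∃ k' : D.ra W x y0 →ₗ[R] X, k' ≠ 0 := by
        refine ⟨k ∘ₗ Submodule.inclusion hle, fun h3 => ht (LinearMap.ext fun v => ?_)⟩
        have h4 := LinearMap.congr_fun h3 (t' v)
        have h5 : Submodule.inclusion hle (t' v) = t v := Subtype.ext (ht' v)
        have h6 : k (Submodule.inclusion hle (t' v)) = 0 := h4
        rw [h5] at h6
        exact h6
      obtain ⟨k', hk'⟩ := hk'
      have e1 := (hr _ _ hi hEB hX hXB k' hk').1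
      have e2 := hr _ _ hX hXB hZ1 hZ1B u hu
      have e3 : r X ≠ r Z1 := fun h => hub (e2.2 h)
      have := ih.2.2
      omega
    exact ⟨h.blk_hom h0 Z Z1 hZi hZB ih.1 g hg, hZi, (hr _ _ hZi hZB hZ1 hZ1B g hg).1.trans ih.2.2⟩

lemma PD.Ctx.good_aux (h : D.Ctx W x) (K : Type) [Field K] [Algebra K R] [FiniteDimensional K R] [IsAlgClosed K] (hB : BD R) {r : ModCat R → ℕ}
    (hr : D.DR (W \ {x}) r) (Y : ModCat R) (hY : Indec R Y) (hYB : D.md (W \ {x}) Y) (k : Y →ₗ[R] D.rad x) (hk : k ≠ 0) :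
    D.Good W x Y := by
  obtain ⟨w, t, ht⟩ := D.hom_ne k hk
  have hw : D.le w x ∧ w ≠ x := by
    by_contra hn
    exact ht ((PD.md_rad x).2 w hn _)
  have h0 := h.lt w hw.1 hw.2
  have hYA : D.md (D.cl W x w) Y := by
    rcases h.blk h0 Y hY hYB with h1 | h1
    · exact h1
    · exfalso
      have h2 := h1.2 w (fun hn => hn.2 Relation.ReflTransGen.refl) t
      exact ht (by rw [h2]; simp)
  obtain ⟨k', hk'⟩ := PD.ra_lift (y0 := w) (W := W) Y ((D.rad x).subtype ∘ₗ k) (fun m => by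
    have h1 : D.tr (D.cl W x w) Y ≤ (D.tr (D.cl W x w ∩ {y | D.le y x}) (D.P x)).comap ((D.rad x).subtype ∘ₗ k) :=
      PD.tr_le fun y hy g v => by
        obtain ⟨g', hg'⟩ := PD.ra_lift' hy ((D.rad x).subtype ∘ₗ k ∘ₗ g)
        have h3 : D.rai W x w (g' v) ∈ D.tr (D.cl W x w ∩ {y | D.le y x}) (D.P x) := Subtype.property _
        rw [hg'] at h3
        exact h3
    rw [PD.md_top hYA] at h1
    exact h1 trivial)
  have hG := h.ra_good K hB hw.1 hw.2 hr
  refine hG.pred ⟨hY, PD.md_mono Set.diff_subset hYB, hG.1, hG.2.1, k', fun h3 => hk (LinearMap.ext fun v => Subtype.ext ?_)⟩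
  have := hk' v
  rw [h3, LinearMap.zero_apply, map_zero] at this
  exact this.symm

lemma PD.Ctx.good (h : D.Ctx W x) (K : Type) [Field K] [Algebra K R] [FiniteDimensional K R] [IsAlgClosed K] (hB : BD R) {r : ModCat R → ℕ}
    (hr : D.DR (W \ {x}) r) (Y : ModCat R) (hY : Indec R Y) (hYW : D.md W Y) (k : Y →ₗ[R] D.rad x) (hk : k ≠ 0) :
    D.Good W x Y := by
  obtain ⟨s, hs⟩ := exists_indec_tgt k hk
  have hb : s.b ≠ 0 := fun h0 => by
    obtain ⟨v, hv⟩ := @exists_ne _ s.ind.1 (0 : s.W)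
    exact hv ((s.ab v).symm.trans (by rw [h0]; simp))
  have hm : D.md (W \ {x}) s.W := PD.md_quot s.a (fun y => ⟨s.b y, s.ab y⟩)
    (PD.md_mono (fun w hw => h.lt w hw.1 hw.2) (PD.md_rad x))
  have hG := h.good_aux K hB hr s.W s.ind hm s.b hb
  exact hG.pred ⟨hY, hYW, hG.1, hG.2.1, _, hs⟩

end
end Blk


section Chain
variable [IsArtinianRing R]

lemma MinIn.bij {T : MP R} {X Y : Type} [AddCommGroup X] [Module R X] [AddCommGroup Y] [Module R Y]
    (hX : MinIn T X) (hY : T Y) (hi : Indec R Y) (g : Y →ₗ[R] X) (hg : g ≠ 0) : Bijective g := by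
  obtain ⟨s, hs⟩ := hX.2.2 Y hY g hg
  have := hX.1
  exact (hi.bij_of_retract s g (LinearMap.ext hs)).2

lemma MinIn.indec {T : MP R} {X : Type} [AddCommGroup X] [Module R X] (hX : MinIn T X) : Indec R X := by
  refine ⟨hX.1, fun e he => ?_⟩
  by_cases h0 : e = 0
  · exact Or.inl h0
  · right
    obtain ⟨s, hs⟩ := hX.2.2 X hX.2.1 e h0
    refine LinearMap.ext fun v => ?_
    have := LinearMap.congr_fun he (s v)
    have h1 : e (e (s v)) = e (s v) := this
    rw [hs] at h1
    exact h1

lemma MinIn.tr {T : MP R} {X U : Type} [AddCommGroup X] [Module R X] [AddCommGroup U] [Module R U] (hT : Tors T)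
    (hX : MinIn T X) (hE : EP T U) (hXU : AddMem R X U) : TR R X := by
  have := hT.fin X hX.2.1
  refine TR.of_ep ((hE.add hXU).mono fun Y _ _ hY => ?_)
  obtain ⟨ι, _, t, ht⟩ := hY
  exact hT.quot t ht (hT.fun hX.2.1)

def PD.NN (D : PD R) (W : Set D.S) (T : MP R) (U : Type) [AddCommGroup U] [Module R U] : Prop :=
  ∀ T'' : MP R, (∀ (Y : Type) [AddCommGroup Y] [Module R Y], T'' Y → T Y) →
    (∀ (Y Z : Type) [AddCommGroup Y] [Module R Y] [AddCommGroup Z] [Module R Z]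
        (g : Y →ₗ[R] Z), Surjective g → T'' Y → T'' Z) →
    (∀ (Y : Type) [AddCommGroup Y] [Module R Y], T'' Y → ∀ y ∈ W, ∀ g : Y →ₗ[R] D.P y, g = 0) →
    ∀ (Y : Type) [AddCommGroup Y] [Module R Y], T'' Y → ∀ g : Y →ₗ[R] U, g ≠ 0 → ∃ X' : ModCat R, MinIn T'' X'

structure PD.Stg (D : PD R) (W : Set D.S) (T : MP R) (n : ℕ) (r : ModCat R → ℕ) : Prop where
  tors : Tors T
  sub : ∀ (Y : Type) [AddCommGroup Y] [Module R Y], T Y → D.md W Y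
  ex : ∃ U : ModCat R, T U ∧ Gen T U ∧ EP T U ∧ D.NN W T U
  lt : ∀ Y : ModCat R, Indec R Y → D.md W Y → ¬ T Y → r Y < n ∧ TR R Y
  hom0 : ∀ Y' : ModCat R, Indec R Y' → D.md W Y' → ¬ T Y' → ∀ (Y : Type) [AddCommGroup Y] [Module R Y], T Y →
    ∀ g : Y →ₗ[R] Y', g = 0
  mono : ∀ Y Y' : ModCat R, Indec R Y → D.md W Y → ¬ T Y → Indec R Y' → D.md W Y' → ¬ T Y' →
    ∀ g : Y →ₗ[R] Y', g ≠ 0 → r Y ≤ r Y' ∧ (r Y = r Y' → Bijective g)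
  iso : ∀ Y Y' : ModCat R, Indec R Y → D.md W Y → ¬ T Y → Indec R Y' → D.md W Y' → ¬ T Y' →
    r Y = r Y' → Nonempty (Y ≃ₗ[R] Y')
  att : ∀ i < n, ∃ Y : ModCat R, Indec R Y ∧ D.md W Y ∧ ¬ T Y ∧ r Y = i

variable {D : PD R} {W : Set D.S} {T : MP R} {n : ℕ} {r : ModCat R → ℕ}

lemma id_ne {M : Type} [AddCommGroup M] [Module R M] (h : Nontrivial M) : (LinearMap.id : M →ₗ[R] M) ≠ 0 := fun h0 => by
  obtain ⟨x, hx⟩ := exists_ne (0 : M)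
  exact hx (LinearMap.congr_fun h0 x)

lemma PD.Stg.step (h : D.Stg W T n r) (K : Type) [Field K] [Algebra K R] [FiniteDimensional K R]
    (X : ModCat R) (hX : MinIn T X) : ∃ r', D.Stg W (cut T X) (n + 1) r' := by
  classical
  obtain ⟨U, hU, hG, hE, hN⟩ := h.ex
  obtain ⟨hXU, U', hU', hG', hE', hN'⟩ := chain_step K h.tors hU hG hE hX
  have hXtr := hX.tr h.tors hE hXU
  have hXf := h.tors.fin X hX.2.1
  have key : ∀ Y : ModCat R, Indec R Y → ¬ cut T X Y → T Y → ∃ φ : Y →ₗ[R] X, Bijective φ := by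
    intro Y hY hc hTY
    have : ∃ g : Y →ₗ[R] X, g ≠ 0 := by
      by_contra hn
      push Not at hn
      exact hc ⟨hTY, hn⟩
    obtain ⟨g, hg⟩ := this
    exact ⟨g, hX.bij hTY hY g hg⟩
  refine ⟨fun Y => if T Y then n else r Y, ⟨h.tors.cut, fun Y _ _ hY => h.sub Y hY.1, ⟨U', hU', hG', hE', ?_⟩,
    fun Y hY hm hc => ?_, fun Y' hY' hm hc Y _ _ hY g => ?_, fun Y Y' h1 h2 h3 h4 h5 h6 g hg => ?_,
    fun Y Y' h1 h2 h3 h4 h5 h6 he => ?_, fun i hi => ?_⟩⟩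
  · intro T'' hle hq hP Y _ _ hY g hg
    rcases hN' T'' hle hq Y hY g hg with h1 | ⟨Y, hY, g, hg⟩
    · exact h1
    · exact hN T'' (fun Y _ _ hY => (hle Y hY).1) hq hP Y hY g hg
  · by_cases hTY : T Y
    · rw [if_pos hTY]
      obtain ⟨φ, hφ⟩ := key Y hY hc hTY
      exact ⟨Nat.lt_succ_self n, hXtr.add (AddMem.congr (LinearEquiv.ofBijective φ hφ))⟩
    · rw [if_neg hTY]
      have := h.lt Y hY hm hTY
      exact ⟨this.1.trans (Nat.lt_succ_self n), this.2⟩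
  · by_cases hTY : T Y'
    · obtain ⟨φ, hφ⟩ := key Y' hY' hc hTY
      refine LinearMap.ext fun v => hφ.1 ?_
      rw [LinearMap.zero_apply, map_zero]
      exact LinearMap.congr_fun (hY.2 (φ ∘ₗ g)) v
    · exact h.hom0 Y' hY' hm hTY Y hY.1 g
  · show (if T Y then n else r Y) ≤ (if T Y' then n else r Y') ∧ ((if T Y then n else r Y) = (if T Y' then n else r Y') → _)
    by_cases a1 : T Y <;> by_cases a2 : T Y'
    · refine ⟨by rw [if_pos a1, if_pos a2], fun _ => ?_⟩
      obtain ⟨φ, hφ⟩ := key Y' h4 h6 a2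
      have h7 := hX.bij a1 h1 (φ ∘ₗ g) (fun h0 => hg (LinearMap.ext fun v => hφ.1 (by
        rw [LinearMap.zero_apply, map_zero]
        exact LinearMap.congr_fun h0 v)))
      have h8 : Bijective (φ ∘ g) := h7
      exact (Function.Bijective.of_comp_iff' hφ g).1 h8
    · exact absurd (h.hom0 Y' h4 h5 a2 Y a1 g) hg
    · rw [if_neg a1, if_pos a2]
      have := (h.lt Y h1 h2 a1).1
      exact ⟨this.le, fun h0 => by omega⟩
    · rw [if_neg a1, if_neg a2]
      exact h.mono Y Y' h1 h2 a1 h4 h5 a2 g hg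
  · have he' : (if T Y then n else r Y) = (if T Y' then n else r Y') := he
    by_cases a1 : T Y <;> by_cases a2 : T Y'
    · obtain ⟨φ, hφ⟩ := key Y h1 h3 a1
      obtain ⟨φ', hφ'⟩ := key Y' h4 h6 a2
      exact ⟨(LinearEquiv.ofBijective φ hφ).trans (LinearEquiv.ofBijective φ' hφ').symm⟩
    · rw [if_pos a1, if_neg a2] at he'
      have := (h.lt Y' h4 h5 a2).1
      omega
    · rw [if_neg a1, if_pos a2] at he'
      have := (h.lt Y h1 h2 a1).1
      omega
    · rw [if_neg a1, if_neg a2] at he'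
      exact h.iso Y Y' h1 h2 a1 h4 h5 a2 he'
  · by_cases hin : i = n
    · exact ⟨X, hX.indec, h.sub X hX.2.1, fun hc => id_ne hX.1 (hc.2 LinearMap.id), by rw [if_pos hX.2.1, hin]⟩
    · obtain ⟨Y, h1, h2, h3, h4⟩ := h.att i (by omega)
      exact ⟨Y, h1, h2, fun hc => h3 hc.1, by rw [if_neg h3, h4]⟩

lemma PD.Stg.init (hW : ∀ y z, D.le y z → z ∈ W → y ∈ W) (K : Type) [Field K] [Algebra K R] [FiniteDimensional K R] :
    D.Stg W (D.md W) 0 (fun _ => 0) := by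
  classical
  have hP : ∀ y ∈ W, D.md W (D.P y) := fun y hy => ⟨inferInstance, fun z hz g => by
    by_contra hg
    exact hz (hW z y ⟨g, hg⟩ hy)⟩
  letI : Fintype {y // y ∈ W} := Fintype.ofFinite _
  have hU : D.md W (∀ y : {y // y ∈ W}, D.P y.1) := ⟨inferInstance, fun z hz g => by
    refine LinearMap.ext fun v => funext fun y => ?_
    exact LinearMap.congr_fun ((hP y.1 y.2).2 z hz (LinearMap.proj y ∘ₗ g)) v⟩
  have hpj : Module.Projective R (∀ y : {y // y ∈ W}, D.P y.1) := proj_pi fun y => D.proj y.1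
  refine ⟨PD.md_tors, fun Y _ _ h => h, ⟨ModuleCat.of R (∀ y : {y // y ∈ W}, D.P y.1), hU, ?_, ?_, ?_⟩,
    fun Y _ h h' => absurd h h', fun Y _ h h' => absurd h h', fun Y _ _ h h' => absurd h h',
    fun Y _ _ h h' => absurd h h', fun i hi => absurd hi (Nat.not_lt_zero i)⟩
  · intro Y _ _ hY
    have hYf := hY.1
    obtain ⟨k, h, hb, _⟩ := hom_basis (R := R) (∀ y : {y // y ∈ W}, D.P y.1) Y K
    let c : (Fin k → ∀ y : {y // y ∈ W}, D.P y.1) →ₗ[R] Y := ∑ j, h j ∘ₗ LinearMap.proj j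
    have hc : ∀ v, c v = ∑ j, h j (v j) := fun v => by simp [c, LinearMap.sum_apply]
    refine ⟨ModuleCat.of R (Fin k → ∀ y : {y // y ∈ W}, D.P y.1), AddMem.pi fun _ => AddMem.refl R _, c, fun m => ?_, ?_⟩
    · have h1 : D.tr W Y ≤ LinearMap.range c := PD.tr_le fun y hy g u => by
        obtain ⟨d, hd⟩ := hb (g ∘ₗ LinearMap.proj (⟨y, hy⟩ : {y // y ∈ W}))
        let w : ∀ y : {y // y ∈ W}, D.P y.1 := Pi.single (M := fun y : {y // y ∈ W} => D.P y.1) ⟨y, hy⟩ u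
        have hw : w ⟨y, hy⟩ = u := Pi.single_eq_same (M := fun y : {y // y ∈ W} => D.P y.1) _ _
        refine ⟨fun j => scal R _ K (d j) w, ?_⟩
        have h3 : g (w ⟨y, hy⟩) = _ := hd w
        rw [hc, ← hw, h3]
        exact Finset.sum_congr rfl fun j _ => map_scal _ _ _
      rw [PD.md_top hY] at h1
      exact h1 trivial
    · have h2 : D.md W (Fin k → ∀ y : {y // y ∈ W}, D.P y.1) := PD.md_tors.fun hU
      exact PD.md_sub (LinearMap.ker c).subtype (Submodule.subtype_injective _) h2
  · intro E B _ _ _ _ p hp _ g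
    exact proj_lift p hp g
  · intro T'' _ _ h0 Y _ _ hY g hg
    exfalso
    apply hg
    refine LinearMap.ext fun v => funext fun y => ?_
    exact LinearMap.congr_fun (h0 Y hY y.1 y.2 ((LinearMap.proj y : (∀ y : {y // y ∈ W}, D.P y.1) →ₗ[R] D.P y.1) ∘ₗ g)) v

lemma PD.exists_max {y : D.S} (hy : y ∈ W) : ∃ x ∈ W, D.le y x ∧ ∀ z ∈ W, D.le x z → z = x := by
  letI : PartialOrder D.S :=
    { le := D.le, le_refl := D.le_refl, le_trans := fun _ _ _ => D.le_trans, le_antisymm := fun _ _ => D.le_antisymm }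
  obtain ⟨x, hyx, hx⟩ := (Set.toFinite W).exists_le_maximal hy
  exact ⟨x, hx.prop, hyx, fun z hz hxz => D.le_antisymm (hx.2 hz hxz) hxz⟩

lemma PD.Stg.exists_min (h : D.Stg W T n r) (hW : ∀ y z, D.le y z → z ∈ W → y ∈ W)
    (K : Type) [Field K] [Algebra K R] [FiniteDimensional K R] [IsAlgClosed K] (hB : BD R)
    (hIH : ∀ x, D.Ctx W x → ∃ r, D.DR (W \ {x}) r) (Y0 : ModCat R) (hY0 : T Y0) (hn : Nontrivial Y0) :
    ∃ X : ModCat R, MinIn T X := by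
  by_cases hP : ∃ (Y : ModCat R), T Y ∧ ∃ y ∈ W, ∃ g : Y →ₗ[R] D.P y, g ≠ 0
  · by_cases hgood : ∃ x, D.Ctx W x ∧ ∃ Y : ModCat R, T Y ∧ D.Good W x Y
    · obtain ⟨x, hx, hY⟩ := hgood
      obtain ⟨q, hq⟩ := hIH x hx
      obtain ⟨⟨Y, hTY, hGY⟩, hmin⟩ : ∃ Y : {Y : ModCat R // T Y ∧ D.Good W x Y},
          ∀ Z : {Y : ModCat R // T Y ∧ D.Good W x Y}, q Y.1 ≤ q Z.1 := by
        have hne : Nonempty {Y : ModCat R // T Y ∧ D.Good W x Y} := ⟨⟨hY.choose, hY.choose_spec⟩⟩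
        obtain ⟨Y, hY⟩ := WellFounded.has_min (measure (fun Y : {Y : ModCat R // T Y ∧ D.Good W x Y} => q Y.1)).wf
          Set.univ ⟨hne.some, trivial⟩
        exact ⟨Y, fun Z => not_lt.1 (hY.2 Z trivial)⟩
      refine ⟨Y, hGY.1.1, hTY, fun Z _ _ hZ g hg => ?_⟩
      have hZf := h.tors.fin Z hZ
      obtain ⟨s, hs⟩ := exists_indec_src g hg
      have hTs : T s.W := h.tors.quot s.a (fun y => ⟨s.b y, s.ab y⟩) hZ
      have hGs : D.Good W x s.W := hGY.pred ⟨s.ind, h.sub _ hTs, hGY.1, hGY.2.1, _, hs⟩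
      have h1 := hq s.W Y s.ind (hGs.2.2 _ .refl) hGY.1 (hGY.2.2 _ .refl) _ hs
      have h2 := h1.2 (_root_.le_antisymm h1.1 (hmin ⟨s.W, hTs, hGs⟩))
      let E := LinearEquiv.ofBijective (g ∘ₗ s.b) h2
      exact ⟨s.b ∘ₗ E.symm.toLinearMap, fun v => E.apply_symm_apply v⟩
    · push Not at hgood
      obtain ⟨Y, hY, y, hy, g, hg⟩ := hP
      obtain ⟨x, hx, ⟨k, hk⟩, hmx⟩ := PD.exists_max hy
      have hC : D.Ctx W x := ⟨hW, hx, hmx⟩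
      obtain ⟨q, hq⟩ := hIH x hC
      have hsurj : ∀ (Z : Type) [AddCommGroup Z] [Module R Z], T Z → ∀ f : Z →ₗ[R] D.P x, f ≠ 0 → Surjective f := by
        intro Z _ _ hZ f hf
        rcases D.rad_max x (LinearMap.range f) with h1 | h1
        · exact LinearMap.range_eq_top.1 h1
        · exfalso
          have hZf := h.tors.fin Z hZ
          obtain ⟨s, hs⟩ := exists_indec_src f hf
          have hTs : T s.W := h.tors.quot s.a (fun y => ⟨s.b y, s.ab y⟩) hZ
          refine hgood x hC s.W hTs (hC.good K hB hq s.W s.ind (h.sub _ hTs)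
            ((f ∘ₗ s.b).codRestrict (D.rad x) fun v => h1 ⟨s.b v, rfl⟩) fun h0 => hs (LinearMap.ext fun v => ?_))
          exact congrArg Subtype.val (LinearMap.congr_fun h0 v)
      have hTP : T (D.P x) := h.tors.quot (k ∘ₗ g) (hsurj Y hY _ fun h0 => hg (LinearMap.ext fun v => D.inj _ _ k hk (by
        rw [LinearMap.zero_apply, map_zero]
        exact LinearMap.congr_fun h0 v))) hY
      refine ⟨D.P x, inferInstance, hTP, fun Z _ _ hZ f hf => ?_⟩
      obtain ⟨s, hs⟩ := proj_lift f (hsurj Z hZ f hf) LinearMap.id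
      exact ⟨s, hs⟩
  · obtain ⟨U, hU, hG, hE, hN⟩ := h.ex
    refine hN T (fun _ _ _ h => h) (fun Y Z _ _ _ _ g hg hY => h.tors.quot g hg hY) (fun Y _ _ hY y hy g => ?_) U hU
      LinearMap.id fun h0 => ?_
    · by_contra hg
      exact hP ⟨ModuleCat.of R Y, hY, y, hy, g, hg⟩
    · obtain ⟨U₀, hA, q, hq, _⟩ := hG Y0 hY0
      have h1 := hA.hom_zero (fun g : U →ₗ[R] Y0 => LinearMap.ext fun v => by
        have : v = 0 := LinearMap.congr_fun h0 v
        rw [this, map_zero, map_zero]) q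
      obtain ⟨v, hv⟩ := exists_ne (0 : Y0)
      obtain ⟨u, hu⟩ := hq v
      exact hv (by rw [← hu, h1]; rfl)

lemma PD.Stg.bound (h : D.Stg W T n r) {ι : Type} [Fintype ι] (F : ι → ModCat R)
    (hF : ∀ (M : Type) [AddCommGroup M] [Module R M], Module.Finite R M → Indec R M → TR R M →
      ∃ i, Nonempty (M ≃ₗ[R] F i)) : n ≤ Fintype.card ι := by
  choose Y h1 h2 h3 h4 using fun i : Fin n => h.att i i.2
  choose φ hφ using fun i => hF (Y i) (h2 i).1 (h1 i) (h.lt _ (h1 i) (h2 i) (h3 i)).2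
  have hne : ∀ i j, φ i = φ j → (i : ℕ) ≤ j := by
    intro i j hij
    obtain ⟨e⟩ := hφ i
    obtain ⟨e'⟩ := hφ j
    rw [← hij] at e'
    have := (h.mono _ _ (h1 i) (h2 i) (h3 i) (h1 j) (h2 j) (h3 j) (e.trans e'.symm).toLinearMap (fun h0 => by
      obtain ⟨v, hv⟩ := @exists_ne _ (h1 i).1 (0 : Y i)
      exact hv ((e.trans e'.symm).injective ((LinearMap.congr_fun h0 v).trans (map_zero _).symm)))).1
    rwa [h4, h4] at this
  have hinj : Injective φ := fun i j hij => Fin.ext (_root_.le_antisymm (hne i j hij) (hne j i hij.symm))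
  simpa using Fintype.card_le_of_injective φ hinj

def PD.DW (D : PD R) (W : Set D.S) : Prop := ∃ (r : ModCat R → ℕ) (N : ℕ), D.DR W r ∧
  ∀ Y : ModCat R, Indec R Y → D.md W Y → r Y < N ∧ ∀ Y' : ModCat R, Indec R Y' → D.md W Y' → r Y = r Y' →
    Nonempty (Y ≃ₗ[R] Y')

lemma PD.dw (D : PD R) (K : Type) [Field K] [Algebra K R] [FiniteDimensional K R] [IsAlgClosed K]
    (hft : IsTauTiltingFiniteRing R) (m : ℕ) : ∀ (W : Set D.S), (∀ y z, D.le y z → z ∈ W → y ∈ W) → W.ncard = m → D.DW W := by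
  have hB := bd_of_ft K hft
  obtain ⟨ι, _, F, hF⟩ := ft K hft
  induction m using Nat.strong_induction_on with
  | _ m ih =>
  intro W hW hm
  have hIH : ∀ x, D.Ctx W x → ∃ r, D.DR (W \ {x}) r := by
    intro x hx
    obtain ⟨r, N, h, _⟩ := ih _ (by rw [← hm]; exact Set.ncard_diff_singleton_lt_of_mem hx.hx (Set.toFinite W)) (W \ {x})
      (fun y z h1 h2 => hx.dn' y z h1 h2) rfl
    exact ⟨r, h⟩
  have hex : ∃ (T : MP R) (n : ℕ) (r : ModCat R → ℕ), D.Stg W T n r ∧ ∀ Y : ModCat R, T Y → ¬ Nontrivial Y := by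
    by_contra hc
    push Not at hc
    have : ∀ n, ∃ (T : MP R) (r : ModCat R → ℕ), D.Stg W T n r := by
      intro n
      induction n with
      | zero => exact ⟨_, _, PD.Stg.init hW K⟩
      | succ n ihn =>
        obtain ⟨T, r, h⟩ := ihn
        obtain ⟨Y, hY, hYn⟩ := hc T n r h
        obtain ⟨X, hX⟩ := h.exists_min hW K hB hIH Y hY hYn
        obtain ⟨r', h'⟩ := h.step K X hX
        exact ⟨_, r', h'⟩
    obtain ⟨T, r, h⟩ := this (Fintype.card ι + 1)
    have := h.bound F hF
    omega
  obtain ⟨T, n, r, h, hT⟩ := hex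
  have hnT : ∀ Y : ModCat R, Indec R Y → ¬ T Y := fun Y hY hTY => hT Y hTY hY.1
  exact ⟨r, n, fun Y Y' h1 h2 h3 h4 g hg => h.mono Y Y' h1 h2 (hnT Y h1) h3 h4 (hnT Y' h3) g hg,
    fun Y hY hm => ⟨(h.lt Y hY hm (hnT Y hY)).1, fun Y' hY' hm' he => h.iso Y Y' hY hm (hnT Y hY) hY' hm' (hnT Y' hY') he⟩⟩

end Chain

lemma repfin (K : Type) [Field K] [IsAlgClosed K] [Algebra K R] [FiniteDimensional K R]
    (hlh : IsLocallyHereditaryRing R) (hft : IsTauTiltingFiniteRing R) : IsRepFiniteRing R := by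
  classical
  haveI : IsArtinianRing R := IsArtinianRing.of_finite K R
  obtain ⟨D⟩ := exists_PD hlh
  obtain ⟨r, N, _, h⟩ := D.dw K hft _ Set.univ (fun _ _ _ _ => trivial) rfl
  refine ⟨N, fun i => if hi : ∃ Y : ModCat R, Indec R Y ∧ Module.Finite R Y ∧ r Y = i then hi.choose else ModuleCat.of R R,
    fun M hM hMi => ?_⟩
  have hMi' := (indec_iff M).1 hMi
  have hM' := (isFG_iff M).1 hM
  have hmd : ∀ Y : ModCat R, Module.Finite R Y → D.md Set.univ Y := fun Y hY => ⟨hY, fun z hz => absurd trivial hz⟩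
  obtain ⟨hlt, hiso⟩ := h M hMi' (hmd M hM')
  refine ⟨⟨r M, hlt⟩, ?_⟩
  have hi : ∃ Y : ModCat R, Indec R Y ∧ Module.Finite R Y ∧ r Y = ((⟨r M, hlt⟩ : Fin N) : ℕ) := ⟨M, hMi', hM', rfl⟩
  show Nonempty (M ≅ if hi : ∃ Y : ModCat R, Indec R Y ∧ Module.Finite R Y ∧ r Y = ((⟨r M, hlt⟩ : Fin N) : ℕ) then hi.choose else ModuleCat.of R R)
  rw [dif_pos hi, iso_iff]
  obtain ⟨h1, h2, h3⟩ := hi.choose_spec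
  exact hiso _ h1 (hmd _ h2) h3.symm


/-- Theorem 4.11 of the paper.  Every τ-tilting-finite
locally hereditary finite-dimensional algebra over an algebraically closed
field is representation-finite. -/
theorem tau_tilting_finite_locally_hereditary_is_rep_finite
    (K Λ : Type) [Field K] [IsAlgClosed K] [Ring Λ] [Algebra K Λ] [FiniteDimensional K Λ]
    (hlh : IsLocallyHereditaryRing Λᵐᵒᵖ)
    (ht : IsTauTiltingFinite Λ) :
    IsRepFinite Λ := by
  exact repfin K hlh ht

end PaperSilting
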